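/- arXiv:2009.06300 — 2 statements merged into one kernel-verified Lean document; each statement's English description precedes it below -/
import Mathlib

section
/- Let I be an inner function on the unit ball B_n (n ≥ 2), b : B_n → D a non-constant holomorphic function, α unimodular, σ = σ_α[I] and μ = σ_α[b] the Clark measures on the sphere S_n, and K(z,w) = (1 − I(z)conj(I(w)))·(1 − ⟨z,w⟩)^{-n} the reproducing kernel of H(I). If σ ≪ μ and dσ/dμ ∈ L²(μ), then for every w ∈ B_n the function z ↦ ((α − b(z))/(α − I(z))) K(z,w) belongs to the de Branges–Rovnyak space H(b). -/
/-!
Put `C z ζ = (1 - ⟨z, ζ⟩)⁻ⁿ`. The defining property of the Clark measure `μ = σ_α[b]` is the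
diagonal case `w = z` of

  `(α - b z) * conj (α - b w) * ∫ C z ζ * conj (C w ζ) ∂μ(ζ) = (1 - b z * conj (b w)) * C z w`.

Both sides are holomorphic in `z` and antiholomorphic in `w`, so the identity holds for all `z`
and `w`. It exhibits the kernel of `H(b)` as the Gram kernel of the functions
`(α - b z) * C z ·` in `L²(μ)`, so that `z ↦ (α - b z) * ∫ C z ζ * g ζ ∂μ(ζ)` lies in `H(b)` for
every `g ∈ L²(μ)`. The same identity for `σ = σ_α[I]` shows that the function in question arises
in this way from `g = conj (α - I w) * conj (C w ·) * dσ/dμ`, which is in `L²(μ)` because `C w ·` is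
bounded on the sphere.
-/

open Complex Metric MeasureTheory Set Filter

/-- Membership of a function `F` in the reproducing kernel Hilbert space on the unit ball of
`ℂⁿ` with kernel `kb`: there is `c ≥ 0` such that the kernel
`c·kb(z,w) − F z · conj (F w)` is positive semidefinite on the ball. -/
def MemRKHSBall (n : ℕ) (kb : EuclideanSpace ℂ (Fin n) → EuclideanSpace ℂ (Fin n) → ℂ)
    (F : EuclideanSpace ℂ (Fin n) → ℂ) : Prop :=
  ∃ c : ℝ, 0 ≤ c ∧ ∀ (m : ℕ) (w : Fin m → EuclideanSpace ℂ (Fin n)) (a : Fin m → ℂ),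
    (∀ i, w i ∈ ball (0 : EuclideanSpace ℂ (Fin n)) 1) →
    0 ≤ (∑ i, ∑ j, (starRingEnd ℂ) (a i) * a j *
      ((c : ℂ) * kb (w i) (w j) - F (w i) * (starRingEnd ℂ) (F (w j)))).re

open scoped ComplexConjugate Topology

section ReproducingKernel

variable {X : Type*}

/-- Membership of `F` in the reproducing kernel Hilbert space of functions on `s` with kernel `K`,
encoded by positive semidefiniteness of `c K(z, w) - F(z) conj (F(w))` on `s` for some `c ≥ 0`. It
extends `MemRKHSBall` to subsets of arbitrary types. -/
def MemRKHSOn (s : Set X) (K : X → X → ℂ) (F : X → ℂ) : Prop :=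
  ∃ c : ℝ, 0 ≤ c ∧ ∀ (m : ℕ) (w : Fin m → X) (a : Fin m → ℂ), (∀ i, w i ∈ s) →
    0 ≤ (∑ i, ∑ j, conj (a i) * a j * ((c : ℂ) * K (w i) (w j) - F (w i) * conj (F (w j)))).re

variable {s : Set X} {K : X → X → ℂ} {F G : X → ℂ}

theorem MemRKHSOn.congr (hF : MemRKHSOn s K F) (hFG : EqOn F G s) : MemRKHSOn s K G := by
  obtain ⟨c, hc, hpos⟩ := hF
  refine ⟨c, hc, fun m w a hw => ?_⟩
  simpa only [fun i => hFG (hw i)] using hpos m w a hw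

theorem memRKHSOn_of_inner {H : Type*} [SeminormedAddCommGroup H] [InnerProductSpace ℂ H]
    (k : s → H) (v : H) (hK : ∀ z w : s, K z w = inner ℂ (k z) (k w))
    (hF : ∀ z : s, F z = inner ℂ (k z) v) : MemRKHSOn s K F := by
  refine ⟨‖v‖ ^ 2, by positivity, fun m w a hw => ?_⟩
  set u : H := ∑ i, a i • k ⟨w i, hw i⟩ with hu
  have gram : ∑ i, ∑ j, conj (a i) * a j * K (w i) (w j) = ((‖u‖ ^ 2 : ℝ) : ℂ) := by
    have norm_sq : ((‖u‖ ^ 2 : ℝ) : ℂ) = inner ℂ u u := by simp [inner_self_eq_norm_sq_to_K]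
    rw [norm_sq, hu, sum_inner]
    simp only [inner_sum, inner_smul_left, inner_smul_right, hK ⟨_, hw _⟩ ⟨_, hw _⟩,
      mul_assoc, mul_left_comm (conj (a _))]
  have rank_one : ∑ i, ∑ j, conj (a i) * a j * (F (w i) * conj (F (w j))) =
      ((‖inner ℂ u v‖ ^ 2 : ℝ) : ℂ) := by
    have norm_sq : ((‖inner ℂ u v‖ ^ 2 : ℝ) : ℂ) = inner ℂ u v * conj (inner ℂ u v) := by
      rw [Complex.mul_conj', Complex.ofReal_pow]
    have inner_eq : inner ℂ u v = ∑ i, conj (a i) * F (w i) := by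
      simp only [hu, sum_inner, inner_smul_left, hF ⟨_, hw _⟩]
    rw [norm_sq, inner_eq, map_sum, Finset.sum_mul_sum]
    simp only [map_mul, Complex.conj_conj, mul_mul_mul_comm]
  have expand : ∑ i, ∑ j, conj (a i) * a j *
      (((‖v‖ ^ 2 : ℝ) : ℂ) * K (w i) (w j) - F (w i) * conj (F (w j))) =
      ((‖v‖ ^ 2 * ‖u‖ ^ 2 - ‖inner ℂ u v‖ ^ 2 : ℝ) : ℂ) := by
    rw [Complex.ofReal_sub, Complex.ofReal_mul, ← gram, ← rank_one]
    simp only [Finset.mul_sum, ← Finset.sum_sub_distrib]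
    exact Finset.sum_congr rfl fun i _ => Finset.sum_congr rfl fun j _ => by ring
  rw [expand, Complex.ofReal_re, sub_nonneg, ← mul_pow, mul_comm]
  gcongr
  exact norm_inner_le_norm u v

end ReproducingKernel

section L2

variable {Ω : Type*} [MeasurableSpace Ω] {μ : Measure Ω}

theorem inner_toLp_toLp {f g : Ω → ℂ} (hf : MemLp f 2 μ) (hg : MemLp g 2 μ) :
    inner ℂ (hf.toLp f) (hg.toLp g) = ∫ x, g x * conj (f x) ∂μ := by
  rw [L2.inner_def]
  refine integral_congr_ae ?_
  filter_upwards [hf.coeFn_toLp, hg.coeFn_toLp] with x hfx hgx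
  rw [hfx, hgx, RCLike.inner_apply]

theorem memRKHSOn_of_integral {X : Type*} {s : Set X} {K : X → X → ℂ} {F : X → ℂ}
    {k : X → Ω → ℂ} {g : Ω → ℂ} (hk : ∀ z ∈ s, MemLp (k z) 2 μ) (hg : MemLp g 2 μ)
    (hK : ∀ z ∈ s, ∀ w ∈ s, K z w = ∫ x, k z x * conj (k w x) ∂μ)
    (hF : ∀ z ∈ s, F z = ∫ x, k z x * g x ∂μ) : MemRKHSOn s K F := by
  have hk' (z : s) : MemLp (fun x => conj (k z x)) 2 μ := (hk z z.2).star
  refine memRKHSOn_of_inner (fun z => (hk' z).toLp _) (hg.toLp g) (fun z w => ?_) fun z => ?_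
  · simp only [hK z z.2 w w.2, inner_toLp_toLp, Complex.conj_conj, mul_comm]
  · simp only [hF z z.2, inner_toLp_toLp, Complex.conj_conj, mul_comm]

theorem memLp_two_toReal {f : Ω → ENNReal} (hf : AEMeasurable f μ)
    (hf2 : ∫⁻ x, f x ^ 2 ∂μ < ⊤) : MemLp (fun x => (f x).toReal) 2 μ := by
  rw [memLp_two_iff_integrable_sq hf.ennreal_toReal.aestronglyMeasurable]
  simpa only [ENNReal.toReal_pow] using
    integrable_toReal_of_lintegral_ne_top (hf.pow_const 2) hf2.ne

end L2

section HolomorphicParameter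

variable {Ω G : Type*} [MeasurableSpace Ω] {μ : Measure Ω} [NormedAddCommGroup G]

theorem aestronglyMeasurable_deriv_param {𝕜 : Type*} [NontriviallyNormedField 𝕜]
    [NormedSpace 𝕜 G] {f : 𝕜 → Ω → G} {t₀ : 𝕜} (hmeas : ∀ t, AEStronglyMeasurable (f t) μ)
    (hdiff : ∀ᵐ x ∂μ, DifferentiableAt 𝕜 (fun t => f t x) t₀) :
    AEStronglyMeasurable (fun x => deriv (fun t => f t x) t₀) μ := by
  refine aestronglyMeasurable_of_tendsto_ae (𝓝[≠] t₀)
    (f := fun t x => slope (fun t => f t x) t₀ t)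
    (fun t => ((hmeas t).sub (hmeas t₀)).const_smul (t - t₀)⁻¹) ?_
  filter_upwards [hdiff] with x hx
  exact hasDerivAt_iff_tendsto_slope.mp hx.hasDerivAt

variable [NormedSpace ℂ G]

theorem differentiableAt_integral_of_dominated {f : ℂ → Ω → G} {bound : Ω → ℝ} {t₀ : ℂ}
    {s : Set ℂ} (hs : s ∈ 𝓝 t₀) (hmeas : ∀ t, AEStronglyMeasurable (f t) μ)
    (hdiff : ∀ᵐ x ∂μ, DifferentiableOn ℂ (fun t => f t x) s)
    (hbound : ∀ᵐ x ∂μ, ∀ t ∈ s, ‖f t x‖ ≤ bound x) (hint : Integrable bound μ) :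
    DifferentiableAt ℂ (fun t => ∫ x, f t x ∂μ) t₀ := by
  obtain ⟨r, hr, hrs⟩ := Metric.nhds_basis_closedBall.mem_iff.mp hs
  have closedBall_subset {t : ℂ} (ht : t ∈ ball t₀ (r / 2)) : closedBall t (r / 2) ⊆ s :=
    (closedBall_subset_closedBall' (by linarith [mem_ball.mp ht])).trans hrs
  have mem_nhds {t : ℂ} (ht : t ∈ ball t₀ (r / 2)) : s ∈ 𝓝 t :=
    mem_of_superset (closedBall_mem_nhds t (half_pos hr)) (closedBall_subset ht)
  have f_integrable : Integrable (f t₀) μ :=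
    hint.mono' (hmeas t₀) (hbound.mono fun x hx => hx t₀ (mem_of_mem_nhds hs))
  have deriv_measurable : AEStronglyMeasurable (fun x => deriv (fun t => f t x) t₀) μ :=
    aestronglyMeasurable_deriv_param hmeas (hdiff.mono fun x hx => hx.differentiableAt hs)
  have deriv_le : ∀ᵐ x ∂μ, ∀ t ∈ ball t₀ (r / 2),
      ‖deriv (fun t => f t x) t‖ ≤ bound x / (r / 2) := by
    filter_upwards [hdiff, hbound] with x hdx hbx t ht
    exact norm_deriv_le_of_forall_mem_sphere_norm_le (half_pos hr)
      (hdx.mono (closure_ball_subset_closedBall.trans (closedBall_subset ht))).diffContOnCl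
      fun y hy => hbx y (closedBall_subset ht (sphere_subset_closedBall hy))
  have hasDerivAt_f : ∀ᵐ x ∂μ, ∀ t ∈ ball t₀ (r / 2),
      HasDerivAt (fun t => f t x) (deriv (fun t => f t x) t) t :=
    hdiff.mono fun x hx t ht => (hx.differentiableAt (mem_nhds ht)).hasDerivAt
  exact (hasDerivAt_integral_of_dominated_loc_of_deriv_le (ball_mem_nhds t₀ (half_pos hr))
    (Eventually.of_forall hmeas) f_integrable deriv_measurable deriv_le
    (hint.div_const (r / 2)) hasDerivAt_f).2.differentiableAt

end HolomorphicParameter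

section Sesquiholomorphic

theorem eqOn_of_differentiableOn_of_eq_ofReal {G : Type*} [NormedAddCommGroup G]
    [NormedSpace ℂ G] [CompleteSpace G] {f g : ℂ → G} {D : Set ℂ}
    (hf : DifferentiableOn ℂ f D) (hg : DifferentiableOn ℂ g D) (hD : IsOpen D)
    (hconn : IsPreconnected D) {x : ℝ} (hx : (x : ℂ) ∈ D)
    (heq : ∀ y : ℝ, (y : ℂ) ∈ D → f y = g y) : EqOn f g D := by
  have ofReal_tendsto : Tendsto ((↑) : ℝ → ℂ) (𝓝[≠] x) (𝓝[≠] x) :=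
    Complex.continuous_ofReal.continuousWithinAt.tendsto_nhdsWithin fun _ =>
      Complex.ofReal_injective.ne
  refine (hf.analyticOnNhd hD).eqOn_of_preconnected_of_frequently_eq (hg.analyticOnNhd hD) hconn
    hx (ofReal_tendsto.frequently (Eventually.frequently ?_))
  filter_upwards [ofReal_tendsto.eventually (nhdsWithin_le_nhds (hD.mem_nhds hx))] with y hy
    using heq y hy

variable {E : Type*} [NormedAddCommGroup E] [NormedSpace ℂ E]

/-- `F z w` is holomorphic in `z ∈ s` and antiholomorphic in `w ∈ s`. As a complex normed space need
not carry a conjugation, this is tested on pairs of complex lines of which the second is traversed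
with the conjugate parameter. -/
def SesquiholomorphicOn (F : E → E → ℂ) (s : Set E) : Prop :=
  ∀ (p u q v : E) (t : ℂ), p + t • u ∈ s → q + conj t • v ∈ s →
    DifferentiableAt ℂ (fun t : ℂ => F (p + t • u) (q + conj t • v)) t

namespace SesquiholomorphicOn

variable {F G : E → E → ℂ} {s : Set E}

theorem const_sub (c : ℂ) (hF : SesquiholomorphicOn F s) :
    SesquiholomorphicOn (fun z w => c - F z w) s :=
  fun p u q v t hz hw => (hF p u q v t hz hw).const_sub c

theorem mul (hF : SesquiholomorphicOn F s) (hG : SesquiholomorphicOn G s) :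
    SesquiholomorphicOn (fun z w => F z w * G z w) s :=
  fun p u q v t hz hw => (hF p u q v t hz hw).mul (hG p u q v t hz hw)

theorem inv (hF : SesquiholomorphicOn F s) (hF0 : ∀ z ∈ s, ∀ w ∈ s, F z w ≠ 0) :
    SesquiholomorphicOn (fun z w => (F z w)⁻¹) s :=
  fun p u q v t hz hw => (hF p u q v t hz hw).inv (hF0 _ hz _ hw)

theorem pow (hF : SesquiholomorphicOn F s) (n : ℕ) :
    SesquiholomorphicOn (fun z w => F z w ^ n) s :=
  fun p u q v t hz hw => (hF p u q v t hz hw).pow n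

theorem eq_of_eq_diag (hF : SesquiholomorphicOn F s) (hG : SesquiholomorphicOn G s)
    (hs : IsOpen s) (hconv : Convex ℝ s) (hdiag : ∀ z ∈ s, F z z = G z z) {z w : E}
    (hz : z ∈ s) (hw : w ∈ s) : F z w = G z w := by
  -- `(p + t u, p + t̄ u)` is a diagonal pair for real `t` and equals `(z, w)` for `t = i`.
  set p : E := (2⁻¹ : ℂ) • (z + w) with hp
  set u : E := (-(Complex.I / 2)) • (z - w) with hu
  set D : Set ℂ := {t | p + t • u ∈ s ∧ p + conj t • u ∈ s} with hD
  have D_open : IsOpen D :=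
    (hs.preimage (by fun_prop : Continuous fun t : ℂ => p + t • u)).inter
      (hs.preimage (by fun_prop : Continuous fun t : ℂ => p + conj t • u))
  have D_convex : Convex ℝ D := by
    have line_convex : Convex ℝ {t : ℂ | p + t • u ∈ s} :=
      (hconv.translate_preimage_right p).linear_preimage
        ((LinearMap.toSpanSingleton ℂ E u).restrictScalars ℝ)
    exact line_convex.inter (line_convex.linear_preimage Complex.conjAe.toLinearMap)
  have zero_mem : ((0 : ℝ) : ℂ) ∈ D := by
    have p_mem : p ∈ s := by
      have := hconv hz hw (a := 2⁻¹) (b := 2⁻¹) (by norm_num) (by norm_num) (by norm_num)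
      rw [hp]
      convert this using 1
      module
    simpa [hD] using p_mem
  have at_I : p + Complex.I • u = z := by
    rw [hp, hu, smul_smul, show Complex.I * -(Complex.I / 2) = 2⁻¹ by
      linear_combination (-1 / 2) * Complex.I_mul_I]
    module
  have at_neg_I : p + conj Complex.I • u = w := by
    rw [hp, hu, smul_smul, Complex.conj_I, show -Complex.I * -(Complex.I / 2) = -2⁻¹ by
      linear_combination (1 / 2) * Complex.I_mul_I]
    module
  have differentiable {H : E → E → ℂ} (hH : SesquiholomorphicOn H s) :
      DifferentiableOn ℂ (fun t : ℂ => H (p + t • u) (p + conj t • u)) D :=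
    fun t ht => (hH p u p u t ht.1 ht.2).differentiableWithinAt
  have eq_at_real (x : ℝ) (hx : (x : ℂ) ∈ D) :
      F (p + (x : ℂ) • u) (p + conj (x : ℂ) • u) = G (p + (x : ℂ) • u) (p + conj (x : ℂ) • u) := by
    rw [Complex.conj_ofReal, hdiag _ hx.1]
  have I_mem : Complex.I ∈ D := ⟨at_I ▸ hz, at_neg_I ▸ hw⟩
  simpa only [at_I, at_neg_I] using
    eqOn_of_differentiableOn_of_eq_ofReal (differentiable hF) (differentiable hG) D_open
      D_convex.isPreconnected (x := 0) zero_mem eq_at_real I_mem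

end SesquiholomorphicOn

theorem sesquiholomorphicOn_mul_conj {f g : E → ℂ} {s : Set E} (hs : IsOpen s)
    (hf : DifferentiableOn ℂ f s) (hg : DifferentiableOn ℂ g s) :
    SesquiholomorphicOn (fun z w => f z * conj (g w)) s := by
  intro p u q v t hz hw
  have hft : DifferentiableAt ℂ (fun t : ℂ => f (p + t • u)) t :=
    (hf.differentiableAt (hs.mem_nhds hz)).comp t (f := fun t : ℂ => p + t • u) (by fun_prop)
  have hgt : DifferentiableAt ℂ (fun t : ℂ => g (q + t • v)) (conj t) :=
    (hg.differentiableAt (hs.mem_nhds hw)).comp (conj t) (f := fun t : ℂ => q + t • v)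
      (by fun_prop)
  exact hft.mul (differentiableAt_conj_conj_iff.mpr hgt)

theorem sesquiholomorphicOn_integral {Ω : Type*} [MeasurableSpace Ω] {μ : Measure Ω}
    {F : E → E → Ω → ℂ} {s : Set E} (hs : IsOpen s)
    (hmeas : ∀ z w, AEStronglyMeasurable (F z w) μ)
    (hF : ∀ᵐ x ∂μ, SesquiholomorphicOn (fun z w => F z w x) s)
    (hbound : ∀ z ∈ s, ∀ w ∈ s, ∃ U ∈ 𝓝 (z, w), ∃ bound : Ω → ℝ, Integrable bound μ ∧
      ∀ᵐ x ∂μ, ∀ y ∈ U, ‖F y.1 y.2 x‖ ≤ bound x) :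
    SesquiholomorphicOn (fun z w => ∫ x, F z w x ∂μ) s := by
  intro p u q v t hz hw
  obtain ⟨U, hU, bound, hint, hbound⟩ := hbound _ hz _ hw
  have lines_continuous : Continuous fun t : ℂ => (p + t • u, q + conj t • v) := by fun_prop
  have nhds_t : (fun t : ℂ => (p + t • u, q + conj t • v)) ⁻¹' (U ∩ s ×ˢ s) ∈ 𝓝 t :=
    lines_continuous.continuousAt.preimage_mem_nhds
      (inter_mem hU ((hs.prod hs).mem_nhds ⟨hz, hw⟩))
  refine differentiableAt_integral_of_dominated nhds_t (fun t => hmeas _ _) ?_ ?_ hint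
  · filter_upwards [hF] with x hx t ht
    exact (hx p u q v t ht.2.1 ht.2.2).differentiableWithinAt
  · filter_upwards [hbound] with x hx t ht using hx _ ht.1

end Sesquiholomorphic

section CauchyKernel

variable {E : Type*} [NormedAddCommGroup E] [InnerProductSpace ℂ E]

theorem sesquiholomorphicOn_inner (s : Set E) :
    SesquiholomorphicOn (fun z w => inner ℂ w z) s := by
  intro p u q v t _ _
  simp only [inner_add_left, inner_add_right, inner_smul_left, inner_smul_right, Complex.conj_conj]
  fun_prop

/-- The Cauchy kernel `C(z, ζ) = (1 - ⟨z, ζ⟩)⁻ⁿ`. Mathlib's inner product is conjugate-linear in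
the first variable, so `⟨z, ζ⟩` is `inner ℂ ζ z`; the exponent need not be the dimension. -/
noncomputable def cauchyKernel (n : ℕ) (z ζ : E) : ℂ :=
  ((1 - inner ℂ ζ z)⁻¹) ^ n

variable {n : ℕ} {z w ζ : E}

theorem one_sub_norm_le_norm_one_sub_inner (hζ : ‖ζ‖ ≤ 1) : 1 - ‖z‖ ≤ ‖1 - inner ℂ ζ z‖ := by
  have inner_le : ‖inner ℂ ζ z‖ ≤ ‖z‖ :=
    (norm_inner_le_norm ζ z).trans (mul_le_of_le_one_left (norm_nonneg z) hζ)
  calc 1 - ‖z‖ ≤ ‖(1 : ℂ)‖ - ‖inner ℂ ζ z‖ := by rw [norm_one]; gcongr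
    _ ≤ ‖1 - inner ℂ ζ z‖ := norm_sub_norm_le 1 _

theorem one_sub_inner_ne_zero (hz : ‖z‖ < 1) (hζ : ‖ζ‖ ≤ 1) : 1 - inner ℂ ζ z ≠ 0 :=
  norm_pos_iff.mp ((sub_pos.mpr hz).trans_le (one_sub_norm_le_norm_one_sub_inner hζ))

theorem norm_cauchyKernel_le {r : ℝ} (hr : r < 1) (hz : ‖z‖ ≤ r) (hζ : ‖ζ‖ ≤ 1) :
    ‖cauchyKernel n z ζ‖ ≤ ((1 - r)⁻¹) ^ n := by
  have norm_ge : 1 - r ≤ ‖1 - inner ℂ ζ z‖ := by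
    linarith [one_sub_norm_le_norm_one_sub_inner (z := z) hζ]
  have : 0 < 1 - r := sub_pos.mpr hr
  rw [cauchyKernel, norm_pow, norm_inv]
  gcongr

theorem cauchyKernel_self (n : ℕ) (z : E) :
    cauchyKernel n z z = ((((1 - ‖z‖ ^ 2) ^ n)⁻¹ : ℝ) : ℂ) := by
  rw [cauchyKernel, inner_self_eq_norm_sq_to_K, inv_pow]
  push_cast
  rfl

theorem norm_cauchyKernel_sq (n : ℕ) (z ζ : E) :
    ‖cauchyKernel n z ζ‖ ^ 2 = (‖1 - inner ℂ ζ z‖ ^ (2 * n))⁻¹ := by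
  rw [cauchyKernel, norm_pow, norm_inv, ← pow_mul, mul_comm, inv_pow]

theorem differentiableOn_cauchyKernel (n : ℕ) (hζ : ‖ζ‖ ≤ 1) :
    DifferentiableOn ℂ (fun z => cauchyKernel n z ζ) (ball 0 1) := by
  intro z hz
  have inner_differentiable : DifferentiableAt ℂ (fun z => 1 - inner ℂ ζ z) z :=
    ((innerSL ℂ ζ).differentiableAt).const_sub 1
  exact ((inner_differentiable.inv
    (one_sub_inner_ne_zero (mem_ball_zero_iff.mp hz) hζ)).pow n).differentiableWithinAt

theorem sesquiholomorphicOn_cauchyKernel (n : ℕ) :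
    SesquiholomorphicOn (cauchyKernel n) (ball (0 : E) 1) :=
  (((sesquiholomorphicOn_inner _).const_sub 1).inv fun _ hz _ hw =>
    one_sub_inner_ne_zero (mem_ball_zero_iff.mp hz) (mem_ball_zero_iff.mp hw).le).pow n

variable [MeasurableSpace E] [OpensMeasurableSpace E] {μ : Measure E}

theorem measurable_cauchyKernel (n : ℕ) (z : E) : Measurable (cauchyKernel n z) := by
  have : Measurable fun ζ : E => inner ℂ ζ z := Continuous.measurable (by fun_prop)
  unfold cauchyKernel
  fun_prop

variable [IsFiniteMeasure μ]

theorem memLp_cauchyKernel (hμ : ∀ᵐ ζ ∂μ, ‖ζ‖ ≤ 1) (n : ℕ) (p : ENNReal) (hz : z ∈ ball 0 1) :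
    MemLp (cauchyKernel n z) p μ :=
  MemLp.of_bound (measurable_cauchyKernel n z).aestronglyMeasurable (((1 - ‖z‖)⁻¹) ^ n)
    (hμ.mono fun _ hζ => norm_cauchyKernel_le (mem_ball_zero_iff.mp hz) le_rfl hζ)

theorem sesquiholomorphicOn_integral_cauchyKernel (hμ : ∀ᵐ ζ ∂μ, ‖ζ‖ ≤ 1) (n : ℕ) :
    SesquiholomorphicOn (fun z w => ∫ ζ, cauchyKernel n z ζ * conj (cauchyKernel n w ζ) ∂μ)
      (ball (0 : E) 1) := by
  refine sesquiholomorphicOn_integral isOpen_ball (fun z w => ?_) ?_ fun z hz w hw => ?_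
  · exact ((measurable_cauchyKernel n z).mul
      (Complex.continuous_conj.measurable.comp (measurable_cauchyKernel n w))).aestronglyMeasurable
  · filter_upwards [hμ] with ζ hζ
    exact sesquiholomorphicOn_mul_conj isOpen_ball (differentiableOn_cauchyKernel n hζ)
      (differentiableOn_cauchyKernel n hζ)
  · obtain ⟨r, hr, hr1⟩ :=
      exists_between (max_lt (mem_ball_zero_iff.mp hz) (mem_ball_zero_iff.mp hw))
    obtain ⟨hzr, hwr⟩ := max_lt_iff.mp hr
    have nhds_zw : ball (0 : E) r ×ˢ ball (0 : E) r ∈ 𝓝 (z, w) :=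
      (isOpen_ball.prod isOpen_ball).mem_nhds
        ⟨mem_ball_zero_iff.mpr hzr, mem_ball_zero_iff.mpr hwr⟩
    refine ⟨_, nhds_zw, fun _ => ((1 - r)⁻¹) ^ n * ((1 - r)⁻¹) ^ n, integrable_const _, ?_⟩
    filter_upwards [hμ] with ζ hζ y hy
    have norm_fst_le := norm_cauchyKernel_le (n := n) hr1 (mem_ball_zero_iff.mp hy.1).le hζ
    have norm_snd_le := norm_cauchyKernel_le (n := n) hr1 (mem_ball_zero_iff.mp hy.2).le hζ
    rw [norm_mul, Complex.norm_conj]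
    exact mul_le_mul norm_fst_le norm_snd_le (norm_nonneg _) ((norm_nonneg _).trans norm_fst_le)

end CauchyKernel

section ClarkMeasure

variable {E : Type*} [NormedAddCommGroup E] [InnerProductSpace ℂ E]

/-- The kernel `(1 - b(z) conj (b(w))) C(z, w)` of the de Branges–Rovnyak space `H(b)`. -/
noncomputable def deBrangesRovnyakKernel (n : ℕ) (b : E → ℂ) (z w : E) : ℂ :=
  (1 - b z * conj (b w)) * cauchyKernel n z w

variable [MeasurableSpace E]

/-- `μ` is the Clark measure `σ_α[b]`: it is carried by the unit sphere and has Poisson integral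
`Re ((α + b) / (α - b))`, written as `(1 - |b|²) / |α - b|²`, to which it is equal when
`|α| = 1`. -/
structure IsClarkMeasure (n : ℕ) (b : E → ℂ) (α : ℂ) (μ : Measure E) : Prop where
  ae_norm_eq_one : ∀ᵐ ζ ∂μ, ‖ζ‖ = 1
  integral_poisson : ∀ z ∈ ball (0 : E) 1,
    ∫ ζ, (1 - ‖z‖ ^ 2) ^ n / ‖1 - inner ℂ ζ z‖ ^ (2 * n) ∂μ = (1 - ‖b z‖ ^ 2) / ‖α - b z‖ ^ 2

namespace IsClarkMeasure

variable {n : ℕ} {b : E → ℂ} {α : ℂ} {μ : Measure E} {z w : E}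

theorem ae_norm_le_one (hμ : IsClarkMeasure n b α μ) : ∀ᵐ ζ ∂μ, ‖ζ‖ ≤ 1 :=
  hμ.ae_norm_eq_one.mono fun _ => le_of_eq

theorem integral_norm_cauchyKernel_sq (hμ : IsClarkMeasure n b α μ) (hz : z ∈ ball 0 1) :
    ∫ ζ, ‖cauchyKernel n z ζ‖ ^ 2 ∂μ =
      (1 - ‖b z‖ ^ 2) / ‖α - b z‖ ^ 2 * ((1 - ‖z‖ ^ 2) ^ n)⁻¹ := by
  have one_sub_pos : 0 < 1 - ‖z‖ ^ 2 :=
    sub_pos.mpr (pow_lt_one₀ (norm_nonneg z) (mem_ball_zero_iff.mp hz) two_ne_zero)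
  rw [← hμ.integral_poisson z hz, ← integral_mul_const]
  refine integral_congr_ae (Eventually.of_forall fun ζ => ?_)
  simp only [norm_cauchyKernel_sq]
  field_simp

theorem mul_integral_cauchyKernel_self (hμ : IsClarkMeasure n b α μ) (hz : z ∈ ball 0 1)
    (hbz : b z ≠ α) :
    (α - b z) * conj (α - b z) * ∫ ζ, cauchyKernel n z ζ * conj (cauchyKernel n z ζ) ∂μ =
      deBrangesRovnyakKernel n b z z := by
  have norm_ne_zero : ‖α - b z‖ ≠ 0 := norm_ne_zero_iff.mpr (sub_ne_zero.mpr hbz.symm)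
  simp only [deBrangesRovnyakKernel, Complex.mul_conj', cauchyKernel_self]
  norm_cast
  rw [hμ.integral_norm_cauchyKernel_sq hz]
  field_simp

variable [OpensMeasurableSpace E] [IsFiniteMeasure μ]

theorem mul_integral_cauchyKernel_mul_conj (hμ : IsClarkMeasure n b α μ)
    (hb : DifferentiableOn ℂ b (ball 0 1)) (hbα : ∀ z ∈ ball 0 1, b z ≠ α)
    (hz : z ∈ ball 0 1) (hw : w ∈ ball 0 1) :
    (α - b z) * conj (α - b w) * ∫ ζ, cauchyKernel n z ζ * conj (cauchyKernel n w ζ) ∂μ =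
      deBrangesRovnyakKernel n b z w :=
  SesquiholomorphicOn.eq_of_eq_diag
    ((sesquiholomorphicOn_mul_conj isOpen_ball (hb.const_sub α) (hb.const_sub α)).mul
      (sesquiholomorphicOn_integral_cauchyKernel hμ.ae_norm_le_one n))
    (((sesquiholomorphicOn_mul_conj isOpen_ball hb hb).const_sub 1).mul
      (sesquiholomorphicOn_cauchyKernel n))
    isOpen_ball (convex_ball 0 1)
    (fun _ hx => hμ.mul_integral_cauchyKernel_self hx (hbα _ hx)) hz hw

theorem memRKHSOn_mul_integral_cauchyKernel (hμ : IsClarkMeasure n b α μ)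
    (hb : DifferentiableOn ℂ b (ball 0 1)) (hbα : ∀ z ∈ ball 0 1, b z ≠ α) {g : E → ℂ}
    (hg : MemLp g 2 μ) :
    MemRKHSOn (ball 0 1) (deBrangesRovnyakKernel n b)
      (fun z => (α - b z) * ∫ ζ, cauchyKernel n z ζ * g ζ ∂μ) := by
  refine memRKHSOn_of_integral (k := fun z ζ => (α - b z) * cauchyKernel n z ζ)
    (fun z hz => (memLp_cauchyKernel hμ.ae_norm_le_one n 2 hz).const_mul _) hg
    (fun z hz w hw => ?_) fun z _ => ?_
  · rw [← hμ.mul_integral_cauchyKernel_mul_conj hb hbα hz hw, ← integral_const_mul]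
    congr with ζ
    simp only [map_mul]
    ring
  · simp only [mul_assoc, integral_const_mul]

end IsClarkMeasure

theorem memLp_rnDeriv_mul_conj_cauchyKernel [OpensMeasurableSpace E] {σ μ : Measure E}
    [IsFiniteMeasure μ] (hμ : ∀ᵐ ζ ∂μ, ‖ζ‖ ≤ 1)
    (hL2 : MemLp (fun ζ => (σ.rnDeriv μ ζ).toReal) 2 μ) (n : ℕ) {w : E} (hw : w ∈ ball 0 1) :
    MemLp (fun ζ => ((σ.rnDeriv μ ζ).toReal : ℂ) * conj (cauchyKernel n w ζ)) 2 μ :=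
  (memLp_cauchyKernel hμ n ⊤ hw).star.mul' hL2.ofReal

theorem stmt9_general [OpensMeasurableSpace E] {n : ℕ} {I b : E → ℂ} {α : ℂ} {σ μ : Measure E}
    [IsFiniteMeasure σ] [IsFiniteMeasure μ] (hI : DifferentiableOn ℂ I (ball 0 1))
    (hIα : ∀ z ∈ ball 0 1, I z ≠ α) (hb : DifferentiableOn ℂ b (ball 0 1))
    (hbα : ∀ z ∈ ball 0 1, b z ≠ α) (hσ : IsClarkMeasure n I α σ) (hμ : IsClarkMeasure n b α μ)
    (hac : σ ≪ μ) (hL2 : MemLp (fun ζ => (σ.rnDeriv μ ζ).toReal) 2 μ) {w : E}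
    (hw : w ∈ ball 0 1) :
    MemRKHSOn (ball 0 1) (deBrangesRovnyakKernel n b)
      (fun z => (α - b z) / (α - I z) * deBrangesRovnyakKernel n I z w) := by
  have hg := (memLp_rnDeriv_mul_conj_cauchyKernel hμ.ae_norm_le_one hL2 n hw).const_mul
    (conj (α - I w))
  refine (hμ.memRKHSOn_mul_integral_cauchyKernel hb hbα hg).congr fun z hz => ?_
  have denom_ne_zero : α - I z ≠ 0 := sub_ne_zero.mpr (hIα z hz).symm
  have change_measure : ∫ ζ, cauchyKernel n z ζ *
      (conj (α - I w) * ((σ.rnDeriv μ ζ).toReal * conj (cauchyKernel n w ζ))) ∂μ =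
      conj (α - I w) * ∫ ζ, cauchyKernel n z ζ * conj (cauchyKernel n w ζ) ∂σ := by
    rw [← integral_rnDeriv_smul hac, ← integral_const_mul]
    congr with ζ
    rw [Complex.real_smul]
    ring
  simp only [change_measure, ← hσ.mul_integral_cauchyKernel_mul_conj hI hIα hz hw]
  field_simp

end ClarkMeasure

theorem ne_of_mem_ball_of_norm_eq {E : Type*} [SeminormedAddCommGroup E] {r : ℝ} {x y : E}
    (hx : x ∈ ball 0 r) (hy : ‖y‖ = r) : x ≠ y := by
  rintro rfl
  exact (mem_ball_zero_iff.mp hx).ne hy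

theorem sum_mul_conj_eq_inner {ι : Type*} [Fintype ι] (z ζ : EuclideanSpace ℂ ι) :
    ∑ i, z i * conj (ζ i) = inner ℂ ζ z :=
  rfl

theorem isClarkMeasure_of_sphere {n : ℕ} {ι : Type*} [Fintype ι]
    [MeasurableSpace (EuclideanSpace ℂ ι)] {b : EuclideanSpace ℂ ι → ℂ} {α : ℂ}
    {μ : Measure (EuclideanSpace ℂ ι)} (hsupp : μ (sphere 0 1)ᶜ = 0)
    (hμ : ∀ z ∈ ball (0 : EuclideanSpace ℂ ι) 1,
      ∫ ζ, (1 - ‖z‖ ^ 2) ^ n / ‖1 - ∑ i, z i * conj (ζ i)‖ ^ (2 * n) ∂μ =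
        (1 - ‖b z‖ ^ 2) / ‖α - b z‖ ^ 2) :
    IsClarkMeasure n b α μ where
  ae_norm_eq_one := by
    filter_upwards [mem_ae_iff.mpr hsupp] with ζ hζ using mem_sphere_zero_iff_norm.mp hζ
  integral_poisson := by simpa only [sum_mul_conj_eq_inner] using hμ

/-- (i) ⇒ (ii) of the main theorem: let `I` be inner on the ball `B_n` (`n ≥ 2`), `b` a
non-constant holomorphic self-map of the disc defined on `B_n`, `α` unimodular, and let
`σ = σ_α[I]`, `μ = σ_α[b]` be the Clark measures. If `σ ≪ μ` with `dσ/dμ ∈ L²(μ)`, then for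
every `w ∈ B_n` the function `z ↦ ((α - b z)/(α - I z))·K(z,w)` lies in the
de Branges–Rovnyak space `H(b)`, where `K(z,w) = (1 - I z conj (I w))(1 - ⟨z,w⟩)^{-n}`. -/
theorem stmt9 (n : ℕ) (hn : 2 ≤ n)
    [MeasurableSpace (EuclideanSpace ℂ (Fin n))]
    [BorelSpace (EuclideanSpace ℂ (Fin n))]
    (Λ : Measure (EuclideanSpace ℂ (Fin n))) (hΛprob : IsProbabilityMeasure Λ)
    (hΛsupp : Λ (sphere (0 : EuclideanSpace ℂ (Fin n)) 1)ᶜ = 0)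
    (hΛinv : ∀ U : EuclideanSpace ℂ (Fin n) ≃ₗᵢ[ℂ] EuclideanSpace ℂ (Fin n),
      Measure.map (⇑U) Λ = Λ)
    (I : EuclideanSpace ℂ (Fin n) → ℂ)
    (hI : DifferentiableOn ℂ I (ball (0 : EuclideanSpace ℂ (Fin n)) 1))
    (hImap : ∀ z ∈ ball (0 : EuclideanSpace ℂ (Fin n)) 1, I z ∈ ball (0 : ℂ) 1)
    (Ib : EuclideanSpace ℂ (Fin n) → ℂ)
    (hIinner : ∀ᵐ ζ ∂Λ,
      Tendsto (fun r : ℝ => I (r • ζ)) (nhdsWithin 1 (Iio 1)) (nhds (Ib ζ)) ∧ ‖Ib ζ‖ = 1)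
    (b : EuclideanSpace ℂ (Fin n) → ℂ)
    (hb : DifferentiableOn ℂ b (ball (0 : EuclideanSpace ℂ (Fin n)) 1))
    (hbmap : ∀ z ∈ ball (0 : EuclideanSpace ℂ (Fin n)) 1, b z ∈ ball (0 : ℂ) 1)
    (hbnc : ∃ z₁ ∈ ball (0 : EuclideanSpace ℂ (Fin n)) 1,
      ∃ z₂ ∈ ball (0 : EuclideanSpace ℂ (Fin n)) 1, b z₁ ≠ b z₂)
    (α : ℂ) (hα : ‖α‖ = 1)
    (σ μ : Measure (EuclideanSpace ℂ (Fin n)))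
    (hσfin : IsFiniteMeasure σ) (hμfin : IsFiniteMeasure μ)
    (hσsupp : σ (sphere (0 : EuclideanSpace ℂ (Fin n)) 1)ᶜ = 0)
    (hμsupp : μ (sphere (0 : EuclideanSpace ℂ (Fin n)) 1)ᶜ = 0)
    (hσ : ∀ z ∈ ball (0 : EuclideanSpace ℂ (Fin n)) 1,
      ∫ ζ, (1 - ‖z‖ ^ 2) ^ n /
          ‖1 - ∑ i, z i * (starRingEnd ℂ) (ζ i)‖ ^ (2 * n) ∂σ =
        (1 - ‖I z‖ ^ 2) / ‖α - I z‖ ^ 2)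
    (hμ : ∀ z ∈ ball (0 : EuclideanSpace ℂ (Fin n)) 1,
      ∫ ζ, (1 - ‖z‖ ^ 2) ^ n /
          ‖1 - ∑ i, z i * (starRingEnd ℂ) (ζ i)‖ ^ (2 * n) ∂μ =
        (1 - ‖b z‖ ^ 2) / ‖α - b z‖ ^ 2)
    (hac : σ ≪ μ)
    (hL2 : ∫⁻ ζ, (σ.rnDeriv μ ζ) ^ 2 ∂μ < ⊤) :
    ∀ w ∈ ball (0 : EuclideanSpace ℂ (Fin n)) 1,
      MemRKHSBall n
        (fun z w' => (1 - b z * (starRingEnd ℂ) (b w')) *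
          ((1 - ∑ i, z i * (starRingEnd ℂ) (w' i))⁻¹) ^ n)
        (fun z => (α - b z) / (α - I z) *
          ((1 - I z * (starRingEnd ℂ) (I w)) *
            ((1 - ∑ i, z i * (starRingEnd ℂ) (w i))⁻¹) ^ n)) := by
  intro w hw
  exact stmt9_general hI (fun z hz => ne_of_mem_ball_of_norm_eq (hImap z hz) hα) hb
    (fun z hz => ne_of_mem_ball_of_norm_eq (hbmap z hz) hα)
    (isClarkMeasure_of_sphere hσsupp hσ) (isClarkMeasure_of_sphere hμsupp hμ) hac
    (memLp_two_toReal (σ.measurable_rnDeriv μ).aemeasurable hL2) hw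
end

section
/- Let I be an inner function on the unit ball B_n (n ≥ 2), b : B_n → D non-constant holomorphic, α unimodular, σ = σ_α[I], μ = σ_α[b], and K(z,w) = (1 − I(z)conj(I(w)))(1 − ⟨z,w⟩)^{-n}. If for some w ∈ B_n the function z ↦ ((α − b(z))/(α − I(z))) K(z,w) belongs to H(b), then σ ≪ μ and the Radon–Nikodym derivative dσ/dμ belongs to L²(μ). -/
open Complex Metric MeasureTheory Set Filter

/-!
Polarizing the identity that defines `μ = σ_α[b]` gives
`(α - b z) conj (α - b w) ∫ C(z, ·) conj C(w, ·) dμ = (1 - b z conj (b w)) C(z, w)`,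
and likewise for `σ` and `I`. Membership in `H(b)` therefore says that
`|∫ q C(w, ·) dσ|² ≤ M ∫ |q|² dμ` for every `q` in the ball algebra.

Since `I` is inner, suitable dilates `I(s_m ·)` with `s_m → 1` give functions
`f_m = (conj α I(s_m ·)) ^ m` in the ball algebra that are bounded by one, tend to zero in the open
ball and tend to one `σ`-almost everywhere. They take over the role of the Cole–Range theorem and of
the total singularity of `σ`.

The ball algebra is tight: if `p_j` is a bounded sequence of polynomials tending to zero in the open
ball, then so is, up to an error tending to zero at every point of the sphere, the sequence
`conj ζ_i p_j`, because the mean along the radius of the tangential part of the derivative of `p_j`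
stays bounded, its integrand being `O((1 - t) ^ (-1/2))`. Applying the estimate to approximants of
`φ f_m`, with `φ` a polynomial in `ζ` and `conj ζ`, extends it to all such `φ`, hence to all
continuous functions. The invertible factor `C(w, ·)` can then be absorbed, and
`|∫ φ dσ|² ≤ C ∫ |φ|² dμ` for continuous `φ` yields both conclusions.
-/

namespace Clark

open scoped Topology ENNReal NNReal BoundedContinuousFunction ComplexConjugate

section L2Domination

variable {X : Type*} [MeasurableSpace X] {σ μ : Measure X}

theorem enorm_integral_le_eLpNorm_two_mul {f : X → ℝ} (hf : AEStronglyMeasurable f σ) :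
    ‖∫ x, f x ∂σ‖ₑ ≤ eLpNorm f 2 σ * σ univ ^ (1 / 2 : ℝ) :=
  calc ‖∫ x, f x ∂σ‖ₑ ≤ ∫⁻ x, ‖f x‖ₑ ∂σ := enorm_integral_le_lintegral_enorm _
    _ = eLpNorm f 1 σ := eLpNorm_one_eq_lintegral_enorm.symm
    _ ≤ eLpNorm f 2 σ * σ univ ^ (1 / 2 : ℝ) := by
      convert eLpNorm_le_eLpNorm_mul_rpow_measure_univ one_le_two hf using 3
      norm_num

theorem enorm_integral_le_sqrt_mul_eLpNorm_two {C : ℝ≥0} {f : X → ℝ} (hf : MemLp f 2 μ)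
    (h : (∫ x, f x ∂σ) ^ 2 ≤ C * ∫ x, f x ^ 2 ∂μ) :
    ‖∫ x, f x ∂σ‖ₑ ≤ NNReal.sqrt C * eLpNorm f 2 μ := by
  have hnorm : eLpNorm f 2 μ = ENNReal.ofReal √(∫ x, f x ^ 2 ∂μ) := by
    simp [hf.eLpNorm_eq_integral_rpow_norm two_ne_zero ENNReal.ofNat_ne_top, Real.sqrt_eq_rpow]
  rw [hnorm, ← ENNReal.ofReal_coe_nnreal, ← ENNReal.ofReal_mul (NNReal.coe_nonneg _),
    Real.coe_sqrt, ← Real.sqrt_mul C.coe_nonneg, ← ofReal_norm]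
  exact ENNReal.ofReal_le_ofReal (Real.abs_le_sqrt h)

variable [IsFiniteMeasure σ]

theorem enorm_integral_le_of_forall_boundedContinuous [TopologicalSpace X] [NormalSpace X]
    [BorelSpace X] [(σ + μ).WeaklyRegular] {C : ℝ≥0}
    (h : ∀ g : X →ᵇ ℝ, ‖∫ x, g x ∂σ‖ₑ ≤ C * eLpNorm g 2 μ)
    {f : X → ℝ} (hf : MemLp f 2 (σ + μ)) :
    ‖∫ x, f x ∂σ‖ₑ ≤ C * eLpNorm f 2 μ := by
  refine ENNReal.le_of_forall_pos_le_add fun ε hε _ ↦ ?_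
  set D : ℝ≥0∞ := σ univ ^ (1 / 2 : ℝ) + C with hD
  have hD_top : D ≠ ∞ := by finiteness
  have hδ : (ε / (D + 1) : ℝ≥0∞) ≠ 0 := by simp [hε.ne', hD_top]
  obtain ⟨g, hgδ, hg⟩ := hf.exists_boundedContinuous_eLpNorm_sub_le (by simp) hδ
  set δ : ℝ≥0∞ := ε / (D + 1)
  set r : X → ℝ := f - ⇑g with hr_def
  have hr : MemLp r 2 (σ + μ) := hf.sub hg
  have hσ : σ ≤ σ + μ := Measure.le_add_right le_rfl
  have hμ : μ ≤ σ + μ := Measure.le_add_left le_rfl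
  have integral_r_le : ‖∫ x, r x ∂σ‖ₑ ≤ δ * σ univ ^ (1 / 2 : ℝ) :=
    (enorm_integral_le_eLpNorm_two_mul (hr.mono_measure hσ).aestronglyMeasurable).trans
      (by gcongr; exact (eLpNorm_mono_measure _ hσ).trans hgδ)
  have eLpNorm_g_le : eLpNorm g 2 μ ≤ eLpNorm f 2 μ + δ :=
    calc eLpNorm g 2 μ = eLpNorm (f - r) 2 μ := by rw [hr_def, sub_sub_cancel]
      _ ≤ eLpNorm f 2 μ + eLpNorm r 2 μ :=
        eLpNorm_sub_le (hf.mono_measure hμ).aestronglyMeasurable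
          (hr.mono_measure hμ).aestronglyMeasurable one_le_two
      _ ≤ eLpNorm f 2 μ + δ := by gcongr; exact (eLpNorm_mono_measure _ hμ).trans hgδ
  have hsplit : ∫ x, f x ∂σ = ∫ x, r x ∂σ + ∫ x, g x ∂σ := by
    rw [← integral_add ((hr.mono_measure hσ).integrable one_le_two)
      ((hg.mono_measure hσ).integrable one_le_two)]
    simp only [hr_def, Pi.sub_apply, sub_add_cancel]
  calc ‖∫ x, f x ∂σ‖ₑ ≤ ‖∫ x, r x ∂σ‖ₑ + ‖∫ x, g x ∂σ‖ₑ := hsplit ▸ enorm_add_le _ _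
    _ ≤ δ * σ univ ^ (1 / 2 : ℝ) + C * (eLpNorm f 2 μ + δ) := by
      gcongr
      exact (h g).trans (by gcongr)
    _ = C * eLpNorm f 2 μ + D * δ := by rw [hD]; ring
    _ ≤ C * eLpNorm f 2 μ + (D + 1) * δ := by gcongr; exact le_self_add
    _ ≤ C * eLpNorm f 2 μ + ε := by gcongr; exact ENNReal.mul_div_le

variable [IsFiniteMeasure μ]

theorem absolutelyContinuous_of_enorm_integral_le {C : ℝ≥0}
    (h : ∀ f : X → ℝ, MemLp f 2 (σ + μ) → ‖∫ x, f x ∂σ‖ₑ ≤ C * eLpNorm f 2 μ) : σ ≪ μ := by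
  refine Measure.AbsolutelyContinuous.mk fun s hs hμs ↦ ?_
  have hint := h (s.indicator 1) (memLp_indicator_const 2 hs 1 (Or.inr (measure_ne_top _ _)))
  have hnorm : eLpNorm (s.indicator (1 : X → ℝ)) 2 μ = 0 := by
    rw [eLpNorm_eq_zero_iff (measurable_one.indicator hs).aestronglyMeasurable two_ne_zero]
    exact indicator_meas_zero hμs
  rw [hnorm, mul_zero, integral_indicator_one hs, nonpos_iff_eq_zero, enorm_eq_zero] at hint
  exact (measureReal_eq_zero_iff (measure_ne_top _ _)).mp hint

theorem lintegral_min_rnDeriv_sq_le {C : ℝ≥0}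
    (h : ∀ f : X → ℝ, MemLp f 2 (σ + μ) → ‖∫ x, f x ∂σ‖ₑ ≤ C * eLpNorm f 2 μ) (N : ℝ≥0) :
    ∫⁻ x, min (σ.rnDeriv μ x) N ^ 2 ∂μ ≤ C ^ 2 := by
  set g : X → ℝ≥0∞ := fun x ↦ min (σ.rnDeriv μ x) N
  have hg : Measurable g := (Measure.measurable_rnDeriv σ μ).min measurable_const
  have hgN : ∀ x, g x ≤ N := fun x ↦ min_le_right _ _
  have hg_top : ∀ x, g x ≠ ∞ := fun x ↦ ne_top_of_le_ne_top ENNReal.coe_ne_top (hgN x)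
  set f : X → ℝ := fun x ↦ (g x).toReal
  have hf_enorm : ∀ x, ‖f x‖ₑ = g x := fun x ↦ by
    rw [Real.enorm_eq_ofReal ENNReal.toReal_nonneg, ENNReal.ofReal_toReal (hg_top x)]
  have hf : MemLp f 2 (σ + μ) := by
    refine MemLp.of_bound hg.ennreal_toReal.aestronglyMeasurable N (ae_of_all _ fun x ↦ ?_)
    rw [Real.norm_of_nonneg ENNReal.toReal_nonneg]
    exact ENNReal.toReal_mono ENNReal.coe_ne_top (hgN x)
  have hf_sq : eLpNorm f 2 μ ^ 2 = ∫⁻ x, g x ^ 2 ∂μ := by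
    simpa [hf_enorm] using eLpNorm_nnreal_pow_eq_lintegral (f := f) (μ := μ) (p := 2) two_ne_zero
  have hf_top : eLpNorm f 2 μ ≠ ∞ := (hf.mono_measure (Measure.le_add_left le_rfl)).eLpNorm_ne_top
  have hf_int : ‖∫ x, f x ∂σ‖ₑ = ∫⁻ x, g x ∂σ := by
    have hg_int : ∫⁻ x, g x ∂σ ≠ ∞ :=
      ne_top_of_le_ne_top (by simp [ENNReal.mul_eq_top]) (lintegral_mono (μ := σ) hgN)
    rw [integral_toReal hg.aemeasurable (ae_of_all _ fun x ↦ (hg_top x).lt_top),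
      Real.enorm_eq_ofReal ENNReal.toReal_nonneg, ENNReal.ofReal_toReal hg_int]
  have hsq_le : eLpNorm f 2 μ ^ 2 ≤ C * eLpNorm f 2 μ :=
    calc eLpNorm f 2 μ ^ 2 = ∫⁻ x, g x * g x ∂μ := by simp only [hf_sq, sq]
      _ ≤ ∫⁻ x, σ.rnDeriv μ x * g x ∂μ := by gcongr; exact min_le_left _ _
      _ = ∫⁻ x, g x ∂σ := lintegral_rnDeriv_mul
        (absolutelyContinuous_of_enorm_integral_le h) hg.aemeasurable
      _ ≤ C * eLpNorm f 2 μ := hf_int ▸ h f hf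
  rw [← hf_sq]
  gcongr
  rcases eq_or_ne (eLpNorm f 2 μ) 0 with h0 | h0
  · simp [h0]
  · exact (ENNReal.mul_le_mul_iff_left h0 hf_top).mp (sq (eLpNorm f 2 μ) ▸ hsq_le)

theorem lintegral_rnDeriv_sq_le {C : ℝ≥0}
    (h : ∀ f : X → ℝ, MemLp f 2 (σ + μ) → ‖∫ x, f x ∂σ‖ₑ ≤ C * eLpNorm f 2 μ) :
    ∫⁻ x, σ.rnDeriv μ x ^ 2 ∂μ ≤ C ^ 2 := by
  have hlim : ∀ y : ℝ≥0∞, Tendsto (fun N : ℕ ↦ min y (N : ℝ≥0) ^ 2) atTop (𝓝 (y ^ 2)) := by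
    intro y
    have hmin : Tendsto (fun N : ℕ ↦ min y (N : ℝ≥0∞)) atTop (𝓝 (min y ∞)) :=
      tendsto_const_nhds.min ENNReal.tendsto_nat_nhds_top
    simpa [Function.comp_def] using ((ENNReal.continuous_pow 2).tendsto _).comp hmin
  refine le_of_tendsto (lintegral_tendsto_of_tendsto_of_monotone
      (fun N ↦ (((Measure.measurable_rnDeriv σ μ).min measurable_const).pow_const 2).aemeasurable)
      (ae_of_all _ fun x ↦ fun N N' hN ↦ ?_) (ae_of_all _ fun x ↦ hlim _))
    (Eventually.of_forall fun N ↦ lintegral_min_rnDeriv_sq_le h N)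
  dsimp only
  gcongr

theorem absolutelyContinuous_and_lintegral_rnDeriv_sq_lt_top [TopologicalSpace X] [NormalSpace X]
    [BorelSpace X] [(σ + μ).WeaklyRegular] {C : ℝ≥0}
    (h : ∀ g : X →ᵇ ℝ, (∫ x, g x ∂σ) ^ 2 ≤ C * ∫ x, g x ^ 2 ∂μ) :
    σ ≪ μ ∧ ∫⁻ x, σ.rnDeriv μ x ^ 2 ∂μ < ⊤ := by
  have hle (f : X → ℝ) (hf : MemLp f 2 (σ + μ)) :
      ‖∫ x, f x ∂σ‖ₑ ≤ NNReal.sqrt C * eLpNorm f 2 μ :=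
    enorm_integral_le_of_forall_boundedContinuous (fun g ↦
      enorm_integral_le_sqrt_mul_eLpNorm_two (.of_bound g.continuous.aestronglyMeasurable ‖g‖
        (ae_of_all _ g.norm_coe_le_norm)) (h g)) hf
  exact ⟨absolutelyContinuous_of_enorm_integral_le hle,
    (lintegral_rnDeriv_sq_le hle).trans_lt (by finiteness)⟩

end L2Domination

section Polarization

theorem eqOn_zero_of_forall_ofReal {U : Set ℂ} (hUo : IsOpen U) (hUc : Convex ℝ U) {f : ℂ → ℂ}
    (hf : DifferentiableOn ℂ f U) {x₀ : ℝ} (hx₀ : (x₀ : ℂ) ∈ U)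
    (h0 : ∀ r : ℝ, (r : ℂ) ∈ U → f r = 0) : EqOn f 0 U := by
  refine (hf.analyticOnNhd hUo).eqOn_zero_of_preconnected_of_frequently_eq_zero
    hUc.isPreconnected hx₀ ?_
  have hreal : Tendsto (fun r : ℝ ↦ (r : ℂ)) (𝓝[≠] x₀) (𝓝[≠] (x₀ : ℂ)) :=
    tendsto_nhdsWithin_iff.mpr
      ⟨Complex.continuous_ofReal.continuousAt.tendsto.mono_left nhdsWithin_le_nhds, by
        filter_upwards [self_mem_nhdsWithin] with r hr using ofReal_injective.ne hr⟩
  exact hreal.frequently (Eventually.frequently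
    ((hreal.eventually (mem_nhdsWithin_of_mem_nhds (hUo.mem_nhds hx₀))).mono h0))

variable {E V W : Type*} [NormedAddCommGroup E] [NormedSpace ℂ E]
  [NormedAddCommGroup V] [NormedSpace ℂ V] [NormedAddCommGroup W] [NormedSpace ℂ W]

/-- `H z w` is holomorphic in `z` and antiholomorphic in `w` for `z, w ∈ U`, jointly along complex
lines: only the one-variable restrictions needed for polarization are recorded. -/
def SesquiHolomorphicOn (H : E → E → V) (U : Set E) : Prop :=
  ∀ (a u : E) (t : ℂ), a + t • u ∈ U → a + conj t • u ∈ U →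
    DifferentiableAt ℂ (fun s : ℂ ↦ H (a + s • u) (a + conj s • u)) t

namespace SesquiHolomorphicOn

variable {U : Set E}

theorem of_differentiableOn_left {f : E → V} (hf : DifferentiableOn ℂ f U) (hU : IsOpen U) :
    SesquiHolomorphicOn (fun z _ ↦ f z) U := fun a u t ht _ ↦
  (hf.differentiableAt (hU.mem_nhds ht)).comp t (f := fun s : ℂ ↦ a + s • u) (by fun_prop)

theorem star_right [StarAddMonoid V] [NormedStarGroup V] [StarModule ℂ V] {f : E → V}
    (hf : DifferentiableOn ℂ f U) (hU : IsOpen U) :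
    SesquiHolomorphicOn (fun _ w ↦ star (f w)) U := fun a u t _ ht ↦
  differentiableAt_star_conj_iff.mpr <|
    (hf.differentiableAt (hU.mem_nhds ht)).comp (conj t) (f := fun s : ℂ ↦ a + s • u) (by fun_prop)

theorem const (c : V) : SesquiHolomorphicOn (fun _ _ ↦ c) U := fun _ _ _ _ _ ↦
  differentiableAt_const c

theorem sub {H₁ H₂ : E → E → V} (h₁ : SesquiHolomorphicOn H₁ U)
    (h₂ : SesquiHolomorphicOn H₂ U) : SesquiHolomorphicOn (fun z w ↦ H₁ z w - H₂ z w) U :=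
  fun a u t hz hw ↦ (h₁ a u t hz hw).sub (h₂ a u t hz hw)

theorem clm_comp (L : V →L[ℂ] W) {H : E → E → V} (h : SesquiHolomorphicOn H U) :
    SesquiHolomorphicOn (fun z w ↦ L (H z w)) U :=
  fun a u t hz hw ↦ L.differentiableAt.comp t (h a u t hz hw)

theorem mul {A : Type*} [NormedRing A] [NormedAlgebra ℂ A] {H₁ H₂ : E → E → A}
    (h₁ : SesquiHolomorphicOn H₁ U) (h₂ : SesquiHolomorphicOn H₂ U) :
    SesquiHolomorphicOn (fun z w ↦ H₁ z w * H₂ z w) U :=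
  fun a u t hz hw ↦ (h₁ a u t hz hw).mul (h₂ a u t hz hw)

theorem pow {A : Type*} [NormedCommRing A] [NormedAlgebra ℂ A] {H : E → E → A}
    (h : SesquiHolomorphicOn H U) (k : ℕ) : SesquiHolomorphicOn (fun z w ↦ H z w ^ k) U :=
  fun a u t hz hw ↦ (h a u t hz hw).pow k

theorem inner {F : Type*} [NormedAddCommGroup F] [InnerProductSpace ℂ F] {U : Set F} :
    SesquiHolomorphicOn (fun z w : F ↦ inner ℂ w z) U := fun a u t _ _ ↦ by
  simp only [inner_add_left, inner_add_right, inner_smul_left, inner_smul_right, conj_conj]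
  fun_prop

theorem eq_zero_of_diagonal {H : E → E → ℂ} (hH : SesquiHolomorphicOn H U) (hUo : IsOpen U)
    (hUc : Convex ℝ U) (h0 : ∀ z ∈ U, H z z = 0) {z w : E} (hz : z ∈ U) (hw : w ∈ U) :
    H z w = 0 := by
  -- With midpoint `a` and `u = i (z - w)`, the pair `(z, w)` is the point `t = -i / 2` of the
  -- disc `(a + t u, a + t̄ u)`, which meets the diagonal in the real values of `t`.
  set a : E := (1 / 2 : ℂ) • (z + w) with ha
  set u : E := I • (z - w) with hu
  set D : Set ℂ := {t | a + t • u ∈ U ∧ a + conj t • u ∈ U}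
  have hline : Convex ℝ {t : ℂ | a + t • u ∈ U} := by
    have : {t : ℂ | a + t • u ∈ U} =
      (((LinearMap.toSpanSingleton ℂ E u).restrictScalars ℝ) ⁻¹' ((fun x ↦ a + x) ⁻¹' U)) := rfl
    exact this ▸ (hUc.translate_preimage_right a).linear_preimage _
  have hDo : IsOpen D :=
    (hUo.preimage (by fun_prop)).inter (hUo.preimage (by fun_prop))
  have hDc : Convex ℝ D := hline.inter (hline.linear_preimage Complex.conjLIE.toLinearMap)
  have hzu : a + (-(I / 2)) • u = z := by
    rw [ha, hu, smul_smul, show -(I / 2) * I = 1 / 2 by linear_combination (-1 / 2) * I_mul_I]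
    module
  have hwu : a + conj (-(I / 2)) • u = w := by
    rw [ha, hu, smul_smul, show conj (-(I / 2)) = I / 2 by simp [conj_ofNat, neg_div],
      show I / 2 * I = -1 / 2 by linear_combination (1 / 2) * I_mul_I]
    module
  have hmid : a ∈ U := by
    have := hUc hz hw (a := 1 / 2) (b := 1 / 2) (by norm_num) (by norm_num) (by norm_num)
    rw [ha, smul_add]
    convert this using 2 <;> · rw [← Complex.coe_smul]; norm_num
  have hzero := eqOn_zero_of_forall_ofReal hDo hDc (x₀ := 0)
    (fun t ht ↦ (hH a u t ht.1 ht.2).differentiableWithinAt) (by simpa [D] using hmid)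
    (fun r hr ↦ by simpa using h0 _ hr.1)
    (show -(I / 2) ∈ D from ⟨hzu.symm ▸ hz, hwu.symm ▸ hw⟩)
  simpa only [hzu, hwu, Pi.zero_apply] using hzero

end SesquiHolomorphicOn

end Polarization

section IntegralCLM

variable {X : Type*} [TopologicalSpace X] [CompactSpace X] [MeasurableSpace X]
  [OpensMeasurableSpace X] (ρ : Measure X) [IsFiniteMeasure ρ]

theorem integrable_of_compactSpace {F : Type*} [NormedAddCommGroup F]
    {f : X → F} (hf : Continuous f) : Integrable f ρ :=
  hf.integrable_of_hasCompactSupport (HasCompactSupport.of_compactSpace f)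

/-- Integration against a finite measure as a continuous functional on `C(X, ℂ)`. -/
noncomputable def integralCLM : C(X, ℂ) →L[ℂ] ℂ :=
  LinearMap.mkContinuous
    { toFun := fun f ↦ ∫ x, f x ∂ρ
      map_add' := fun f g ↦ integral_add (integrable_of_compactSpace ρ f.continuous)
        (integrable_of_compactSpace ρ g.continuous)
      map_smul' := fun a f ↦ integral_const_mul a f }
    (ρ.real univ) fun f ↦ by
      simpa [mul_comm] using norm_integral_le_of_norm_le_const (μ := ρ) (f := f) (C := ‖f‖)
        (ae_of_all _ f.norm_coe_le_norm)

@[simp]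
theorem integralCLM_apply (f : C(X, ℂ)) : integralCLM ρ f = ∫ x, f x ∂ρ := rfl

theorem integralCLM_star (f : C(X, ℂ)) : integralCLM ρ (star f) = conj (integralCLM ρ f) :=
  integral_conj

end IntegralCLM

theorem ringInverse_apply {X : Type*} [TopologicalSpace X] {f : C(X, ℂ)} (hf : IsUnit f) (x : X) :
    Ring.inverse f x = (f x)⁻¹ :=
  eq_inv_of_mul_eq_one_right (by rw [← ContinuousMap.mul_apply, Ring.mul_inverse_cancel f hf,
    ContinuousMap.one_apply])

/-- Complex Euclidean space `ℂⁿ`. -/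
abbrev E (n : ℕ) : Type := EuclideanSpace ℂ (Fin n)

/-- The closed unit ball of `ℂⁿ`. Measures on the sphere are carried as measures on this compact
set, so that the functions on the sphere and their extensions to the ball live on one space. -/
abbrev K (n : ℕ) : Set (E n) := closedBall 0 1

section Kernels

variable {n : ℕ}

theorem norm_coe_le_one (ζ : K n) : ‖(ζ : E n)‖ ≤ 1 := mem_closedBall_zero_iff.mp ζ.2

theorem inner_eq_sum_mul_conj (z w : E n) : inner ℂ w z = ∑ i, z i * conj (w i) := by
  simp [PiLp.inner_apply]

/-- The `i`-th coordinate as a function on the closed ball. -/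
def coord (i : Fin n) : C(K n, ℂ) := ⟨fun ζ ↦ (ζ : E n) i, by fun_prop⟩

@[simp]
theorem coord_apply (i : Fin n) (ζ : K n) : coord i ζ = (ζ : E n) i := rfl

/-- The function `ζ ↦ ⟨z, ζ⟩` on the closed ball, linear in `z`. -/
noncomputable def pairing : E n →L[ℂ] C(K n, ℂ) :=
  LinearMap.toContinuousLinearMap
    { toFun := fun z ↦ ⟨fun ζ ↦ inner ℂ (ζ : E n) z, by fun_prop⟩
      map_add' := fun z w ↦ by ext ζ; exact inner_add_right (ζ : E n) z w
      map_smul' := fun a z ↦ by ext ζ; exact inner_smul_right (ζ : E n) z a }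

@[simp]
theorem pairing_apply (z : E n) (ζ : K n) : pairing z ζ = inner ℂ (ζ : E n) z := rfl

theorem norm_inner_le_norm_of_mem_closedBall (z : E n) (ζ : K n) : ‖inner ℂ (ζ : E n) z‖ ≤ ‖z‖ :=
  (norm_inner_le_norm _ _).trans (mul_le_of_le_one_left (norm_nonneg z) (norm_coe_le_one ζ))

theorem norm_pairing_le (z : E n) : ‖pairing z‖ ≤ ‖z‖ :=
  (ContinuousMap.norm_le _ (norm_nonneg z)).mpr (norm_inner_le_norm_of_mem_closedBall z)

theorem isUnit_one_sub_pairing {z : E n} (hz : z ∈ ball 0 1) : IsUnit (1 - pairing z) :=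
  isUnit_one_sub_of_norm_lt_one ((norm_pairing_le z).trans_lt (mem_ball_zero_iff.mp hz))

/-- The Cauchy kernel `C(z, ·) = (1 - ⟨z, ·⟩)⁻ⁿ` as a function on the closed ball, for `‖z‖ < 1`. -/
noncomputable def cauchyKernel (z : E n) : C(K n, ℂ) := Ring.inverse (1 - pairing z) ^ n

theorem cauchyKernel_apply {z : E n} (hz : z ∈ ball 0 1) (ζ : K n) :
    cauchyKernel z ζ = (1 - inner ℂ (ζ : E n) z)⁻¹ ^ n := by
  rw [cauchyKernel, ContinuousMap.pow_apply, ringInverse_apply (isUnit_one_sub_pairing hz)]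
  rfl

@[simp]
theorem cauchyKernel_zero : cauchyKernel (0 : E n) = 1 := by
  simp [cauchyKernel]

theorem differentiableOn_cauchyKernel :
    DifferentiableOn ℂ (cauchyKernel : E n → C(K n, ℂ)) (ball 0 1) :=
  (DifferentiableOn.inverse ((pairing.differentiable.const_sub 1).differentiableOn)
    fun _ hz ↦ isUnit_one_sub_pairing hz).pow n

theorem one_sub_inner_ne_zero {z w : E n} (hz : z ∈ ball 0 1) (hw : w ∈ K n) :
    1 - inner ℂ w z ≠ 0 := fun h ↦
  absurd (norm_inner_le_norm_of_mem_closedBall z ⟨w, hw⟩)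
    (by simpa [← sub_eq_zero.mp h] using hz)

end Kernels

theorem exists_linearIsometryEquiv_apply_eq {F : Type*} [NormedAddCommGroup F]
    [InnerProductSpace ℂ F] [FiniteDimensional ℂ F] {z w : F} (hz : ‖z‖ = 1) (hw : ‖w‖ = 1) :
    ∃ U : F ≃ₗᵢ[ℂ] F, U z = w := by
  let T : (ℂ ∙ z) →ₗᵢ[ℂ] F := (ℂ ∙ w).subtypeₗᵢ.comp
    ((LinearIsometryEquiv.toSpanUnitSingleton (𝕜 := ℂ) z hz).symm.trans
      (LinearIsometryEquiv.toSpanUnitSingleton (𝕜 := ℂ) w hw)).toLinearIsometry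
  have hsymm : (LinearIsometryEquiv.toSpanUnitSingleton (𝕜 := ℂ) z hz).symm
      ⟨z, Submodule.mem_span_singleton_self z⟩ = 1 := by
    rw [LinearIsometryEquiv.symm_apply_eq]
    simp
  refine ⟨LinearIsometryEquiv.ofSurjective T.extend
    (LinearMap.surjective_of_injective T.extend.injective), ?_⟩
  calc T.extend z = T ⟨z, Submodule.mem_span_singleton_self z⟩ :=
        T.extend_apply ⟨z, Submodule.mem_span_singleton_self z⟩
    _ = w := by simp [T, hsymm]

section SphereMeasure

variable {n : ℕ} [MeasurableSpace (K n)]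

/-- The measure `Λ` on the closed ball is carried by the unit sphere and invariant under the
unitary group; among probability measures this characterizes normalized surface measure. -/
structure IsSphereMeasure (Λ : Measure (K n)) : Prop where
  ae_norm_eq_one : ∀ᵐ ζ : K n ∂Λ, ‖(ζ : E n)‖ = 1
  integral_comp_unitary (U : E n ≃ₗᵢ[ℂ] E n) (f : E n → ℂ) :
    ∫ ζ : K n, f (U ζ) ∂Λ = ∫ ζ : K n, f ζ ∂Λ

variable {Λ : Measure (K n)} [IsProbabilityMeasure Λ]

theorem IsSphereMeasure.pos (hΛ : IsSphereMeasure Λ) : 0 < n := by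
  obtain ⟨ζ, hζ⟩ := hΛ.ae_norm_eq_one.exists
  rcases Nat.eq_zero_or_pos n with rfl | hn
  · simp [Subsingleton.elim (ζ : E 0) 0] at hζ
  · exact hn

variable [BorelSpace (K n)]

theorem integralCLM_moment_map (hΛ : IsSphereMeasure Λ) (U : E n ≃ₗᵢ[ℂ] E n) (j k : ℕ)
    (z w : E n) :
    integralCLM Λ (pairing (U z) ^ j * star (pairing (U w)) ^ k) =
      integralCLM Λ (pairing z ^ j * star (pairing w) ^ k) := by
  have hinv := hΛ.integral_comp_unitary U fun ζ ↦ inner ℂ ζ (U z) ^ j * conj (inner ℂ ζ (U w)) ^ k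
  simpa [LinearIsometryEquiv.inner_map_map] using hinv.symm

theorem integralCLM_moment_of_ne (hΛ : IsSphereMeasure Λ) {j k : ℕ} (hjk : j ≠ k) (z w : E n) :
    integralCLM Λ (pairing z ^ j * star (pairing w) ^ k) = 0 := by
  set N := j + k + 1
  have hN : N ≠ 0 := Nat.succ_ne_zero _
  obtain ⟨u, hu⟩ : ∃ u : ℂ, IsPrimitiveRoot u N := ⟨_, Complex.isPrimitiveRoot_exp N hN⟩
  have hu_norm : ‖u‖ = 1 := hu.norm'_eq_one hN
  have hu_conj : u * conj u = 1 := by rw [mul_conj, normSq_eq_norm_sq, hu_norm]; simp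
  have hu_ne : u ^ j * conj u ^ k ≠ 1 := fun h ↦ hjk <| hu.pow_inj (by omega) (by omega) <|
    calc u ^ j = u ^ j * conj u ^ k * u ^ k := by rw [mul_assoc, ← mul_pow, mul_comm (conj u),
          hu_conj, one_pow, mul_one]
      _ = u ^ k := by rw [h, one_mul]
  let U : E n ≃ₗᵢ[ℂ] E n :=
    ⟨LinearEquiv.smulOfNeZero ℂ (E n) u (hu.ne_zero hN), fun v ↦ by
      rw [show LinearEquiv.smulOfNeZero ℂ (E n) u (hu.ne_zero hN) v = u • v from rfl, norm_smul,
        hu_norm, one_mul]⟩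
  have hU : ∀ v, U v = u • v := fun _ ↦ rfl
  have hinv := integralCLM_moment_map hΛ U j k z w
  rw [hU, hU, map_smul, map_smul, star_smul, smul_pow, smul_pow, smul_mul_smul_comm, map_smul,
    smul_eq_mul] at hinv
  by_contra hne
  exact hu_ne ((mul_eq_right₀ hne).mp hinv)

theorem exists_integralCLM_moment_eq (hΛ : IsSphereMeasure Λ) (k : ℕ) :
    ∃ C : ℂ, ∀ z w : E n,
      integralCLM Λ (pairing z ^ k * star (pairing w) ^ k) = C * inner ℂ w z ^ k := by
  let e₀ : E n := EuclideanSpace.single ⟨0, hΛ.pos⟩ 1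
  have he₀ : ‖e₀‖ = 1 := by simp [e₀]
  refine ⟨integralCLM Λ (pairing e₀ ^ k * star (pairing e₀) ^ k), fun z w ↦ sub_eq_zero.mp ?_⟩
  refine SesquiHolomorphicOn.eq_zero_of_diagonal (U := univ)
    (H := fun z w ↦ integralCLM Λ (pairing z ^ k * star (pairing w) ^ k) - _ * inner ℂ w z ^ k)
    ?_ isOpen_univ convex_univ (fun z _ ↦ ?_) (mem_univ z) (mem_univ w)
  · have hpair : DifferentiableOn ℂ (pairing : E n → C(K n, ℂ)) univ :=
      pairing.differentiable.differentiableOn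
    exact (((SesquiHolomorphicOn.of_differentiableOn_left hpair isOpen_univ).pow k |>.mul
      ((SesquiHolomorphicOn.star_right hpair isOpen_univ).pow k)).clm_comp _).sub
      ((SesquiHolomorphicOn.const _).mul (SesquiHolomorphicOn.inner.pow k))
  · obtain ⟨x, hx, hzx⟩ : ∃ x : E n, ‖x‖ = 1 ∧ (‖z‖ : ℂ) • x = z := by
      rcases eq_or_ne z 0 with rfl | hz
      · exact ⟨e₀, he₀, by simp⟩
      · have hz' : (‖z‖ : ℂ) ≠ 0 := by simpa using hz
        exact ⟨(‖z‖ : ℂ)⁻¹ • z, by simp [norm_smul, hz], smul_inv_smul₀ hz' z⟩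
    obtain ⟨U, hU⟩ := exists_linearIsometryEquiv_apply_eq he₀ hx
    have hinv := integralCLM_moment_map hΛ U k k ((‖z‖ : ℂ) • e₀) ((‖z‖ : ℂ) • e₀)
    rw [map_smul U, hU, hzx, map_smul pairing, star_smul, smul_pow, smul_pow, smul_mul_smul_comm,
      map_smul, smul_eq_mul] at hinv
    rw [hinv, inner_self_eq_norm_sq_to_K, sub_eq_zero]
    simp only [RCLike.star_def, conj_ofReal, coe_algebraMap]
    ring

end SphereMeasure

theorem hasDerivAt_add_smul_pow_zero {A : Type*} [NormedCommRing A] [NormedAlgebra ℂ A] (a v : A)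
    (k : ℕ) : HasDerivAt (fun s : ℂ ↦ (a + s • v) ^ k) ((k : ℂ) • (a ^ (k - 1) * v)) 0 := by
  have hlin : HasDerivAt (fun s : ℂ ↦ a + s • v) v 0 := by
    simpa using ((hasDerivAt_id (0 : ℂ)).smul_const v).const_add a
  simpa [Algebra.smul_def, mul_assoc] using hlin.fun_pow k

section Moments

variable {n : ℕ} {L : C(K n, ℂ) →L[ℂ] ℂ} {k : ℕ} {C : ℂ}

theorem moment_deriv_left
    (h : ∀ z w : E n, L (pairing z ^ (k + 1) * star (pairing w) ^ (k + 1)) =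
      C * inner ℂ w z ^ (k + 1)) (z w v : E n) :
    L (pairing z ^ k * pairing v * star (pairing w) ^ (k + 1)) =
      C * inner ℂ w z ^ k * inner ℂ w v := by
  have hlhs := L.hasFDerivAt.comp_hasDerivAt (0 : ℂ)
    ((hasDerivAt_add_smul_pow_zero (pairing z) (pairing v) (k + 1)).mul_const
      (star (pairing w) ^ (k + 1)))
  have hrhs :=
    (hasDerivAt_add_smul_pow_zero (inner ℂ w z) (inner ℂ w v) (k + 1)).const_mul C
  have heq : (fun s : ℂ ↦ L ((pairing z + s • pairing v) ^ (k + 1) * star (pairing w) ^ (k + 1))) =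
      fun s ↦ C * (inner ℂ w z + s • inner ℂ w v) ^ (k + 1) := by
    funext s
    simpa only [map_add, map_smul, inner_add_right, inner_smul_right, smul_eq_mul]
      using h (z + s • v) w
  have hderiv := hlhs.unique (hrhs.congr_of_eventuallyEq (.of_eq heq))
  rw [Nat.add_sub_cancel, smul_mul_assoc, map_smul, smul_eq_mul, smul_eq_mul] at hderiv
  refine mul_left_cancel₀ (Nat.cast_ne_zero.mpr k.succ_ne_zero : ((k + 1 : ℕ) : ℂ) ≠ 0) ?_
  rw [hderiv]
  ring

theorem moment_deriv_left_right
    (h : ∀ z w : E n, L (pairing z ^ (k + 1) * star (pairing w) ^ (k + 1)) =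
      C * inner ℂ w z ^ (k + 1)) (z w v u : E n) :
    (k + 1) * L (pairing z ^ k * star (pairing w) ^ k * (pairing v * star (pairing u))) =
      C * (k * inner ℂ w z ^ (k - 1) * inner ℂ u z * inner ℂ w v +
        inner ℂ w z ^ k * inner ℂ u v) := by
  have hlhs := L.hasFDerivAt.comp_hasDerivAt (0 : ℂ)
    ((hasDerivAt_add_smul_pow_zero (star (pairing w)) (star (pairing u)) (k + 1)).const_mul
      (pairing z ^ k * pairing v))
  have hlin : HasDerivAt (fun s : ℂ ↦ inner ℂ w v + s • inner ℂ u v) (inner ℂ u v) 0 := by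
    simpa using hasDerivAt_add_smul_pow_zero (inner ℂ w v) (inner ℂ u v) 1
  have hrhs := ((hasDerivAt_add_smul_pow_zero (inner ℂ w z) (inner ℂ u z) k).const_mul C).fun_mul
    hlin
  have heq : (fun s : ℂ ↦ L (pairing z ^ k * pairing v *
        (star (pairing w) + s • star (pairing u)) ^ (k + 1))) =
      fun s ↦ C * (inner ℂ w z + s • inner ℂ u z) ^ k * (inner ℂ w v + s • inner ℂ u v) := by
    funext s
    simpa [inner_add_left, inner_smul_left, mul_comm _ s] using
      moment_deriv_left h z (w + conj s • u) v
  have hderiv := hlhs.unique (hrhs.congr_of_eventuallyEq (.of_eq heq))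
  rw [Nat.add_sub_cancel, mul_smul_comm, map_smul, zero_smul, zero_smul, add_zero, add_zero,
    smul_eq_mul, smul_eq_mul, mul_mul_mul_comm] at hderiv
  push_cast at hderiv
  rw [hderiv]
  ring

end Moments

theorem hasSum_choose_smul_pow {A : Type*} [NormedRing A] [NormedAlgebra ℂ A]
    [HasSummableGeomSeries A] {a : A} (ha : ‖a‖ < 1) {n : ℕ} (hn : 0 < n) :
    HasSum (fun k : ℕ ↦ ((k + (n - 1)).choose (n - 1) : ℂ) • a ^ k) (Ring.inverse (1 - a) ^ n) := by
  simpa [Algebra.smul_def, Nat.sub_add_cancel hn] using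
    hasSum_choose_mul_geometric_of_norm_lt_one' (n - 1) ha

theorem hasSum_cauchyKernel {n : ℕ} (hn : 0 < n) {z : E n} (hz : z ∈ ball 0 1) :
    HasSum (fun k : ℕ ↦ ((k + (n - 1)).choose (n - 1) : ℂ) • pairing z ^ k) (cauchyKernel z) :=
  hasSum_choose_smul_pow ((norm_pairing_le z).trans_lt (mem_ball_zero_iff.mp hz)) hn

theorem sum_pairing_mul_star_eq_one {n : ℕ} {ζ : K n} (hζ : ‖(ζ : E n)‖ = 1)
    (e : OrthonormalBasis (Fin n) ℂ (E n)) :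
    (∑ j, pairing (e j) * star (pairing (e j)) : C(K n, ℂ)) ζ = 1 := by
  have := e.sum_inner_mul_inner (ζ : E n) ζ
  rw [inner_self_eq_norm_sq_to_K, hζ] at this
  simpa [ContinuousMap.sum_apply] using this

section SphereMeasure

variable {n : ℕ} [MeasurableSpace (K n)] [BorelSpace (K n)] {Λ : Measure (K n)}
  [IsProbabilityMeasure Λ]

theorem moment_recursion (hΛ : IsSphereMeasure Λ) {k : ℕ} {C C' : ℂ}
    (h : ∀ z w : E n, integralCLM Λ (pairing z ^ k * star (pairing w) ^ k) = C * inner ℂ w z ^ k)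
    (h' : ∀ z w : E n, integralCLM Λ (pairing z ^ (k + 1) * star (pairing w) ^ (k + 1)) =
      C' * inner ℂ w z ^ (k + 1)) :
    (k + 1) * C = (n + k) * C' := by
  set e : OrthonormalBasis (Fin n) ℂ (E n) := EuclideanSpace.basisFun (Fin n) ℂ
  set z : E n := e ⟨0, hΛ.pos⟩
  have hz : inner ℂ z z = 1 := by rw [inner_self_eq_norm_sq_to_K, e.norm_eq_one]; simp
  have hsphere : ∑ j, integralCLM Λ (pairing z ^ k * star (pairing z) ^ k *
      (pairing (e j) * star (pairing (e j)))) = C := by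
    have hC : integralCLM Λ (pairing z ^ k * star (pairing z) ^ k) = C := by
      rw [h, hz, one_pow, mul_one]
    rw [← map_sum, ← Finset.mul_sum, ← hC]
    refine integral_congr_ae ?_
    filter_upwards [hΛ.ae_norm_eq_one] with ζ hζ
    rw [ContinuousMap.mul_apply, sum_pairing_mul_star_eq_one hζ, mul_one]
  have hsum : ∑ j, inner ℂ (e j) z * inner ℂ z (e j) = 1 := by
    simpa only [mul_comm, hz] using e.sum_inner_mul_inner z z
  calc (k + 1) * C = ∑ j, C' * (k * inner ℂ z z ^ (k - 1) * inner ℂ (e j) z * inner ℂ z (e j) +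
        inner ℂ z z ^ k * inner ℂ (e j) (e j)) := by
        rw [← hsphere, Finset.mul_sum]
        exact Finset.sum_congr rfl fun j _ ↦ moment_deriv_left_right h' z z (e j) (e j)
    _ = C' * (k * ∑ j, inner ℂ (e j) z * inner ℂ z (e j) + ∑ _j : Fin n, 1) := by
        simp only [hz, one_pow, mul_one, mul_assoc, ← Finset.mul_sum,
          Finset.sum_add_distrib, inner_self_eq_norm_sq_to_K, e.norm_eq_one, RCLike.ofReal_one]
    _ = (n + k) * C' := by
        rw [hsum]
        simp only [mul_one, Finset.sum_const, Finset.card_univ, Fintype.card_fin, nsmul_eq_mul]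
        ring

theorem choose_mul_integralCLM_moment (hΛ : IsSphereMeasure Λ) (k : ℕ) (z w : E n) :
    ((k + (n - 1)).choose (n - 1) : ℂ) * integralCLM Λ (pairing z ^ k * star (pairing w) ^ k) =
      inner ℂ w z ^ k := by
  choose C hC using exists_integralCLM_moment_eq hΛ
  have hC_eq : ((k + (n - 1)).choose (n - 1) : ℂ) * C k = 1 := by
    induction k with
    | zero => simpa using (hC 0 0 0).symm
    | succ k ih =>
      obtain ⟨m, hm⟩ := Nat.exists_eq_add_one.mpr hΛ.pos
      have hrec := moment_recursion hΛ (hC k) (hC (k + 1))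
      rw [hm] at hrec ih ⊢
      rw [Nat.add_sub_cancel] at ih ⊢
      have hchoose : ((k + m + 1) * (k + m).choose m : ℂ) = (k + 1 + m).choose m * (k + 1) := by
        have := Nat.add_one_mul_choose_eq (k + m) k
        rw [Nat.choose_symm_add, add_right_comm k m 1, Nat.choose_symm_add] at this
        rw [add_right_comm]
        exact_mod_cast this
      refine mul_left_cancel₀ (Nat.cast_add_one_ne_zero k : (k + 1 : ℂ) ≠ 0) ?_
      push_cast at hrec
      linear_combination -C (k + 1) * hchoose - ((k + m).choose m : ℂ) * hrec + (k + 1) * ih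
  rw [hC, ← mul_assoc, hC_eq, one_mul]

theorem integralCLM_pairing_pow_mul_star_cauchyKernel (hΛ : IsSphereMeasure Λ) (k : ℕ) (z : E n)
    {w : E n} (hw : w ∈ ball 0 1) :
    integralCLM Λ (pairing z ^ k * star (cauchyKernel w)) = inner ℂ w z ^ k := by
  have hsum := ((hasSum_cauchyKernel hΛ.pos hw).star.mul_left (pairing z ^ k)).mapL (integralCLM Λ)
  have hterm : ∀ j : ℕ, integralCLM Λ (pairing z ^ k *
      star (((j + (n - 1)).choose (n - 1) : ℂ) • pairing w ^ j)) =
      (j + (n - 1)).choose (n - 1) * integralCLM Λ (pairing z ^ k * star (pairing w) ^ j) := by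
    intro j
    rw [star_smul, mul_smul_comm, map_smul, star_pow, star_natCast, smul_eq_mul]
  rw [funext hterm] at hsum
  refine hsum.unique (choose_mul_integralCLM_moment hΛ k z w ▸ hasSum_single k fun j hj ↦ ?_)
  rw [integralCLM_moment_of_ne hΛ hj.symm, mul_zero]

theorem integralCLM_cauchyKernel_mul_star (hΛ : IsSphereMeasure Λ) {z w : E n}
    (hz : z ∈ ball 0 1) (hw : w ∈ ball 0 1) :
    integralCLM Λ (cauchyKernel z * star (cauchyKernel w)) = (1 - inner ℂ w z)⁻¹ ^ n := by
  have hsum := ((hasSum_cauchyKernel hΛ.pos hz).mul_right (star (cauchyKernel w))).mapL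
    (integralCLM Λ)
  simp only [smul_mul_assoc, map_smul, integralCLM_pairing_pow_mul_star_cauchyKernel hΛ _ z hw,
    smul_eq_mul] at hsum
  have hinner : ‖inner ℂ w z‖ < 1 :=
    (norm_inner_le_norm_of_mem_closedBall z ⟨w, ball_subset_closedBall hw⟩).trans_lt
      (mem_ball_zero_iff.mp hz)
  have hgeom := hasSum_choose_mul_geometric_of_norm_lt_one (n - 1) hinner
  rw [Nat.sub_add_cancel hΛ.pos, one_div, ← inv_pow] at hgeom
  exact hsum.unique hgeom

end SphereMeasure

section ClosedSubspaces

theorem mem_of_hasDerivAt {V : Type*} [NormedAddCommGroup V] [NormedSpace ℂ V]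
    {W : Submodule ℂ V} (hW : IsClosed (W : Set V)) {f : ℂ → V} {f' : V} {x : ℂ}
    (hf : HasDerivAt f f' x) (h : ∀ᶠ s in 𝓝 x, f s ∈ W) : f' ∈ W := by
  refine hW.mem_of_tendsto (hasDerivAt_iff_tendsto_slope.mp hf) ?_
  filter_upwards [h.filter_mono nhdsWithin_le_nhds] with s hs
  exact W.smul_mem ((s - x)⁻¹) (W.sub_mem hs h.self_of_nhds)

theorem integral_mem_of_forall_mem {X V : Type*} [MeasurableSpace X] [TopologicalSpace X]
    [CompactSpace X] [OpensMeasurableSpace X] [NormedAddCommGroup V] [NormedSpace ℂ V]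
    [CompleteSpace V] {W : Submodule ℂ V} (hW : IsClosed (W : Set V)) (ρ : Measure X)
    [IsFiniteMeasure ρ] {f : X → V} (hf : Continuous f) (h : ∀ x, f x ∈ W) :
    ∫ x, f x ∂ρ ∈ W := by
  have := hW.completeSpace_coe
  have hint := integrable_of_compactSpace ρ (hf.subtype_mk h)
  exact (W.subtypeL.integral_comp_comm hint).symm ▸ (∫ x, (⟨f x, h x⟩ : W) ∂ρ).2

variable {A : Type*} [NormedRing A] [NormedAlgebra ℂ A] {B : Subalgebra ℂ A} {f : A}

theorem ringInverse_one_sub_mem [HasSummableGeomSeries A] (hB : IsClosed (B : Set A))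
    (hf : f ∈ B) (h : ‖f‖ < 1) : Ring.inverse (1 - f) ∈ B := by
  rw [← geom_series_eq_inverse f h]
  exact hB.mem_of_tendsto (summable_geometric_of_norm_lt_one h).hasSum
    (.of_forall fun s ↦ B.sum_mem fun k _ ↦ B.pow_mem hf k)

theorem exists_norm_one_sub_smul_lt_one {X : Type*} [TopologicalSpace X] [CompactSpace X]
    {f : C(X, ℂ)} {δ : ℝ} (hδ : 0 < δ) (h : ∀ x, δ ≤ (f x).re) :
    ∃ s : ℝ, 0 < s ∧ ‖1 - (s : ℂ) • f‖ < 1 := by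
  refine ⟨δ / (‖f‖ ^ 2 + 1), by positivity, (ContinuousMap.norm_lt_iff _ one_pos).mpr fun x ↦ ?_⟩
  set s := δ / (‖f‖ ^ 2 + 1) with hs
  have hs_pos : 0 < s := by positivity
  have hs_mul : s * (‖f‖ ^ 2 + 1) = δ := by rw [hs]; field_simp
  have hexpand : ‖(1 - (s : ℂ) • f) x‖ ^ 2 = 1 - 2 * s * (f x).re + s ^ 2 * ‖f x‖ ^ 2 := by
    simp only [← normSq_eq_norm_sq, normSq_apply, ContinuousMap.sub_apply,
      ContinuousMap.one_apply, ContinuousMap.smul_apply, smul_eq_mul, sub_re, one_re, re_ofReal_mul,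
      sub_im, one_im, im_ofReal_mul]
    ring
  have hfx : ‖f x‖ ^ 2 ≤ ‖f‖ ^ 2 := by gcongr; exact f.norm_coe_le_norm x
  refine lt_of_pow_lt_pow_left₀ 2 zero_le_one ?_
  rw [hexpand]
  nlinarith [mul_le_mul_of_nonneg_left (h x) hs_pos.le, mul_le_mul_of_nonneg_left hfx (sq_nonneg s),
    mul_pos hs_pos hδ]

theorem ringInverse_mem_of_le_re {X : Type*} [TopologicalSpace X] [CompactSpace X]
    {B : Subalgebra ℂ C(X, ℂ)} (hB : IsClosed (B : Set C(X, ℂ))) {f : C(X, ℂ)} (hf : f ∈ B)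
    {δ : ℝ} (hδ : 0 < δ) (h : ∀ x, δ ≤ (f x).re) : Ring.inverse f ∈ B := by
  obtain ⟨s, hs, hnorm⟩ := exists_norm_one_sub_smul_lt_one hδ h
  have hinv := ringInverse_one_sub_mem hB (B.sub_mem B.one_mem (B.smul_mem hf (s : ℂ))) hnorm
  have hunit : IsUnit (s : ℂ) := isUnit_iff_ne_zero.mpr (mod_cast hs.ne')
  rw [sub_sub_cancel] at hinv
  have hfunit : IsUnit f := ContinuousMap.isUnit_iff_forall_ne_zero f |>.mpr fun x hx ↦ by
    have := h x
    rw [hx, zero_re] at this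
    exact hδ.not_ge this
  have hsf : IsUnit ((s : ℂ) • f) := by
    simpa only [sub_sub_cancel] using isUnit_one_sub_of_norm_lt_one hnorm
  have : Ring.inverse f = (s : ℂ) • Ring.inverse ((s : ℂ) • f) := by
    ext x
    rw [ContinuousMap.smul_apply, ringInverse_apply hfunit, ringInverse_apply hsf,
      ContinuousMap.smul_apply, smul_eq_mul, smul_eq_mul, mul_inv,
      mul_inv_cancel_left₀ hunit.ne_zero]
  exact this ▸ B.smul_mem hinv _

end ClosedSubspaces

section BallAlgebra

variable {n : ℕ}

/-- The ball algebra: the uniform closure on the closed ball of the polynomials in the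
coordinates. -/
noncomputable def ballAlgebra (n : ℕ) : Subalgebra ℂ C(K n, ℂ) :=
  (Algebra.adjoin ℂ (range coord)).topologicalClosure

theorem isClosed_ballAlgebra : IsClosed (ballAlgebra n : Set C(K n, ℂ)) :=
  Subalgebra.isClosed_topologicalClosure _

theorem star_pairing_add_single (w : E n) (i : Fin n) (s : ℂ) :
    star (pairing (w + conj s • EuclideanSpace.single i 1)) = star (pairing w) + s • coord i := by
  ext ζ
  simp [EuclideanSpace.inner_single_right, -inner_conj_symm]

theorem star_pairing (z : E n) : star (pairing z) = ∑ i, conj (z i) • coord i := by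
  ext ζ
  simp [ContinuousMap.sum_apply, PiLp.inner_apply, mul_comm]

theorem star_cauchyKernel (z : E n) :
    star (cauchyKernel z) = Ring.inverse (1 - star (pairing z)) ^ n := by
  rw [cauchyKernel, star_pow, ← Ring.inverse_star, star_sub, star_one]

theorem star_cauchyKernel_mem_ballAlgebra {z : E n} (hz : z ∈ ball 0 1) :
    star (cauchyKernel z) ∈ ballAlgebra n := by
  have hmem : star (pairing z) ∈ ballAlgebra n := star_pairing z ▸
    sum_mem fun i _ ↦ (ballAlgebra n).smul_mem
      (Subalgebra.le_topologicalClosure _ (Algebra.subset_adjoin ⟨i, rfl⟩)) _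
  rw [star_cauchyKernel]
  refine pow_mem (ringInverse_one_sub_mem isClosed_ballAlgebra hmem ?_) n
  exact (norm_star (pairing z)).le.trans_lt
    ((norm_pairing_le z).trans_lt (mem_ball_zero_iff.mp hz))

theorem hasDerivAt_ringInverse_sub_smul_pow {A : Type*} [NormedCommRing A] [NormedAlgebra ℂ A]
    [HasSummableGeomSeries A] {a : A} (ha : IsUnit a) (y : A) (m : ℕ) :
    HasDerivAt (fun s : ℂ ↦ Ring.inverse (a - s • y) ^ (m + 1))
      (((m + 1 : ℕ) : ℂ) • (y * Ring.inverse a ^ (m + 2))) 0 := by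
  obtain ⟨u, rfl⟩ := ha
  have hlin : HasDerivAt (fun s : ℂ ↦ (u : A) - s • y) (-y) 0 := by
    simpa using ((hasDerivAt_id (0 : ℂ)).smul_const y).const_sub (u : A)
  have hinv : HasFDerivAt Ring.inverse
      (-(ContinuousLinearMap.mulLeftRight ℂ A) ↑u⁻¹ ↑u⁻¹) ((u : A) - (0 : ℂ) • y) := by
    simpa using hasFDerivAt_ringInverse (𝕜 := ℂ) u
  have := (hinv.comp_hasDerivAt 0 hlin).fun_pow (m + 1)
  refine this.congr_deriv ?_
  change ((m + 1 : ℕ) : A) * Ring.inverse ((u : A) - (0 : ℂ) • y) ^ m * -(↑u⁻¹ * -y * ↑u⁻¹) = _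
  rw [zero_smul, sub_zero, Ring.inverse_unit, Nat.cast_smul_eq_nsmul, nsmul_eq_mul]
  ring

theorem mul_coord_mul_mem {W : Submodule ℂ C(K n, ℂ)} (hW : IsClosed (W : Set C(K n, ℂ)))
    {g : C(K n, ℂ)} {m : ℕ}
    (h : ∀ w ∈ ball (0 : E n) 1, g * Ring.inverse (1 - star (pairing w)) ^ (m + 1) ∈ W)
    (i : Fin n) {w : E n} (hw : w ∈ ball 0 1) :
    g * coord i * Ring.inverse (1 - star (pairing w)) ^ (m + 2) ∈ W := by
  have hunit : IsUnit (1 - star (pairing w)) := by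
    simpa using (isUnit_one_sub_pairing hw).star
  have hderiv := (hasDerivAt_ringInverse_sub_smul_pow hunit (coord i) m).const_mul g
  have hmem := mem_of_hasDerivAt hW hderiv ?_
  · rw [mul_smul_comm, ← mul_assoc] at hmem
    exact (W.smul_mem_iff (Nat.cast_ne_zero.mpr m.succ_ne_zero)).mp hmem
  · have hcont : Continuous fun s : ℂ ↦ w + conj s • EuclideanSpace.single i (1 : ℂ) := by fun_prop
    have hball : ∀ᶠ s : ℂ in 𝓝 0, w + conj s • EuclideanSpace.single i (1 : ℂ) ∈ ball 0 1 :=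
      hcont.continuousAt.eventually_mem (isOpen_ball.mem_nhds (by simpa using hw))
    refine hball.mono fun s hs ↦ ?_
    have hmem := h _ hs
    rwa [star_pairing_add_single, ← sub_sub] at hmem

theorem mem_of_forall_star_cauchyKernel_mem (hn : 0 < n) {W : Submodule ℂ C(K n, ℂ)}
    (hW : IsClosed (W : Set C(K n, ℂ))) (h : ∀ w ∈ ball (0 : E n) 1, star (cauchyKernel w) ∈ W)
    {q : C(K n, ℂ)} (hq : q ∈ ballAlgebra n) : q ∈ W := by
  -- Differentiating the kernel in `w` multiplies it by coordinates, one factor at a time.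
  have hmonomial : ∀ g ∈ Submonoid.closure (range (coord : Fin n → C(K n, ℂ))), ∃ m : ℕ,
      ∀ w ∈ ball (0 : E n) 1, g * Ring.inverse (1 - star (pairing w)) ^ (m + 1) ∈ W := by
    intro g hg
    induction hg using Submonoid.closure_induction_right with
    | one =>
      refine ⟨n - 1, fun w hw ↦ ?_⟩
      rw [Nat.sub_add_cancel hn, one_mul, ← star_cauchyKernel]
      exact h w hw
    | mul_right g _ y hy ih =>
      obtain ⟨m, hm⟩ := ih
      obtain ⟨i, rfl⟩ := hy
      exact ⟨m + 1, fun w hw ↦ mul_coord_mul_mem hW hm i hw⟩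
  have hadjoin : (Algebra.adjoin ℂ (range (coord : Fin n → C(K n, ℂ))) : Set C(K n, ℂ)) ⊆ W := by
    rw [← Subalgebra.coe_toSubmodule, Algebra.adjoin_eq_span]
    refine Submodule.span_le.mpr fun g hg ↦ ?_
    obtain ⟨m, hm⟩ := hmonomial g hg
    simpa using hm 0 (mem_ball_self one_pos)
  exact closure_minimal hadjoin hW hq

variable [MeasurableSpace (K n)] [BorelSpace (K n)] {Λ : Measure (K n)} [IsProbabilityMeasure Λ]

theorem integralCLM_mul_cauchyKernel (hΛ : IsSphereMeasure Λ) {q : C(K n, ℂ)}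
    (hq : q ∈ ballAlgebra n) {z : K n} (hz : (z : E n) ∈ ball 0 1) :
    integralCLM Λ (q * cauchyKernel z) = q z := by
  set T : C(K n, ℂ) →L[ℂ] ℂ := (integralCLM Λ).comp
    ((ContinuousLinearMap.mul ℂ C(K n, ℂ)).flip (cauchyKernel z)) - ContinuousMap.evalCLM ℂ z
  have hT : ∀ w ∈ ball (0 : E n) 1, star (cauchyKernel w) ∈ T.ker := fun w hw ↦ by
    have h := integralCLM_cauchyKernel_mul_star hΛ hz hw
    rw [mul_comm] at h
    have h' := cauchyKernel_apply hw z
    change integralCLM Λ (star (cauchyKernel w) * cauchyKernel z) - star (cauchyKernel w) z = 0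
    rw [h, ContinuousMap.star_apply, h']
    simp
  exact sub_eq_zero.mp (mem_of_forall_star_cauchyKernel_mem hΛ.pos T.isClosed_ker hT hq)

theorem integralCLM_mul_star_cauchyKernel_mul_cauchyKernel (hΛ : IsSphereMeasure Λ)
    {q : C(K n, ℂ)} (hq : q ∈ ballAlgebra n) {z : K n} (hz : (z : E n) ∈ ball 0 1) :
    integralCLM Λ (q * star (cauchyKernel z) * cauchyKernel z) =
      q z * ((1 - ‖(z : E n)‖ ^ 2 : ℝ) : ℂ)⁻¹ ^ n := by
  rw [integralCLM_mul_cauchyKernel hΛ (mul_mem hq (star_cauchyKernel_mem_ballAlgebra hz)) hz,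
    ContinuousMap.mul_apply, ContinuousMap.star_apply, cauchyKernel_apply hz,
    inner_self_eq_norm_sq_to_K]
  simp

end BallAlgebra

section PoissonKernel

variable {n : ℕ}

/-- The dilation `ζ ↦ t ζ` of the closed ball. -/
noncomputable def dilation (t : unitInterval) : C(K n, K n) where
  toFun ζ := ⟨(t : ℝ) • (ζ : E n), (convex_closedBall 0 1).smul_mem_of_zero_mem
    (mem_closedBall_self zero_le_one) ζ.2 t.2⟩
  continuous_toFun := by fun_prop

@[simp]
theorem coe_dilation_apply (t : unitInterval) (ζ : K n) :
    (dilation t ζ : E n) = (t : ℝ) • (ζ : E n) := rfl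

theorem norm_dilation_of_norm_eq_one (t : unitInterval) {ζ : K n} (hζ : ‖(ζ : E n)‖ = 1) :
    ‖(dilation t ζ : E n)‖ = t := by
  rw [coe_dilation_apply, norm_smul, hζ, mul_one, Real.norm_of_nonneg t.2.1]

theorem dilation_mem_ball {t : unitInterval} (ht : t < 1) (ζ : K n) :
    (dilation t ζ : E n) ∈ ball 0 1 := by
  rw [mem_ball_zero_iff, coe_dilation_apply, norm_smul, Real.norm_of_nonneg t.2.1]
  exact (mul_le_of_le_one_right t.2.1 (norm_coe_le_one ζ)).trans_lt ht

theorem conj_inner_dilation (t : unitInterval) (ζ η : K n) :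
    conj (inner ℂ (ζ : E n) (dilation t η : E n)) = inner ℂ (η : E n) (dilation t ζ : E n) := by
  rw [inner_conj_symm, coe_dilation_apply, coe_dilation_apply, ← coe_smul, ← coe_smul,
    inner_smul_left, inner_smul_right, conj_ofReal]

/-- The Poisson kernel `P(z, ζ) = C(z, ζ) C(ζ, z) / C(z, z)` of the ball. -/
noncomputable def poissonKernel (z ζ : E n) : ℝ :=
  (1 - ‖z‖ ^ 2) ^ n / ‖1 - inner ℂ ζ z‖ ^ (2 * n)

theorem norm_cauchyKernel_sq {z : E n} (hz : z ∈ ball 0 1) (ζ : K n) :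
    ‖cauchyKernel z ζ‖ ^ 2 * (1 - ‖z‖ ^ 2) ^ n = poissonKernel z ζ := by
  rw [cauchyKernel_apply hz, norm_pow, norm_inv, ← pow_mul, inv_pow, mul_comm n 2, inv_mul_eq_div,
    poissonKernel]

theorem poissonKernel_dilation_comm (t : unitInterval) {ζ η : K n} (hζ : ‖(ζ : E n)‖ = 1)
    (hη : ‖(η : E n)‖ = 1) :
    poissonKernel (dilation t ζ : E n) η = poissonKernel (dilation t η : E n) ζ := by
  rw [poissonKernel, poissonKernel, norm_dilation_of_norm_eq_one t hζ,
    norm_dilation_of_norm_eq_one t hη, ← conj_inner_dilation, ← RCLike.norm_conj, map_sub,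
    conj_conj, map_one]

theorem continuous_poissonKernel_dilation {t : unitInterval} (ht : t < 1) :
    Continuous fun p : K n × K n ↦ poissonKernel (dilation t p.1 : E n) p.2 := by
  refine Continuous.div (by fun_prop) (by fun_prop) fun p ↦ pow_ne_zero _ (norm_ne_zero_iff.mpr ?_)
  exact one_sub_inner_ne_zero (dilation_mem_ball ht p.1) p.2.2

variable [MeasurableSpace (K n)] [BorelSpace (K n)] {Λ σ : Measure (K n)} [IsProbabilityMeasure Λ]
  [IsFiniteMeasure σ]

theorem integral_mul_poissonKernel (hΛ : IsSphereMeasure Λ) {q : C(K n, ℂ)} (hq : q ∈ ballAlgebra n)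
    {z : K n} (hz : (z : E n) ∈ ball 0 1) :
    ∫ ζ : K n, q ζ * (poissonKernel (z : E n) ζ : ℂ) ∂Λ = q z := by
  have h := integralCLM_mul_star_cauchyKernel_mul_cauchyKernel hΛ hq hz
  have hne : ((1 - ‖(z : E n)‖ ^ 2 : ℝ) : ℂ) ≠ 0 := by
    have := mem_ball_zero_iff.mp hz
    exact_mod_cast (show 1 - ‖(z : E n)‖ ^ 2 ≠ 0 by nlinarith [norm_nonneg (z : E n)])
  have hpow := pow_ne_zero n hne
  rw [inv_pow, ← div_eq_mul_inv, eq_div_iff hpow, integralCLM_apply, ← integral_mul_const] at h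
  rw [← h]
  refine integral_congr_ae (.of_forall fun ζ ↦ ?_)
  simp only [← norm_cauchyKernel_sq hz, ContinuousMap.mul_apply, ContinuousMap.star_apply,
    mul_assoc, ofReal_mul, ofReal_pow, ← conj_mul', star_def]

theorem integral_comp_dilation (hΛ : IsSphereMeasure Λ) (hσ : ∀ᵐ ζ : K n ∂σ, ‖(ζ : E n)‖ = 1)
    {q : C(K n, ℂ)} (hq : q ∈ ballAlgebra n) {t : unitInterval} (ht : t < 1) :
    ∫ ζ, q (dilation t ζ) ∂σ =
      ∫ η : K n, q η * ((∫ ζ : K n, poissonKernel (dilation t η : E n) ζ ∂σ : ℝ) : ℂ) ∂Λ := by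
  have hint : Integrable (Function.uncurry fun ζ η : K n ↦
      q η * (poissonKernel (dilation t ζ : E n) η : ℂ)) (σ.prod Λ) :=
    integrable_of_compactSpace _ ((q.continuous.comp continuous_snd).mul
      (continuous_ofReal.comp (continuous_poissonKernel_dilation ht)))
  calc ∫ ζ, q (dilation t ζ) ∂σ
      = ∫ ζ, ∫ η : K n, q η * (poissonKernel (dilation t ζ : E n) η : ℂ) ∂Λ ∂σ :=
        integral_congr_ae (.of_forall fun ζ ↦
          (integral_mul_poissonKernel hΛ hq (dilation_mem_ball ht ζ)).symm)
    _ = ∫ η : K n, ∫ ζ, q η * (poissonKernel (dilation t ζ : E n) η : ℂ) ∂σ ∂Λ :=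
        integral_integral_swap hint
    _ = _ := by
        refine integral_congr_ae (hΛ.ae_norm_eq_one.mono fun η hη ↦ ?_)
        dsimp only
        rw [integral_const_mul, ← integral_complex_ofReal]
        congr 1
        refine integral_congr_ae (hσ.mono fun ζ hζ ↦ ?_)
        exact congrArg _ (poissonKernel_dilation_comm t hζ hη)

end PoissonKernel

section ClarkMeasure

variable {n : ℕ} [MeasurableSpace (K n)]

/-- `σ` is the Clark measure `σ_α[b]` of a holomorphic map `b` from the unit ball to the unit disc:
the measure on the sphere with Poisson integral `(1 - |b|²) / |α - b|²`. -/
structure IsClarkMeasure (b : E n → ℂ) (α : ℂ) (σ : Measure (K n)) : Prop where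
  norm_eq_one : ‖α‖ = 1
  differentiableOn : DifferentiableOn ℂ b (ball 0 1)
  mapsTo : MapsTo b (ball 0 1) (ball 0 1)
  ae_norm_eq_one : ∀ᵐ ζ : K n ∂σ, ‖(ζ : E n)‖ = 1
  integral_poissonKernel : ∀ z ∈ ball 0 1,
    ∫ ζ : K n, poissonKernel z ζ ∂σ = (1 - ‖b z‖ ^ 2) / ‖α - b z‖ ^ 2

variable {b : E n → ℂ} {α : ℂ} {σ : Measure (K n)}

theorem IsClarkMeasure.sub_ne_zero (h : IsClarkMeasure b α σ) {z : E n} (hz : z ∈ ball 0 1) :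
    α - b z ≠ 0 := fun h0 ↦ by
  have := mem_ball_zero_iff.mp (h.mapsTo hz)
  rw [← _root_.sub_eq_zero.mp h0, h.norm_eq_one] at this
  exact lt_irrefl _ this

theorem IsClarkMeasure.norm_lt_one (h : IsClarkMeasure b α σ) {t : unitInterval} (ht : t < 1)
    (ζ : K n) : ‖b (dilation t ζ)‖ < 1 :=
  mem_ball_zero_iff.mp (h.mapsTo (dilation_mem_ball ht ζ))

theorem IsClarkMeasure.continuous_dilation (h : IsClarkMeasure b α σ) {t : unitInterval}
    (ht : t < 1) : Continuous fun ζ : K n ↦ b (dilation t ζ) :=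
  h.differentiableOn.continuousOn.comp_continuous (by fun_prop) (dilation_mem_ball ht)

theorem IsClarkMeasure.exists_norm_le_of_dilation (h : IsClarkMeasure b α σ) {z : K n}
    (hz : (z : E n) ∈ ball 0 1) : ∃ ρ < 1, ∀ s < (1 : unitInterval), ‖b (dilation s z)‖ ≤ ρ := by
  have hsub : closedBall (0 : E n) ‖(z : E n)‖ ⊆ ball 0 1 :=
    closedBall_subset_ball (mem_ball_zero_iff.mp hz)
  obtain ⟨w, hw, hmax⟩ := (isCompact_closedBall (0 : E n) ‖(z : E n)‖).exists_isMaxOn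
    ⟨0, mem_closedBall_self (norm_nonneg _)⟩ (h.differentiableOn.continuousOn.mono hsub).norm
  refine ⟨‖b w‖, mem_ball_zero_iff.mp (h.mapsTo (hsub hw)), fun s _ ↦ hmax ?_⟩
  rw [mem_closedBall_zero_iff, coe_dilation_apply, norm_smul, Real.norm_of_nonneg s.2.1]
  exact mul_le_of_le_one_left (norm_nonneg _) s.2.2

variable [BorelSpace (K n)] [IsFiniteMeasure σ]

theorem integralCLM_mul_star_self (f : C(K n, ℂ)) :
    integralCLM σ (f * star f) = ((∫ ζ, ‖f ζ‖ ^ 2 ∂σ : ℝ) : ℂ) := by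
  rw [integralCLM_apply, ← integral_complex_ofReal]
  exact integral_congr_ae (.of_forall fun ζ ↦ (mul_conj' (f ζ)).trans (ofReal_pow _ 2).symm)

namespace IsClarkMeasure

theorem integralCLM_cauchyKernel_mul_star (h : IsClarkMeasure b α σ) {z w : E n}
    (hz : z ∈ ball 0 1) (hw : w ∈ ball 0 1) :
    (α - b z) * conj (α - b w) * integralCLM σ (cauchyKernel z * star (cauchyKernel w)) =
      (1 - b z * conj (b w)) * (1 - inner ℂ w z)⁻¹ ^ n := by
  have hb := SesquiHolomorphicOn.of_differentiableOn_left h.differentiableOn isOpen_ball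
  have hb' := SesquiHolomorphicOn.star_right h.differentiableOn isOpen_ball
  have hαb' := SesquiHolomorphicOn.star_right (h.differentiableOn.const_sub α) isOpen_ball
  have hc := ((SesquiHolomorphicOn.of_differentiableOn_left differentiableOn_cauchyKernel
    isOpen_ball).mul (.star_right differentiableOn_cauchyKernel isOpen_ball)).clm_comp
      (integralCLM σ)
  have hdiff := (((((SesquiHolomorphicOn.const α).sub hb).mul hαb').mul hc).mul
    (((SesquiHolomorphicOn.const 1).sub .inner).pow n)).sub
      ((SesquiHolomorphicOn.const 1).sub (hb.mul hb'))
  have hzero := hdiff.eq_zero_of_diagonal isOpen_ball (convex_ball 0 1) (fun z hz ↦ ?_) hz hw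
  · rw [inv_pow, ← div_eq_mul_inv, eq_div_iff
      (pow_ne_zero n (one_sub_inner_ne_zero hz (ball_subset_closedBall hw)))]
    exact _root_.sub_eq_zero.mp hzero
  · have hpoisson : (∫ ζ, ‖cauchyKernel z ζ‖ ^ 2 ∂σ) * (1 - ‖z‖ ^ 2) ^ n =
        (1 - ‖b z‖ ^ 2) / ‖α - b z‖ ^ 2 := by
      rw [← integral_mul_const, ← h.integral_poissonKernel z hz]
      exact integral_congr_ae (.of_forall fun ζ ↦ norm_cauchyKernel_sq hz ζ)
    rw [eq_div_iff (by simpa using h.sub_ne_zero hz)] at hpoisson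
    have hpoisson' := congrArg ((↑) : ℝ → ℂ) hpoisson
    push_cast at hpoisson'
    rw [integralCLM_mul_star_self, star_def, mul_conj', mul_conj', inner_self_eq_norm_sq_to_K]
    change _ * (1 - (‖z‖ : ℂ) ^ 2) ^ n - _ = 0
    linear_combination hpoisson'

theorem integralCLM_cauchyKernel (h : IsClarkMeasure b α σ) {z : E n} (hz : z ∈ ball 0 1) :
    integralCLM σ (cauchyKernel z) = (1 - conj α * b z)⁻¹ + conj (b 0) / conj (α - b 0) := by
  have h0 : (0 : E n) ∈ ball 0 1 := mem_ball_self one_pos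
  have hkernel := h.integralCLM_cauchyKernel_mul_star hz h0
  simp only [cauchyKernel_zero, star_one, mul_one, inner_zero_left, sub_zero, inv_one,
    one_pow] at hkernel
  have hα : conj α * α = 1 := by rw [conj_mul', h.norm_eq_one]; simp
  have hz0 := h.sub_ne_zero hz
  have hα0 : α ≠ 0 := right_ne_zero_of_mul_eq_one hα
  have hconj : conj (α - b 0) ≠ 0 := (map_ne_zero _).mpr (h.sub_ne_zero h0)
  have hinv : (1 - conj α * b z)⁻¹ = α / (α - b z) := by
    rw [inv_eq_iff_eq_inv, inv_div, eq_div_iff hα0]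
    linear_combination (-b z) * hα
  rw [hinv, div_add_div _ _ hz0 hconj, eq_div_iff (mul_ne_zero hz0 hconj), mul_comm, hkernel,
    map_sub]
  linear_combination -hα

end IsClarkMeasure

theorem exists_mem_ballAlgebra_integralCLM_cauchyKernel (σ : Measure (K n)) [IsFiniteMeasure σ]
    {t : unitInterval} (ht : t < 1) :
    ∃ f ∈ ballAlgebra n, ∀ ζ : K n, f ζ = integralCLM σ (cauchyKernel (dilation t ζ : E n)) := by
  have hcont : Continuous fun ζ : K n ↦ star (cauchyKernel (dilation t ζ : E n)) :=
    continuous_star.comp <| differentiableOn_cauchyKernel.continuousOn.comp_continuous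
      (by fun_prop) (dilation_mem_ball ht)
  refine ⟨∫ ζ : K n, star (cauchyKernel (dilation t ζ : E n)) ∂σ,
    integral_mem_of_forall_mem (W := Subalgebra.toSubmodule (ballAlgebra n)) isClosed_ballAlgebra σ
      hcont fun ζ ↦ star_cauchyKernel_mem_ballAlgebra (dilation_mem_ball ht ζ), fun ζ ↦ ?_⟩
  have heval := (ContinuousMap.evalCLM ℂ ζ).integral_comp_comm (integrable_of_compactSpace σ hcont)
  refine heval.symm.trans (integral_congr_ae (.of_forall fun η ↦ ?_))
  change conj (cauchyKernel (dilation t η : E n) ζ) = _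
  rw [cauchyKernel_apply (dilation_mem_ball ht η), cauchyKernel_apply (dilation_mem_ball ht ζ),
    map_pow, map_inv₀, map_sub, map_one, conj_inner_dilation]

theorem half_le_re_inv_one_sub {x : ℂ} (hx : ‖x‖ < 1) : 1 / 2 ≤ (1 - x)⁻¹.re := by
  have hx1 : 1 - x ≠ 0 := sub_ne_zero.mpr fun h ↦ by simp [← h] at hx
  have hsq := sq_lt_one_iff₀ (norm_nonneg x) |>.mpr hx
  rw [← normSq_eq_norm_sq, normSq_apply] at hsq
  rw [inv_re, le_div_iff₀ (normSq_pos.mpr hx1), normSq_apply, sub_re, sub_im, one_re, one_im]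
  linarith

theorem IsClarkMeasure.exists_mem_ballAlgebra (h : IsClarkMeasure b α σ) {t : unitInterval}
    (ht : t < 1) : ∃ f ∈ ballAlgebra n, ∀ ζ : K n, f ζ = conj α * b (dilation t ζ) := by
  obtain ⟨f, hf, hfζ⟩ := exists_mem_ballAlgebra_integralCLM_cauchyKernel σ ht
  set κ := conj (b 0) / conj (α - b 0)
  have hg (ζ : K n) : (f - algebraMap ℂ C(K n, ℂ) κ) ζ = (1 - conj α * b (dilation t ζ))⁻¹ := by
    rw [ContinuousMap.sub_apply, hfζ, h.integralCLM_cauchyKernel (dilation_mem_ball ht ζ)]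
    exact add_sub_cancel_right _ _
  have hre (ζ : K n) : 1 / 2 ≤ ((f - algebraMap ℂ C(K n, ℂ) κ) ζ).re := by
    rw [hg]
    refine half_le_re_inv_one_sub ?_
    rw [norm_mul, RCLike.norm_conj, h.norm_eq_one, one_mul]
    exact mem_ball_zero_iff.mp (h.mapsTo (dilation_mem_ball ht ζ))
  have hunit : IsUnit (f - algebraMap ℂ C(K n, ℂ) κ) :=
    (ContinuousMap.isUnit_iff_forall_ne_zero _).mpr fun ζ hζ ↦ by
      have := hre ζ
      rw [hζ] at this
      norm_num at this
  refine ⟨1 - Ring.inverse (f - algebraMap ℂ C(K n, ℂ) κ), sub_mem (one_mem _)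
    (ringInverse_mem_of_le_re isClosed_ballAlgebra (sub_mem hf (algebraMap_mem _ κ)) one_half_pos
      hre), fun ζ ↦ ?_⟩
  rw [ContinuousMap.sub_apply, ContinuousMap.one_apply, ringInverse_apply hunit, hg, inv_inv,
    sub_sub_cancel]

end ClarkMeasure

section InnerFunction

theorem natCast_mul_one_sub_eq {R : Type*} [CommRing R] (x : R) (N : ℕ) :
    N * (1 - x) = 1 - x ^ N +
      (1 - x) ^ 2 * ∑ m ∈ Finset.range N, ∑ l ∈ Finset.range m, x ^ l := by
  have hinner (m : ℕ) : (1 - x) * ∑ l ∈ Finset.range m, x ^ l = 1 - x ^ m := mul_neg_geom_sum x m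
  rw [sq, mul_assoc, Finset.mul_sum]
  simp only [hinner, Finset.sum_sub_distrib, Finset.sum_const, Finset.card_range, nsmul_one]
  linear_combination hinner N

theorem norm_sum_sum_pow_le {R : Type*} [NormedRing R] [NormOneClass R] {x : R} (hx : ‖x‖ ≤ 1)
    (N : ℕ) : ‖∑ m ∈ Finset.range N, ∑ l ∈ Finset.range m, x ^ l‖ ≤ N ^ 2 := by
  have hgeom (m : ℕ) : ‖∑ l ∈ Finset.range m, x ^ l‖ ≤ m := by
    simpa using norm_sum_le_of_le (Finset.range m) fun l _ ↦
      (norm_pow_le x l).trans (pow_le_one₀ (norm_nonneg x) hx)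
  refine (norm_sum_le_of_le (Finset.range N) (n := fun _ ↦ (N : ℝ)) fun m hm ↦
    (hgeom m).trans (mod_cast (Finset.mem_range.mp hm).le)).trans ?_
  simp [sq]

theorem norm_one_sub_pow_le {R : Type*} [NormedCommRing R] [NormOneClass R] {x : R} (hx : ‖x‖ ≤ 1)
    (N : ℕ) : ‖1 - x ^ N‖ ≤ N * ‖1 - x‖ := by
  rw [← mul_neg_geom_sum, mul_comm (N : ℝ)]
  refine (norm_mul_le _ _).trans (mul_le_mul_of_nonneg_left ?_ (norm_nonneg _))
  simpa using norm_sum_le_of_le (Finset.range N) fun l _ ↦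
    (norm_pow_le x l).trans (pow_le_one₀ (norm_nonneg x) hx)

theorem norm_one_sub_sq_le_two_mul_re {x : ℂ} (hx : ‖x‖ ≤ 1) :
    ‖1 - x‖ ^ 2 ≤ 2 * (1 - x).re := by
  have hsq := pow_le_one₀ (norm_nonneg x) hx (n := 2)
  rw [← normSq_eq_norm_sq, normSq_apply] at hsq ⊢
  rw [sub_re, sub_im, one_re, one_im]
  linarith

theorem ae_tendsto_zero_of_tsum_lintegral_ne_top {X : Type*} [MeasurableSpace X] {ρ : Measure X}
    {g : ℕ → X → ℝ≥0∞} (hg : ∀ m, AEMeasurable (g m) ρ) (h : ∑' m, ∫⁻ x, g m x ∂ρ ≠ ⊤) :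
    ∀ᵐ x ∂ρ, Tendsto (g · x) atTop (𝓝 0) := by
  rw [← lintegral_tsum hg] at h
  filter_upwards [ae_lt_top' (.tsum hg) h] with x hx
  exact ENNReal.tendsto_atTop_zero_of_tsum_ne_top hx.ne

variable {n : ℕ} [MeasurableSpace (K n)]

/-- `b` is inner: its radial limits have modulus one almost everywhere. Only the moduli are
required to converge. -/
def IsInner (Λ : Measure (K n)) (b : E n → ℂ) : Prop :=
  ∀ᵐ ζ : K n ∂Λ, Tendsto (fun t : unitInterval ↦ ‖b (dilation t ζ)‖) (𝓝[<] 1) (𝓝 1)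

variable [BorelSpace (K n)] {Λ σ : Measure (K n)} [IsProbabilityMeasure Λ]
  {b : E n → ℂ} {α : ℂ}

namespace IsClarkMeasure

theorem tendsto_integral_one_sub_norm_sq (h : IsClarkMeasure b α σ) (hb : IsInner Λ b) :
    Tendsto (fun t : unitInterval ↦ ∫ η : K n, 1 - ‖b (dilation t η)‖ ^ 2 ∂Λ) (𝓝[<] 1) (𝓝 0) := by
  have hlim := tendsto_integral_filter_of_dominated_convergence (μ := Λ) (l := 𝓝[<] 1)
    (F := fun (t : unitInterval) (η : K n) ↦ 1 - ‖b (dilation t η)‖ ^ 2) (f := fun _ ↦ 0)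
    (fun _ ↦ 1) ?_ ?_ (integrable_const 1) (hb.mono fun η hη ↦ ?_)
  · simpa using hlim
  · filter_upwards [self_mem_nhdsWithin] with t ht
    exact (continuous_const.sub ((h.continuous_dilation ht).norm.pow 2)).aestronglyMeasurable
  · filter_upwards [self_mem_nhdsWithin] with t ht
    refine .of_forall fun η ↦ ?_
    have := pow_le_one₀ (norm_nonneg _) (h.norm_lt_one ht η).le (n := 2)
    rw [Real.norm_of_nonneg (sub_nonneg.mpr this)]
    exact sub_le_self 1 (sq_nonneg _)
  · simpa using (hη.pow 2).const_sub 1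

variable [IsFiniteMeasure σ]

theorem norm_integral_one_sub_sq_mul_le (h : IsClarkMeasure b α σ) (hΛ : IsSphereMeasure Λ)
    {t : unitInterval} (ht : t < 1) {f g : C(K n, ℂ)} (hf : f ∈ ballAlgebra n)
    (hfb : ∀ ζ : K n, f ζ = conj α * b (dilation t ζ)) (hg : g ∈ ballAlgebra n) :
    ‖∫ ζ, ((1 - f) ^ 2 * g : C(K n, ℂ)) (dilation t ζ) ∂σ‖ ≤
      ‖g‖ * ∫ η : K n, 1 - ‖b (dilation t η)‖ ^ 2 ∂Λ := by
  rw [integral_comp_dilation hΛ h.ae_norm_eq_one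
    (mul_mem (pow_mem (sub_mem (one_mem _) hf) 2) hg) ht, ← integral_const_mul]
  refine norm_integral_le_of_norm_le (integrable_of_compactSpace Λ
    (continuous_const.mul (continuous_const.sub ((h.continuous_dilation ht).norm.pow 2))))
    (.of_forall fun η ↦ ?_)
  have hball := dilation_mem_ball ht η
  have hα : ‖1 - f η‖ = ‖α - b (dilation t η)‖ := by
    rw [hfb, ← one_mul ‖1 - _‖, ← h.norm_eq_one, ← norm_mul, mul_sub, ← mul_assoc, mul_conj',
      h.norm_eq_one]
    simp
  have hnonneg : 0 ≤ 1 - ‖b (dilation t η)‖ ^ 2 :=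
    sub_nonneg.mpr (pow_le_one₀ (norm_nonneg _) (h.norm_lt_one ht η).le)
  have hne : ‖α - b (dilation t η)‖ ^ 2 ≠ 0 := by simpa using h.sub_ne_zero hball
  rw [h.integral_poissonKernel _ hball, norm_mul, norm_real, Real.norm_of_nonneg (by positivity),
    ContinuousMap.mul_apply, ContinuousMap.pow_apply, norm_mul, norm_pow, ContinuousMap.sub_apply,
    ContinuousMap.one_apply, hα, mul_right_comm, mul_div_cancel₀ _ hne, mul_comm]
  exact mul_le_mul_of_nonneg_right (g.norm_coe_le_norm η) hnonneg

theorem norm_integral_one_sub_le (h : IsClarkMeasure b α σ) (hΛ : IsSphereMeasure Λ)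
    {t : unitInterval} (ht : t < 1) {N : ℕ} (hN : 0 < N) :
    ‖∫ ζ : K n, 1 - conj α * b (dilation (t * t) ζ) ∂σ‖ ≤
      2 * σ.real univ / N + N * ∫ η : K n, 1 - ‖b (dilation t η)‖ ^ 2 ∂Λ := by
  obtain ⟨f, hf, hfb⟩ := h.exists_mem_ballAlgebra ht
  set ε := ∫ η : K n, 1 - ‖b (dilation t η)‖ ^ 2 ∂Λ
  set g := ∑ m ∈ Finset.range N, ∑ l ∈ Finset.range m, f ^ l
  have hf1 : ‖f‖ ≤ 1 := (ContinuousMap.norm_le _ zero_le_one).mpr fun ζ ↦ by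
    simpa [hfb, h.norm_eq_one] using (h.norm_lt_one ht ζ).le
  have hg : g ∈ ballAlgebra n := sum_mem fun _ _ ↦ sum_mem fun l _ ↦ pow_mem hf l
  have hcomp (ζ : K n) : (1 - f) (dilation t ζ) = 1 - conj α * b (dilation (t * t) ζ) := by
    rw [ContinuousMap.sub_apply, hfb]
    simp [mul_smul]
  have hsplit : N * ∫ ζ, (1 - f) (dilation t ζ) ∂σ = ∫ ζ, (1 - f ^ N) (dilation t ζ) ∂σ +
      ∫ ζ, ((1 - f) ^ 2 * g : C(K n, ℂ)) (dilation t ζ) ∂σ := by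
    rw [← integral_const_mul, ← integral_add (integrable_of_compactSpace σ (by fun_prop))
      (integrable_of_compactSpace σ (by fun_prop))]
    refine integral_congr_ae (.of_forall fun ζ ↦ ?_)
    simpa [g] using congrArg (fun k : C(K n, ℂ) ↦ k (dilation t ζ)) (natCast_mul_one_sub_eq f N)
  have hfirst : ‖∫ ζ, (1 - f ^ N) (dilation t ζ) ∂σ‖ ≤ 2 * σ.real univ :=
    norm_integral_le_of_norm_le_const <| .of_forall fun ζ ↦
      ((1 - f ^ N).norm_coe_le_norm _).trans <| (norm_sub_le _ _).trans <| by
        have := (norm_pow_le f N).trans (pow_le_one₀ (norm_nonneg f) hf1)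
        linarith [(norm_one : ‖(1 : C(K n, ℂ))‖ = 1)]
  have hε : 0 ≤ ε := integral_nonneg fun η ↦
    sub_nonneg.mpr (pow_le_one₀ (norm_nonneg _) (h.norm_lt_one ht η).le)
  have hsecond : ‖∫ ζ, ((1 - f) ^ 2 * g : C(K n, ℂ)) (dilation t ζ) ∂σ‖ ≤ N ^ 2 * ε :=
    (h.norm_integral_one_sub_sq_mul_le hΛ ht hf hfb hg).trans
      (mul_le_mul_of_nonneg_right (norm_sum_sum_pow_le hf1 N) hε)
  have hN' : (0 : ℝ) < N := mod_cast hN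
  simp only [← hcomp]
  refine le_of_mul_le_mul_left ?_ hN'
  calc N * ‖∫ ζ, (1 - f) (dilation t ζ) ∂σ‖ = ‖N * ∫ ζ, (1 - f) (dilation t ζ) ∂σ‖ := by simp
    _ ≤ 2 * σ.real univ + N ^ 2 * ε := hsplit ▸ norm_add_le_of_le hfirst hsecond
    _ = N * (2 * σ.real univ / N + N * ε) := by field_simp

theorem exists_integral_norm_one_sub_sq_le (h : IsClarkMeasure b α σ) (hΛ : IsSphereMeasure Λ)
    (hb : IsInner Λ b) {ε : ℝ} (hε : 0 < ε) :
    ∃ s < (1 : unitInterval), ∫ ζ : K n, ‖1 - conj α * b (dilation s ζ)‖ ^ 2 ∂σ ≤ ε := by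
  obtain ⟨N, hN⟩ := exists_nat_gt (8 * σ.real univ / ε)
  have hN0 : (0 : ℝ) < N := lt_of_le_of_lt (by positivity) hN
  have hfirst : 2 * σ.real univ / N ≤ ε / 4 := by
    rw [div_le_iff₀ hN0]
    rw [div_lt_iff₀ hε] at hN
    linarith
  have := nhdsLT_neBot_of_exists_lt ⟨(0 : unitInterval), zero_lt_one⟩
  obtain ⟨t, htε, ht⟩ := (((h.tendsto_integral_one_sub_norm_sq hb).eventually_le_const
    (show 0 < ε / 4 / N by positivity)).and self_mem_nhdsWithin).exists
  have ht' : t * t < 1 := mul_lt_one_of_nonneg_of_lt_one_left bot_le ht ht.le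
  have hcont : Continuous fun ζ : K n ↦ 1 - conj α * b (dilation (t * t) ζ) :=
    continuous_const.sub (continuous_const.mul (h.continuous_dilation ht'))
  refine ⟨t * t, ht', ?_⟩
  calc ∫ ζ : K n, ‖1 - conj α * b (dilation (t * t) ζ)‖ ^ 2 ∂σ
      ≤ ∫ ζ : K n, 2 * (1 - conj α * b (dilation (t * t) ζ)).re ∂σ :=
        integral_mono (integrable_of_compactSpace σ (hcont.norm.pow 2))
          (integrable_of_compactSpace σ (continuous_const.mul (continuous_re.comp hcont))) fun ζ ↦
            norm_one_sub_sq_le_two_mul_re (by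
              simpa [h.norm_eq_one] using (h.norm_lt_one ht' ζ).le)
    _ = 2 * (∫ ζ : K n, 1 - conj α * b (dilation (t * t) ζ) ∂σ).re := by
        rw [integral_const_mul]
        exact congrArg _ (integral_re (integrable_of_compactSpace σ hcont))
    _ ≤ 2 * (2 * σ.real univ / N + N * ∫ η : K n, 1 - ‖b (dilation t η)‖ ^ 2 ∂Λ) :=
        mul_le_mul_of_nonneg_left ((re_le_norm _).trans
          (h.norm_integral_one_sub_le hΛ ht (mod_cast hN0))) zero_le_two
    _ ≤ 2 * (ε / 4 + ε / 4) := by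
        gcongr
        rw [← le_div_iff₀' hN0]
        exact htε
    _ = ε := by ring

theorem exists_mem_ballAlgebra_lintegral_enorm_one_sub_pow_sq_le (h : IsClarkMeasure b α σ)
    (hΛ : IsSphereMeasure Λ) (hb : IsInner Λ b) (N : ℕ) {δ : ℝ≥0∞} (hδ : 0 < δ) :
    ∃ f ∈ ballAlgebra n, (∃ s < (1 : unitInterval), ∀ ζ : K n, f ζ = conj α * b (dilation s ζ)) ∧
      ∫⁻ ζ, ‖1 - f ζ ^ N‖ₑ ^ 2 ∂σ ≤ δ := by
  obtain ⟨r, hr, hrδ⟩ := ENNReal.lt_iff_exists_nnreal_btwn.mp hδ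
  have hr : (0 : ℝ) < r := by simpa using hr
  obtain ⟨s, hs, hsε⟩ := h.exists_integral_norm_one_sub_sq_le hΛ hb
    (show 0 < r / ((N : ℝ) ^ 2 + 1) by positivity)
  obtain ⟨f, hf, hfb⟩ := h.exists_mem_ballAlgebra hs
  refine ⟨f, hf, ⟨s, hs, hfb⟩, le_trans ?_ hrδ.le⟩
  simp only [← hfb] at hsε
  have hreal : ∫ ζ, ‖1 - f ζ ^ N‖ ^ 2 ∂σ ≤ r := calc
    ∫ ζ, ‖1 - f ζ ^ N‖ ^ 2 ∂σ ≤ ∫ ζ, (N : ℝ) ^ 2 * ‖1 - f ζ‖ ^ 2 ∂σ :=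
      integral_mono (integrable_of_compactSpace σ (by fun_prop))
        (integrable_of_compactSpace σ (by fun_prop)) fun ζ ↦ by
          rw [← mul_pow]
          refine pow_le_pow_left₀ (norm_nonneg _) (norm_one_sub_pow_le ?_ N) 2
          simpa [hfb, h.norm_eq_one] using (h.norm_lt_one hs ζ).le
    _ ≤ (N : ℝ) ^ 2 * (r / ((N : ℝ) ^ 2 + 1)) := by
      rw [integral_const_mul]
      gcongr
    _ ≤ r := by
      rw [mul_div_left_comm]
      exact mul_le_of_le_one_right hr.le (div_le_one_of_le₀ (by linarith) (by positivity))
  have hint : Integrable (fun ζ ↦ ‖1 - f ζ ^ N‖ ^ 2) σ :=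
    integrable_of_compactSpace σ (by fun_prop)
  calc ∫⁻ ζ, ‖1 - f ζ ^ N‖ₑ ^ 2 ∂σ = ENNReal.ofReal (∫ ζ, ‖1 - f ζ ^ N‖ ^ 2 ∂σ) := by
        rw [ofReal_integral_eq_lintegral_ofReal hint (.of_forall fun ζ ↦ sq_nonneg _)]
        simp only [ENNReal.ofReal_pow (norm_nonneg _), ofReal_norm]
    _ ≤ r := by
        rw [← ENNReal.ofReal_coe_nnreal]
        exact ENNReal.ofReal_le_ofReal hreal

theorem exists_seq_mem_ballAlgebra (h : IsClarkMeasure b α σ) (hΛ : IsSphereMeasure Λ)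
    (hb : IsInner Λ b) : ∃ f : ℕ → C(K n, ℂ), (∀ m, f m ∈ ballAlgebra n) ∧ (∀ m, ‖f m‖ ≤ 1) ∧
      (∀ z : K n, (z : E n) ∈ ball 0 1 → Tendsto (f · z) atTop (𝓝 0)) ∧
      ∀ᵐ ζ ∂σ, Tendsto (f · ζ) atTop (𝓝 1) := by
  obtain ⟨δ, hδ, hδsum⟩ := ENNReal.exists_pos_sum_of_countable' one_ne_zero ℕ
  choose f hf hfb hfδ using fun m ↦
    h.exists_mem_ballAlgebra_lintegral_enorm_one_sub_pow_sq_le hΛ hb m (hδ m)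
  choose s hs hfb using hfb
  have hnorm (m : ℕ) (ζ : K n) : ‖f m ζ‖ = ‖b (dilation (s m) ζ)‖ := by
    simp [hfb, h.norm_eq_one]
  refine ⟨fun m ↦ f m ^ m, fun m ↦ pow_mem (hf m) m, fun m ↦ ?_, fun z hz ↦ ?_, ?_⟩
  · refine (norm_pow_le _ _).trans (pow_le_one₀ (norm_nonneg _)
      ((ContinuousMap.norm_le _ zero_le_one).mpr fun ζ ↦ ?_))
    exact hnorm m ζ ▸ (h.norm_lt_one (hs m) ζ).le
  · obtain ⟨ρ, hρ, hle⟩ := h.exists_norm_le_of_dilation hz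
    have hρ0 : 0 ≤ ρ := (norm_nonneg _).trans (hle 0 zero_lt_one)
    refine squeeze_zero_norm (fun m ↦ ?_) (tendsto_pow_atTop_nhds_zero_of_lt_one hρ0 hρ)
    rw [ContinuousMap.pow_apply, norm_pow, hnorm]
    exact pow_le_pow_left₀ (norm_nonneg _) (hle _ (hs m)) m
  · have htsum : ∑' m, ∫⁻ ζ, ‖1 - f m ζ ^ m‖ₑ ^ 2 ∂σ ≠ ⊤ :=
      ((ENNReal.tsum_le_tsum hfδ).trans_lt (hδsum.trans_le le_top)).ne
    filter_upwards [ae_tendsto_zero_of_tsum_lintegral_ne_top (fun m ↦ by fun_prop) htsum] with ζ hζ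
    have hsub : Tendsto (fun m ↦ 1 - f m ζ ^ m) atTop (𝓝 0) := by
      rw [tendsto_zero_iff_enorm_tendsto_zero]
      refine (ENNReal.zero_rpow_of_pos (by norm_num : (0 : ℝ) < ((2 : ℕ) : ℝ)⁻¹)) ▸
        (hζ.ennrpow_const ((2 : ℕ) : ℝ)⁻¹).congr fun m ↦ ?_
      exact ENNReal.pow_rpow_inv_natCast two_ne_zero _
    simpa using hsub.const_sub 1

end IsClarkMeasure

end InnerFunction

section CauchyEstimates

theorem norm_smul_add_smul_sub_inner_smul_sq_le {V : Type*} [NormedAddCommGroup V]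
    [InnerProductSpace ℂ V] {z e : V} (hz : ‖z‖ = 1) (he : ‖e‖ = 1) (t s : ℂ) :
    ‖t • z + s • (e - inner ℂ z e • z)‖ ^ 2 ≤ ‖t‖ ^ 2 + ‖s‖ ^ 2 := by
  set τ := e - inner ℂ z e • z with hτ
  have horth : inner ℂ z τ = 0 := by
    rw [hτ, inner_sub_right, inner_smul_right, inner_self_eq_norm_sq_to_K, hz]
    simp
  have pythagoras (a c : ℂ) : ‖a • z + c • τ‖ ^ 2 = ‖a‖ ^ 2 + ‖c‖ ^ 2 * ‖τ‖ ^ 2 := by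
    rw [@norm_add_sq ℂ, inner_smul_left, inner_smul_right, horth, norm_smul, norm_smul, hz]
    simp [mul_pow]
  have hτ1 : ‖τ‖ ^ 2 ≤ 1 := by
    have := pythagoras (inner ℂ z e) 1
    rw [one_smul, hτ, add_sub_cancel, ← hτ, he, norm_one] at this
    nlinarith [sq_nonneg ‖(inner ℂ z e : ℂ)‖]
  rw [pythagoras]
  gcongr
  exact mul_le_of_le_one_right (sq_nonneg _) hτ1

variable {V : Type*} [NormedAddCommGroup V] [NormedSpace ℂ V]

theorem hasDerivAt_comp_add_smul {F : V → ℂ} (hF : Differentiable ℂ F) (z v : V)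
    (s : ℂ) : HasDerivAt (fun s : ℂ ↦ F (z + s • v)) (fderiv ℂ F (z + s • v) v) s := by
  have hline : HasDerivAt (fun s : ℂ ↦ z + s • v) v s := by
    simpa using ((hasDerivAt_id s).smul_const v).const_add z
  exact (hF _).hasFDerivAt.comp_hasDerivAt s hline

theorem norm_fderiv_apply_le_div {F : V → ℂ} (hF : Differentiable ℂ F) {z v : V} {R C : ℝ}
    (hR : 0 < R) (hC : ∀ s : ℂ, ‖s‖ = R → ‖F (z + s • v)‖ ≤ C) : ‖fderiv ℂ F z v‖ ≤ C / R := by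
  have hderiv := hasDerivAt_comp_add_smul hF z v
  have h0 := (hderiv 0).deriv
  rw [zero_smul, add_zero] at h0
  rw [← h0]
  exact norm_deriv_le_of_forall_mem_sphere_norm_le hR
    (Differentiable.diffContOnCl fun s ↦ (hderiv s).differentiableAt)
    fun s hs ↦ hC s (mem_sphere_zero_iff_norm.mp hs)

/-- A sequence of functions that is uniformly bounded on the closed unit ball and tends to zero
pointwise in the open unit ball. -/
structure IsBoundedNull (F : ℕ → V → ℂ) : Prop where
  exists_norm_le : ∃ M, ∀ j, ∀ z, ‖z‖ ≤ 1 → ‖F j z‖ ≤ M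
  tendsto_zero : ∀ z ∈ ball (0 : V) 1, Tendsto (F · z) atTop (𝓝 0)

theorem tendsto_deriv_of_forall_sphere {g : ℕ → ℂ → ℂ} (hg : ∀ j, Differentiable ℂ (g j)) {c : ℂ}
    {R M : ℝ} (hR : 0 < R) (hM : ∀ j, ∀ s ∈ sphere c R, ‖g j s‖ ≤ M)
    (hlim : ∀ s ∈ sphere c R, Tendsto (g · s) atTop (𝓝 0)) :
    Tendsto (fun j ↦ deriv (g j) c) atTop (𝓝 0) := by
  have hcauchy (j : ℕ) : (2 * Real.pi * Complex.I : ℂ)⁻¹ •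
      (∮ s in C(c, R), ((s - c) ^ 2)⁻¹ • g j s) = deriv (g j) c :=
    two_pi_I_inv_smul_circleIntegral_sub_sq_inv_smul_of_differentiable isOpen_univ (subset_univ _)
      (hg j).differentiableOn (mem_ball_self hR)
  have hmem (θ : ℝ) : circleMap c R θ ∈ sphere c R := circleMap_mem_sphere c hR.le θ
  have hnorm (j : ℕ) (θ : ℝ) : ‖deriv (circleMap c R) θ •
      (((circleMap c R θ - c) ^ 2)⁻¹ • g j (circleMap c R θ))‖ ≤ R * ((R ^ 2)⁻¹ * M) := by
    rw [norm_smul, norm_smul, deriv_circleMap, norm_mul, norm_I, mul_one, norm_circleMap_zero,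
      abs_of_pos hR, norm_inv, norm_pow, circleMap_sub_center, norm_circleMap_zero, abs_of_pos hR]
    gcongr
    exact hM j _ (hmem θ)
  have hcont (j : ℕ) : Continuous fun θ ↦ deriv (circleMap c R) θ •
      (((circleMap c R θ - c) ^ 2)⁻¹ • g j (circleMap c R θ)) := by
    have hne (θ : ℝ) : (circleMap c R θ - c) ^ 2 ≠ 0 :=
      pow_ne_zero 2 (sub_ne_zero.mpr (circleMap_ne_center hR.ne'))
    have := (hg j).continuous
    simp only [deriv_circleMap]
    fun_prop (disch := exact hne _)
  have hint : Tendsto (fun j ↦ ∮ s in C(c, R), ((s - c) ^ 2)⁻¹ • g j s) atTop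
      (𝓝 (∫ _ in 0..2 * Real.pi, (0 : ℂ))) :=
    intervalIntegral.tendsto_integral_filter_of_dominated_convergence (fun _ ↦ R * ((R ^ 2)⁻¹ * M))
      (.of_forall fun j ↦ (hcont j).aestronglyMeasurable)
      (.of_forall fun j ↦ .of_forall fun θ _ ↦ hnorm j θ) intervalIntegrable_const
      (.of_forall fun θ _ ↦ by
        simpa using ((hlim _ (hmem θ)).const_smul ((circleMap c R θ - c) ^ 2)⁻¹).const_smul
          (deriv (circleMap c R) θ))
  simpa [← hcauchy] using hint.const_smul (2 * Real.pi * Complex.I : ℂ)⁻¹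

theorem IsBoundedNull.tendsto_fderiv_apply {F : ℕ → V → ℂ} (hF : IsBoundedNull F)
    (hd : ∀ j, Differentiable ℂ (F j)) {z : V} (hz : z ∈ ball 0 1) (v : V) :
    Tendsto (fun j ↦ fderiv ℂ (F j) z v) atTop (𝓝 0) := by
  obtain ⟨M, hM⟩ := hF.exists_norm_le
  obtain ⟨R, hR, hball⟩ : ∃ R > 0, closedBall 0 R ⊆ {s : ℂ | z + s • v ∈ ball 0 1} := by
    have hopen : IsOpen {s : ℂ | z + s • v ∈ ball 0 1} := isOpen_ball.preimage (by fun_prop)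
    exact nhds_basis_closedBall.mem_iff.mp (hopen.mem_nhds (by simpa using hz))
  have hsphere (s : ℂ) (hs : s ∈ sphere 0 R) : z + s • v ∈ ball 0 1 :=
    hball (sphere_subset_closedBall hs)
  have hline (j : ℕ) := hasDerivAt_comp_add_smul (hd j) z v
  have hderiv (j : ℕ) : deriv (fun s : ℂ ↦ F j (z + s • v)) 0 = fderiv ℂ (F j) z v := by
    simpa using (hline j 0).deriv
  simp only [← hderiv]
  exact tendsto_deriv_of_forall_sphere (fun j s ↦ (hline j s).differentiableAt) hR
    (fun j s hs ↦ hM j _ (mem_ball_zero_iff.mp (hsphere s hs)).le)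
    fun s hs ↦ hF.tendsto_zero _ (hsphere s hs)

end CauchyEstimates

section RadialMean

variable {V : Type*} [NormedAddCommGroup V] [NormedSpace ℂ V]

/-- The radial mean `∫₀¹ ∂F(tz)/∂v dt` of the derivative of `F` in the direction `v`. -/
noncomputable def radialMean (v : V) (F : V → ℂ) (z : V) : ℂ :=
  ∫ t in (0 : ℝ)..1, fderiv ℂ F ((t : ℂ) • z) v

variable {F : V → ℂ}

theorem intervalIntegrable_fderiv_smul (hF : ContDiff ℂ 1 F) (z v : V) (a b : ℝ) :
    IntervalIntegrable (fun t : ℝ ↦ fderiv ℂ F ((t : ℂ) • z) v) volume a b :=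
  (((hF.continuous_fderiv one_ne_zero).comp (by fun_prop)).clm_apply
    continuous_const).intervalIntegrable _ _

theorem radialMean_self (hF : ContDiff ℂ 1 F) (z : V) : radialMean z F z = F z - F 0 := by
  have hderiv (t : ℝ) :
      HasDerivAt (fun t : ℝ ↦ F ((t : ℂ) • z)) (fderiv ℂ F ((t : ℂ) • z) z) t := by
    simpa using (hasDerivAt_comp_add_smul (hF.differentiable one_ne_zero) 0 z t).comp_ofReal
  rw [radialMean, intervalIntegral.integral_eq_sub_of_hasDerivAt (fun t _ ↦ hderiv t)
    (intervalIntegrable_fderiv_smul hF z z 0 1)]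
  simp

theorem radialMean_sub_smul (hF : ContDiff ℂ 1 F) (v z : V) (a : ℂ) :
    radialMean (v - a • z) F z = radialMean v F z - a * (F z - F 0) := by
  rw [← radialMean_self hF, radialMean, radialMean, radialMean,
    ← intervalIntegral.integral_const_mul, ← intervalIntegral.integral_sub
      (intervalIntegrable_fderiv_smul hF z v 0 1)
      ((intervalIntegrable_fderiv_smul hF z z 0 1).const_mul a)]
  simp

theorem intervalIntegrable_one_sub_rpow :
    IntervalIntegrable (fun t : ℝ ↦ (1 - t) ^ (-1 / 2 : ℝ)) volume 0 1 := by
  simpa using ((intervalIntegral.intervalIntegrable_rpow' (a := 0) (b := 1) (r := -1 / 2)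
    (by norm_num)).comp_sub_left 1).symm

theorem integral_one_sub_rpow : ∫ t in (0 : ℝ)..1, (1 - t) ^ (-1 / 2 : ℝ) = 2 := by
  rw [intervalIntegral.integral_comp_sub_left fun t : ℝ ↦ t ^ (-1 / 2 : ℝ),
    integral_rpow (.inl (by norm_num))]
  norm_num

theorem IsBoundedNull.tendsto_radialMean {F : ℕ → V → ℂ} (hF : IsBoundedNull F)
    (hd : ∀ j, ContDiff ℂ 1 (F j)) {z v : V} (hz : ‖z‖ ≤ 1) {g : ℝ → ℝ}
    (hg : IntervalIntegrable g volume 0 1)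
    (hle : ∀ j, ∀ t ∈ Ioo (0 : ℝ) 1, ‖fderiv ℂ (F j) ((t : ℂ) • z) v‖ ≤ g t) :
    Tendsto (fun j ↦ radialMean v (F j) z) atTop (𝓝 0) := by
  have hne : ∀ᵐ t : ℝ, t ≠ 1 := by simp [ae_iff]
  have hlim : Tendsto (fun j ↦ radialMean v (F j) z) atTop (𝓝 (∫ _ in (0 : ℝ)..1, (0 : ℂ))) := by
    refine intervalIntegral.tendsto_integral_filter_of_dominated_convergence g
      (.of_forall fun j ↦ ?_) (.of_forall fun j ↦ ?_) hg ?_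
    · rw [uIoc_of_le zero_le_one]
      exact (intervalIntegrable_fderiv_smul (hd j) z v 0 1).aestronglyMeasurable
    · filter_upwards [hne] with t ht1 ht
      rw [uIoc_of_le zero_le_one] at ht
      exact hle j t ⟨ht.1, ht.2.lt_of_ne ht1⟩
    · filter_upwards [hne] with t ht1 ht
      rw [uIoc_of_le zero_le_one] at ht
      refine hF.tendsto_fderiv_apply (fun j ↦ (hd j).differentiable one_ne_zero) ?_ v
      rw [mem_ball_zero_iff, norm_smul, norm_real, Real.norm_of_nonneg ht.1.le]
      exact (mul_le_of_le_one_right ht.1.le hz).trans_lt (ht.2.lt_of_ne ht1)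
  simpa using hlim

end RadialMean

section Tangent

variable {V : Type*} [NormedAddCommGroup V] [InnerProductSpace ℂ V] {F : V → ℂ} {z e : V} {M : ℝ}

theorem norm_fderiv_smul_tangent_le (hF : Differentiable ℂ F) (hM : ∀ z, ‖z‖ ≤ 1 → ‖F z‖ ≤ M)
    (hz : ‖z‖ = 1) (he : ‖e‖ = 1) {t : ℝ} (ht : t ∈ Ioo 0 1) :
    ‖fderiv ℂ F ((t : ℂ) • z) (e - inner ℂ z e • z)‖ ≤ M * (1 - t) ^ (-1 / 2 : ℝ) := by
  have h1t : 0 < 1 - t := sub_pos.mpr ht.2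
  have hsqrt : (1 - t) ^ (-1 / 2 : ℝ) = (√(1 - t))⁻¹ := by
    rw [Real.sqrt_eq_rpow, ← Real.rpow_neg h1t.le]
    norm_num
  rw [hsqrt, ← div_eq_mul_inv]
  refine norm_fderiv_apply_le_div hF (Real.sqrt_pos.mpr h1t) fun s hs ↦ hM _ ?_
  rw [← sq_le_one_iff₀ (norm_nonneg _)]
  refine (norm_smul_add_smul_sub_inner_smul_sq_le hz he t s).trans ?_
  rw [hs, Real.sq_sqrt h1t.le, norm_real, Real.norm_of_nonneg ht.1.le]
  nlinarith [ht.1, ht.2]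

theorem norm_fderiv_smul_apply_le (hF : Differentiable ℂ F) (hM : ∀ z, ‖z‖ ≤ 1 → ‖F z‖ ≤ M)
    (hz : z ∈ ball 0 1) (he : ‖e‖ = 1) {t : ℝ} (ht : t ∈ Ioo 0 1) :
    ‖fderiv ℂ F ((t : ℂ) • z) e‖ ≤ M / (1 - ‖z‖) := by
  refine norm_fderiv_apply_le_div hF (sub_pos.mpr (mem_ball_zero_iff.mp hz)) fun s hs ↦ hM _ ?_
  refine (norm_add_le _ _).trans ?_
  rw [norm_smul, norm_smul, he, hs, norm_real, Real.norm_of_nonneg ht.1.le]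
  nlinarith [ht.2, norm_nonneg z]

theorem norm_radialMean_tangent_le (hF : Differentiable ℂ F) (hM : ∀ z, ‖z‖ ≤ 1 → ‖F z‖ ≤ M)
    (hz : ‖z‖ = 1) (he : ‖e‖ = 1) : ‖radialMean (e - inner ℂ z e • z) F z‖ ≤ 2 * M := by
  have hne : ∀ᵐ t : ℝ, t ≠ 1 := by simp [ae_iff]
  refine (intervalIntegral.norm_integral_le_of_norm_le zero_le_one (hne.mono fun t ht1 ht ↦
    norm_fderiv_smul_tangent_le hF hM hz he ⟨ht.1, ht.2.lt_of_ne ht1⟩)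
    (intervalIntegrable_one_sub_rpow.const_mul M)).trans_eq ?_
  rw [intervalIntegral.integral_const_mul, integral_one_sub_rpow, mul_comm]

theorem norm_radialMean_le (hF : ContDiff ℂ 1 F) (hM : ∀ z, ‖z‖ ≤ 1 → ‖F z‖ ≤ M) (he : ‖e‖ = 1)
    (hz : ‖z‖ ≤ 1) (hq : Differentiable ℂ (radialMean e F)) : ‖radialMean e F z‖ ≤ 4 * M := by
  have : Nontrivial V := nontrivial_of_ne e 0 (norm_ne_zero_iff.mp (he ▸ one_ne_zero))
  have hfrontier (w : V) (hw : w ∈ frontier (ball 0 1)) : ‖radialMean e F w‖ ≤ 4 * M := by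
    rw [frontier_ball _ one_ne_zero, mem_sphere_zero_iff_norm] at hw
    have hinner : ‖(inner ℂ w e : ℂ)‖ ≤ 1 := by
      simpa [hw, he] using norm_inner_le_norm (𝕜 := ℂ) w e
    have htangent := norm_radialMean_tangent_le (hF.differentiable one_ne_zero) hM hw he
    rw [radialMean_sub_smul hF] at htangent
    have hF2 : ‖F w - F 0‖ ≤ M + M :=
      (norm_sub_le _ _).trans (add_le_add (hM w hw.le) (hM 0 (by simp)))
    calc ‖radialMean e F w‖
        = ‖(radialMean e F w - inner ℂ w e * (F w - F 0)) + inner ℂ w e * (F w - F 0)‖ := by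
          rw [sub_add_cancel]
      _ ≤ 2 * M + 1 * (M + M) := by
          refine (norm_add_le _ _).trans (add_le_add htangent ?_)
          rw [norm_mul]
          gcongr
      _ = 4 * M := by ring
  refine norm_le_of_forall_mem_frontier_norm_le isBounded_ball hq.diffContOnCl hfrontier ?_
  rwa [closure_ball _ one_ne_zero, mem_closedBall_zero_iff]

theorem isBoundedNull_radialMean {F : ℕ → V → ℂ} (hF : IsBoundedNull F)
    (hd : ∀ j, ContDiff ℂ 1 (F j)) (he : ‖e‖ = 1)
    (hq : ∀ j, Differentiable ℂ (radialMean e (F j))) :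
    IsBoundedNull fun j ↦ radialMean e (F j) := by
  obtain ⟨M, hM⟩ := hF.exists_norm_le
  refine ⟨⟨4 * M, fun j z hz ↦ norm_radialMean_le (hd j) (hM j) he hz (hq j)⟩, fun z hz ↦ ?_⟩
  exact hF.tendsto_radialMean hd (mem_ball_zero_iff.mp hz).le intervalIntegrable_const
    fun j t ht ↦ norm_fderiv_smul_apply_le ((hd j).differentiable one_ne_zero) (hM j) hz he ht

theorem IsBoundedNull.tendsto_inner_mul_sub_radialMean {F : ℕ → V → ℂ} (hF : IsBoundedNull F)
    (hd : ∀ j, ContDiff ℂ 1 (F j)) (he : ‖e‖ = 1) (hz : ‖z‖ = 1) :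
    Tendsto (fun j ↦ inner ℂ z e * F j z - radialMean e (F j) z) atTop (𝓝 0) := by
  obtain ⟨M, hM⟩ := hF.exists_norm_le
  have htangent : Tendsto (fun j ↦ radialMean (e - inner ℂ z e • z) (F j) z) atTop (𝓝 0) :=
    hF.tendsto_radialMean hd hz.le (intervalIntegrable_one_sub_rpow.const_mul M) fun j t ht ↦
      norm_fderiv_smul_tangent_le ((hd j).differentiable one_ne_zero) (hM j) hz he ht
  have hzero := (hF.tendsto_zero 0 (mem_ball_self one_pos)).const_mul (inner ℂ z e)
  refine (by simpa using hzero.sub htangent : Tendsto _ _ (𝓝 (0 : ℂ))).congr fun j ↦ ?_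
  rw [radialMean_sub_smul (hd j)]
  ring

end Tangent

section Polynomials

variable {n : ℕ}

/-- Evaluation of polynomials, as a homomorphism into the functions on `ℂⁿ`. -/
noncomputable def polyFun : MvPolynomial (Fin n) ℂ →ₐ[ℂ] (E n → ℂ) :=
  MvPolynomial.aeval fun i z ↦ z i

theorem polyFun_C (a : ℂ) : polyFun (n := n) (MvPolynomial.C a) = fun _ ↦ a :=
  MvPolynomial.aeval_C _ a

theorem polyFun_X (i : Fin n) : polyFun (MvPolynomial.X i) = fun z ↦ z i :=
  MvPolynomial.aeval_X _ i

theorem contDiff_polyFun (p : MvPolynomial (Fin n) ℂ) : ContDiff ℂ 1 (polyFun p) := by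
  induction p using MvPolynomial.induction_on with
  | C a => exact polyFun_C a ▸ contDiff_const
  | add p q hp hq => exact map_add polyFun p q ▸ hp.add hq
  | mul_X p i hp =>
    rw [map_mul, polyFun_X]
    exact hp.mul (EuclideanSpace.proj (𝕜 := ℂ) i).contDiff

theorem continuous_polyFun (p : MvPolynomial (Fin n) ℂ) : Continuous (polyFun p) :=
  (contDiff_polyFun p).continuous

theorem aeval_coord_apply (p : MvPolynomial (Fin n) ℂ) (ζ : K n) :
    MvPolynomial.aeval coord p ζ = polyFun p ζ := by
  induction p using MvPolynomial.induction_on with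
  | C a => rw [polyFun_C, MvPolynomial.aeval_C]; rfl
  | add p q hp hq => rw [map_add, map_add, ContinuousMap.add_apply, hp, hq, Pi.add_apply]
  | mul_X p i hp =>
    rw [map_mul, map_mul, ContinuousMap.mul_apply, hp, Pi.mul_apply, MvPolynomial.aeval_X,
      polyFun_X]
    rfl

theorem fderiv_polyFun_single (p : MvPolynomial (Fin n) ℂ) (i : Fin n) (z : E n) :
    fderiv ℂ (polyFun p) z (EuclideanSpace.single i 1) =
      polyFun (MvPolynomial.pderiv i p) z := by
  have hd (p : MvPolynomial (Fin n) ℂ) : DifferentiableAt ℂ (polyFun p) z :=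
    (contDiff_polyFun p).differentiable one_ne_zero z
  induction p using MvPolynomial.induction_on with
  | C a => rw [polyFun_C]; simp
  | add p q hp hq => simp [fderiv_add (hd p) (hd q), hp, hq]
  | mul_X p j hp =>
    have hX : fderiv ℂ (polyFun (MvPolynomial.X j)) z = EuclideanSpace.proj (𝕜 := ℂ) j := by
      rw [polyFun_X]
      exact (EuclideanSpace.proj (𝕜 := ℂ) j).fderiv
    rw [map_mul, fderiv_mul (hd p) (hd _), hX]
    simp [hp, Derivation.leibniz, MvPolynomial.pderiv_X, Pi.single_apply]
    split_ifs <;> simp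

theorem exists_polyFun_eq_integral (p : MvPolynomial (Fin n) ℂ) : ∃ q : MvPolynomial (Fin n) ℂ,
    ∀ z, polyFun q z = ∫ t in (0 : ℝ)..1, polyFun p ((t : ℂ) • z) := by
  induction p using MvPolynomial.induction_on' with
  | monomial d a =>
    refine ⟨MvPolynomial.monomial d (a * ((d.degree : ℂ) + 1)⁻¹), fun z ↦ ?_⟩
    have hmonomial (c t : ℂ) : polyFun (MvPolynomial.monomial d c) (t • z) =
        c * (t ^ d.degree * ∏ i ∈ d.support, z i ^ d i) := by
      simp [polyFun, MvPolynomial.aeval_monomial, Finsupp.prod, mul_pow, Finset.prod_mul_distrib,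
        Finset.prod_pow_eq_pow_sum, Finsupp.degree_apply]
    have hone (c : ℂ) : polyFun (MvPolynomial.monomial d c) z = c * ∏ i ∈ d.support, z i ^ d i := by
      simpa using hmonomial c 1
    simp only [hone, hmonomial, intervalIntegral.integral_const_mul,
      intervalIntegral.integral_mul_const, ← ofReal_pow, intervalIntegral.integral_ofReal,
      integral_pow]
    simp [mul_assoc]
  | add p q hp hq =>
    obtain ⟨p', hp'⟩ := hp
    obtain ⟨q', hq'⟩ := hq
    have hint (p : MvPolynomial (Fin n) ℂ) (z : E n) :
        IntervalIntegrable (fun t : ℝ ↦ polyFun p ((t : ℂ) • z)) volume 0 1 :=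
      ((continuous_polyFun p).comp (by fun_prop)).intervalIntegrable _ _
    refine ⟨p' + q', fun z ↦ ?_⟩
    simp only [map_add, Pi.add_apply, hp', hq', intervalIntegral.integral_add (hint p z) (hint q z)]

theorem exists_polyFun_eq_radialMean (i : Fin n) (p : MvPolynomial (Fin n) ℂ) :
    ∃ q, polyFun q = radialMean (EuclideanSpace.single i 1) (polyFun p) := by
  obtain ⟨q, hq⟩ := exists_polyFun_eq_integral (MvPolynomial.pderiv i p)
  refine ⟨q, funext fun z ↦ ?_⟩
  simp only [hq, radialMean, fderiv_polyFun_single]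

end Polynomials

section Tightness

theorem IsBoundedNull.add {V : Type*} [NormedAddCommGroup V] {F G : ℕ → V → ℂ}
    (hF : IsBoundedNull F) (hG : IsBoundedNull G) : IsBoundedNull fun j ↦ F j + G j := by
  obtain ⟨M, hM⟩ := hF.exists_norm_le
  obtain ⟨N, hN⟩ := hG.exists_norm_le
  refine ⟨⟨M + N, fun j z hz ↦ norm_add_le_of_le (hM j z hz) (hN j z hz)⟩, fun z hz ↦ ?_⟩
  simpa using (hF.tendsto_zero z hz).add (hG.tendsto_zero z hz)

theorem IsBoundedNull.mul_left {V : Type*} [NormedAddCommGroup V] {F : ℕ → V → ℂ}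
    (hF : IsBoundedNull F) {g : V → ℂ} {C : ℝ} (hg : ∀ z, ‖z‖ ≤ 1 → ‖g z‖ ≤ C) :
    IsBoundedNull fun j ↦ g * F j := by
  obtain ⟨M, hM⟩ := hF.exists_norm_le
  refine ⟨⟨C * M, fun j z hz ↦ ?_⟩, fun z hz ↦ ?_⟩
  · exact norm_mul_le_of_le (hg z hz) (hM j z hz)
  · simpa using (hF.tendsto_zero z hz).const_mul (g z)

variable {n : ℕ}

/-- Tightness of `φ` for the ball algebra, in a form restricted to sequences: `φ` carries bounded
null sequences of polynomials to bounded null sequences of polynomials, up to an error vanishing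
pointwise on the sphere. -/
def IsTight (φ : C(K n, ℂ)) : Prop :=
  ∀ p : ℕ → MvPolynomial (Fin n) ℂ, IsBoundedNull (fun j ↦ polyFun (p j)) →
    ∃ q : ℕ → MvPolynomial (Fin n) ℂ, IsBoundedNull (fun j ↦ polyFun (q j)) ∧
      ∀ ζ : K n, ‖(ζ : E n)‖ = 1 →
        Tendsto (fun j ↦ φ ζ * polyFun (p j) ζ - polyFun (q j) ζ) atTop (𝓝 0)

theorem isTight_algebraMap (a : ℂ) : IsTight (algebraMap ℂ C(K n, ℂ) a) := fun p hp ↦ by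
  refine ⟨fun j ↦ MvPolynomial.C a * p j, ?_, fun ζ _ ↦ ?_⟩
  · simp only [map_mul, polyFun_C]
    exact hp.mul_left (C := ‖a‖) fun _ _ ↦ le_rfl
  · simp

theorem isTight_coord (i : Fin n) : IsTight (coord i) := fun p hp ↦ by
  refine ⟨fun j ↦ MvPolynomial.X i * p j, ?_, fun ζ _ ↦ ?_⟩
  · simp only [map_mul, polyFun_X]
    exact hp.mul_left fun z hz ↦ (PiLp.norm_apply_le z i).trans hz
  · simp [polyFun_X]

theorem isTight_star_coord (i : Fin n) : IsTight (star (coord i)) := fun p hp ↦ by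
  choose q hq using fun j ↦ exists_polyFun_eq_radialMean i (p j)
  have he : ‖EuclideanSpace.single i (1 : ℂ)‖ = 1 := by simp
  have hd (j : ℕ) : ContDiff ℂ 1 (polyFun (p j)) := contDiff_polyFun (p j)
  refine ⟨q, ?_, fun ζ hζ ↦ ?_⟩
  · simp only [hq]
    exact isBoundedNull_radialMean hp hd he fun j ↦
      hq j ▸ (contDiff_polyFun (q j)).differentiable one_ne_zero
  · simpa [hq, EuclideanSpace.inner_single_right] using
      hp.tendsto_inner_mul_sub_radialMean hd he hζ

theorem IsTight.add {φ ψ : C(K n, ℂ)} (hφ : IsTight φ) (hψ : IsTight ψ) :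
    IsTight (φ + ψ) := fun p hp ↦ by
  obtain ⟨q, hq, hφq⟩ := hφ p hp
  obtain ⟨r, hr, hψr⟩ := hψ p hp
  refine ⟨fun j ↦ q j + r j, ?_, fun ζ hζ ↦ ?_⟩
  · simpa only [map_add] using hq.add hr
  · have hsum := (hφq ζ hζ).add (hψr ζ hζ)
    rw [add_zero] at hsum
    refine hsum.congr fun j ↦ ?_
    simp only [map_add, ContinuousMap.add_apply, Pi.add_apply]
    ring

theorem IsTight.mul {φ ψ : C(K n, ℂ)} (hφ : IsTight φ) (hψ : IsTight ψ) :
    IsTight (φ * ψ) := fun p hp ↦ by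
  obtain ⟨q, hq, hψq⟩ := hψ p hp
  obtain ⟨r, hr, hφr⟩ := hφ q hq
  refine ⟨r, hr, fun ζ hζ ↦ ?_⟩
  have hsum := ((hψq ζ hζ).const_mul (φ ζ)).add (hφr ζ hζ)
  rw [mul_zero, add_zero] at hsum
  refine hsum.congr fun j ↦ ?_
  rw [ContinuousMap.mul_apply]
  ring

theorem isTight_of_mem_adjoin {φ : C(K n, ℂ)} (hφ : φ ∈ StarAlgebra.adjoin ℂ (range coord)) :
    IsTight φ := by
  rw [← StarSubalgebra.mem_toSubalgebra, StarAlgebra.adjoin_toSubalgebra] at hφ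
  induction hφ using Algebra.adjoin_induction with
  | mem φ hφ =>
    rcases hφ with ⟨i, rfl⟩ | ⟨i, hi⟩
    · exact isTight_coord i
    · exact star_star φ ▸ hi ▸ isTight_star_coord i
  | algebraMap a => exact isTight_algebraMap a
  | add φ ψ _ _ hφ hψ => exact hφ.add hψ
  | mul φ ψ _ _ hφ hψ => exact hφ.mul hψ

theorem aeval_coord_mem_ballAlgebra (p : MvPolynomial (Fin n) ℂ) :
    MvPolynomial.aeval coord p ∈ ballAlgebra n := by
  refine Subalgebra.le_topologicalClosure _ ?_
  rw [Algebra.adjoin_range_eq_range_aeval]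
  exact ⟨p, rfl⟩

theorem exists_norm_sub_aeval_coord_lt {f : C(K n, ℂ)} (hf : f ∈ ballAlgebra n) {ε : ℝ}
    (hε : 0 < ε) : ∃ p : MvPolynomial (Fin n) ℂ, ‖f - MvPolynomial.aeval coord p‖ < ε := by
  rw [ballAlgebra, Algebra.adjoin_range_eq_range_aeval] at hf
  obtain ⟨_, ⟨p, rfl⟩, hp⟩ := SeminormedAddCommGroup.mem_closure_iff.mp hf ε hε
  exact ⟨p, hp⟩

variable [MeasurableSpace (K n)] [BorelSpace (K n)] {Λ σ : Measure (K n)} [IsProbabilityMeasure Λ]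
  [IsFiniteMeasure σ] {b : E n → ℂ} {α : ℂ}

theorem IsClarkMeasure.exists_isBoundedNull_polyFun (h : IsClarkMeasure b α σ)
    (hΛ : IsSphereMeasure Λ) (hb : IsInner Λ b) : ∃ p : ℕ → MvPolynomial (Fin n) ℂ,
      IsBoundedNull (fun j ↦ polyFun (p j)) ∧
      ∀ᵐ ζ : K n ∂σ, Tendsto (fun j ↦ polyFun (p j) ζ) atTop (𝓝 1) := by
  obtain ⟨f, hf, hf1, hf0, hfσ⟩ := h.exists_seq_mem_ballAlgebra hΛ hb
  choose p hp using fun j : ℕ ↦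
    exists_norm_sub_aeval_coord_lt (hf j) (Nat.one_div_pos_of_nat (α := ℝ) (n := j))
  have hpf (j : ℕ) (ζ : K n) : ‖f j ζ - polyFun (p j) ζ‖ ≤ 1 / ((j : ℝ) + 1) := by
    rw [← aeval_coord_apply]
    exact ((f j - MvPolynomial.aeval coord (p j)).norm_coe_le_norm ζ).trans (hp j).le
  have hlim {a : ℂ} {ζ : K n} (ha : Tendsto (f · ζ) atTop (𝓝 a)) :
      Tendsto (fun j ↦ polyFun (p j) ζ) atTop (𝓝 a) := by
    simpa using ha.sub (squeeze_zero_norm (hpf · ζ) tendsto_one_div_add_atTop_nhds_zero_nat)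
  refine ⟨p, ⟨⟨2, fun j z hz ↦ ?_⟩, fun z hz ↦ ?_⟩, hfσ.mono fun ζ ↦ hlim⟩
  · let ζ : K n := ⟨z, mem_closedBall_zero_iff.mpr hz⟩
    have hone : 1 / ((j : ℝ) + 1) ≤ 1 := div_le_one_of_le₀ (by simp) (by positivity)
    calc ‖polyFun (p j) z‖ = ‖f j ζ - (f j ζ - polyFun (p j) z)‖ := by rw [sub_sub_cancel]
      _ ≤ 1 + 1 := norm_sub_le_of_le (((f j).norm_coe_le_norm ζ).trans (hf1 j))
        ((hpf j ζ).trans hone)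
      _ = 2 := one_add_one_eq_two
  · exact hlim (ζ := ⟨z, ball_subset_closedBall hz⟩) (hf0 _ hz)

end Tightness

section KernelSpace

variable {n : ℕ}

theorem memRKHSBall_of_mul {u G F : E n → ℂ} {A k : E n → E n → ℂ}
    (hu : ∀ z ∈ ball 0 1, u z ≠ 0)
    (hk : ∀ z ∈ ball 0 1, ∀ w ∈ ball 0 1, k z w = u z * conj (u w) * A z w)
    (hF : ∀ z ∈ ball 0 1, F z = u z * G z) (h : MemRKHSBall n k F) : MemRKHSBall n A G := by
  obtain ⟨c, hc, hpos⟩ := h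
  refine ⟨c, hc, fun m z a hz ↦ ?_⟩
  convert hpos m z (fun i ↦ a i / conj (u (z i))) hz using 4 with i _ j
  have hi := hu _ (hz i)
  have hj : conj (u (z j)) ≠ 0 := (map_ne_zero _).mpr (hu _ (hz j))
  rw [hk _ (hz i) _ (hz j), hF _ (hz i), hF _ (hz j), map_div₀, conj_conj, map_mul]
  field_simp

variable {X : Type*} [TopologicalSpace X] [CompactSpace X] [MeasurableSpace X]
  [OpensMeasurableSpace X] {μ : Measure X} [IsFiniteMeasure μ]

theorem integralCLM_sum_mul_star_sum {ι : Type*} (s : Finset ι) (f : ι → C(X, ℂ)) (a : ι → ℂ) :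
    integralCLM μ ((∑ i ∈ s, a i • f i) * star (∑ i ∈ s, a i • f i)) =
      ∑ i ∈ s, ∑ j ∈ s, a i * conj (a j) * integralCLM μ (f i * star (f j)) := by
  rw [star_sum, Finset.sum_mul_sum, map_sum]
  refine Finset.sum_congr rfl fun i _ ↦ ?_
  rw [map_sum]
  refine Finset.sum_congr rfl fun j _ ↦ ?_
  rw [star_smul, smul_mul_smul_comm, map_smul, smul_eq_mul, star_def]

theorem exists_norm_sq_le_of_memRKHSBall [BorelSpace X] {f : E n → C(X, ℂ)} {ℓ : C(X, ℂ) →L[ℂ] ℂ}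
    (h : MemRKHSBall n (fun z w ↦ integralCLM μ (f z * star (f w))) fun z ↦ ℓ (f z)) :
    ∃ C, 0 ≤ C ∧ ∀ p ∈ (Submodule.span ℂ (f '' ball 0 1)).topologicalClosure,
      ‖ℓ p‖ ^ 2 ≤ C * (integralCLM μ (p * star p)).re := by
  obtain ⟨C, hC, hpos⟩ := h
  refine ⟨C, hC, fun p hp ↦ closure_minimal (t := {p | ‖ℓ p‖ ^ 2 ≤
    C * (integralCLM μ (p * star p)).re}) (fun p hp ↦ ?_) (isClosed_le (by fun_prop)
      (by fun_prop)) hp⟩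
  obtain ⟨m, a, g, rfl⟩ := Submodule.mem_span_set'.mp hp
  choose z hz hzg using fun i ↦ (g i).2
  have h := hpos m z (fun i ↦ conj (a i)) hz
  have hsum : ∑ i, ∑ j, conj (conj (a i)) * conj (a j) *
      (C * integralCLM μ (f (z i) * star (f (z j))) - ℓ (f (z i)) * conj (ℓ (f (z j)))) =
      C * integralCLM μ ((∑ i, a i • (g i : C(X, ℂ))) * star (∑ i, a i • (g i : C(X, ℂ)))) -
        ℓ (∑ i, a i • (g i : C(X, ℂ))) * conj (ℓ (∑ i, a i • (g i : C(X, ℂ)))) := by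
    rw [integralCLM_sum_mul_star_sum, map_sum, map_sum, Finset.sum_mul_sum, Finset.mul_sum,
      ← Finset.sum_sub_distrib]
    refine Finset.sum_congr rfl fun i _ ↦ ?_
    rw [Finset.mul_sum, ← Finset.sum_sub_distrib]
    refine Finset.sum_congr rfl fun j _ ↦ ?_
    simp only [hzg, map_smul, smul_eq_mul, map_mul (starRingEnd ℂ), conj_conj]
    ring
  rw [hsum, mul_conj', sub_re, re_ofReal_mul, ← ofReal_pow, ofReal_re] at h
  exact sub_nonneg.mp h

variable [MeasurableSpace (K n)] [BorelSpace (K n)] {σ μ : Measure (K n)} [IsFiniteMeasure σ]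
  [IsFiniteMeasure μ] {I b : E n → ℂ} {α : ℂ}

theorem IsClarkMeasure.exists_norm_integralCLM_mul_cauchyKernel_sq_le (hσ : IsClarkMeasure I α σ)
    (hμ : IsClarkMeasure b α μ) (hn : 0 < n) {w : E n} (hw : w ∈ ball 0 1)
    (h : MemRKHSBall n (fun z w ↦ (1 - b z * conj (b w)) * (1 - inner ℂ w z)⁻¹ ^ n) fun z ↦
      (α - b z) / (α - I z) * ((1 - I z * conj (I w)) * (1 - inner ℂ w z)⁻¹ ^ n)) :
    ∃ M, 0 ≤ M ∧ ∀ q ∈ ballAlgebra n,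
      ‖integralCLM σ (q * cauchyKernel w)‖ ^ 2 ≤ M * ∫ ζ, ‖q ζ‖ ^ 2 ∂μ := by
  set κ := conj (α - I w)
  have hκ : κ ≠ 0 := (map_ne_zero _).mpr (hσ.sub_ne_zero hw)
  let ℓ : C(K n, ℂ) →L[ℂ] ℂ := κ • (integralCLM σ).comp
    ((ContinuousLinearMap.mul ℂ C(K n, ℂ)).flip (star (cauchyKernel w)))
  have hℓ (f : C(K n, ℂ)) : ℓ f = κ * integralCLM σ (f * star (cauchyKernel w)) := rfl
  obtain ⟨C, hC, hle⟩ := exists_norm_sq_le_of_memRKHSBall (μ := μ) (f := cauchyKernel) (ℓ := ℓ)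
    (memRKHSBall_of_mul (fun z ↦ hμ.sub_ne_zero)
      (fun z hz w hw ↦ (hμ.integralCLM_cauchyKernel_mul_star hz hw).symm) (fun z hz ↦ by
        have := hσ.sub_ne_zero hz
        rw [← hσ.integralCLM_cauchyKernel_mul_star hz hw, hℓ]
        simp only [κ]
        field_simp) h)
  refine ⟨C / ‖κ‖ ^ 2, by positivity, fun q hq ↦ ?_⟩
  set W := (Submodule.span ℂ (cauchyKernel (n := n) '' ball 0 1)).topologicalClosure
  have hstar : star q ∈ W := by
    have hW : IsClosed (W : Set C(K n, ℂ)) := Submodule.isClosed_topologicalClosure _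
    refine mem_of_forall_star_cauchyKernel_mem hn
      (W := W.comap (starLinearEquiv ℂ : C(K n, ℂ) ≃ₗ⋆[ℂ] C(K n, ℂ)).toLinearMap)
      (hW.preimage continuous_star) (fun z hz ↦ ?_) hq
    have hmem : cauchyKernel z ∈ W :=
      Submodule.le_topologicalClosure _ (Submodule.subset_span ⟨z, hz, rfl⟩)
    exact (congrArg (· ∈ W) (star_star (cauchyKernel z))).mpr hmem
  have hnorm : ‖integralCLM σ (star q * star (cauchyKernel w))‖ =
      ‖integralCLM σ (q * cauchyKernel w)‖ := by
    rw [show star q * star (cauchyKernel w) = star (q * cauchyKernel w) from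
      (star_mul' q _).symm, integralCLM_star, RCLike.norm_conj]
  have hq := hle _ hstar
  rw [hℓ, norm_mul, mul_pow, hnorm, star_star, mul_comm (star q), integralCLM_mul_star_self,
    ofReal_re] at hq
  rw [div_mul_eq_mul_div, le_div_iff₀' (by positivity)]
  exact hq

end KernelSpace

section Extension

variable {n : ℕ}

theorem topologicalClosure_adjoin_coord :
    (StarAlgebra.adjoin ℂ (range (coord (n := n)))).topologicalClosure = ⊤ := by
  refine ContinuousMap.starSubalgebra_topologicalClosure_eq_top_of_separatesPoints _ fun ζ η h ↦ ?_
  obtain ⟨i, hi⟩ : ∃ i, (ζ : E n) i ≠ (η : E n) i := by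
    by_contra! hζη
    exact h (Subtype.ext (PiLp.ext hζη))
  exact ⟨_, ⟨coord i, StarAlgebra.subset_adjoin ℂ _ ⟨i, rfl⟩, rfl⟩, hi⟩

variable [MeasurableSpace (K n)] [BorelSpace (K n)] {σ μ : Measure (K n)}
  [IsFiniteMeasure σ] [IsFiniteMeasure μ] {g : C(K n, ℂ)} {M : ℝ}

theorem tendsto_integral_norm_mul_sub_sq (hμ : ∀ᵐ ζ : K n ∂μ, ‖(ζ : E n)‖ = 1) {φ : C(K n, ℂ)}
    {p q : ℕ → MvPolynomial (Fin n) ℂ} (hp : IsBoundedNull fun j ↦ polyFun (p j))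
    (hq : IsBoundedNull fun j ↦ polyFun (q j))
    (hlim : ∀ ζ : K n, ‖(ζ : E n)‖ = 1 →
      Tendsto (fun j ↦ φ ζ * polyFun (p j) ζ - polyFun (q j) ζ) atTop (𝓝 0)) (B : ℝ) :
    Tendsto (fun j ↦ ∫ ζ : K n, (B * ‖φ ζ‖ + ‖φ ζ * polyFun (p j) ζ - polyFun (q j) ζ‖) ^ 2 ∂μ)
      atTop (𝓝 (∫ ζ, (B * ‖φ ζ‖) ^ 2 ∂μ)) := by
  obtain ⟨C, hC⟩ := hp.exists_norm_le
  obtain ⟨D, hD⟩ := hq.exists_norm_le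
  refine tendsto_integral_filter_of_norm_le_const (.of_forall fun j ↦ ?_)
    ⟨(|B| * ‖φ‖ + (‖φ‖ * C + D)) ^ 2, .of_forall fun j ↦ ae_of_all _ fun ζ ↦ ?_⟩ ?_
  · have := continuous_polyFun (p j)
    have := continuous_polyFun (q j)
    exact Continuous.aestronglyMeasurable (by fun_prop)
  · rw [norm_pow]
    gcongr
    refine norm_add_le_of_le ?_ ?_
    · rw [norm_mul, norm_norm, Real.norm_eq_abs]
      gcongr
      exact φ.norm_coe_le_norm ζ
    · rw [norm_norm]
      exact norm_sub_le_of_le (norm_mul_le_of_le (φ.norm_coe_le_norm ζ)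
        (hC j ζ (norm_coe_le_one ζ))) (hD j ζ (norm_coe_le_one ζ))
  · filter_upwards [hμ] with ζ hζ
    simpa using ((hlim ζ hζ).norm.const_add (B * ‖φ ζ‖)).pow 2

theorem norm_integralCLM_mul_sq_le_of_isTight (hσ : ∀ᵐ ζ : K n ∂σ, ‖(ζ : E n)‖ = 1)
    (hμ : ∀ᵐ ζ : K n ∂μ, ‖(ζ : E n)‖ = 1) (hM : 0 ≤ M)
    (h : ∀ q ∈ ballAlgebra n, ‖integralCLM σ (q * g)‖ ^ 2 ≤ M * ∫ ζ, ‖q ζ‖ ^ 2 ∂μ)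
    {p : ℕ → MvPolynomial (Fin n) ℂ} (hp : IsBoundedNull fun j ↦ polyFun (p j)) {B : ℝ}
    (hB : ∀ j z, ‖z‖ ≤ 1 → ‖polyFun (p j) z‖ ≤ B)
    (hp_lim : ∀ᵐ ζ : K n ∂σ, Tendsto (fun j ↦ polyFun (p j) ζ) atTop (𝓝 1)) {φ : C(K n, ℂ)}
    (hφ : IsTight φ) :
    ‖integralCLM σ (φ * g)‖ ^ 2 ≤ M * B ^ 2 * ∫ ζ, ‖φ ζ‖ ^ 2 ∂μ := by
  obtain ⟨q, hq, hφq⟩ := hφ p hp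
  obtain ⟨C, hC⟩ := hq.exists_norm_le
  let Q (j : ℕ) : C(K n, ℂ) := MvPolynomial.aeval coord (q j)
  have hQ (j : ℕ) (ζ : K n) : Q j ζ = polyFun (q j) ζ := aeval_coord_apply (q j) ζ
  have hσ_lim : Tendsto (fun j ↦ integralCLM σ (Q j * g)) atTop (𝓝 (integralCLM σ (φ * g))) := by
    refine tendsto_integral_filter_of_norm_le_const
      (.of_forall fun j ↦ (Q j * g).continuous.aestronglyMeasurable)
      ⟨C * ‖g‖, .of_forall fun j ↦ ae_of_all _ fun ζ ↦ ?_⟩ ?_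
    · exact norm_mul_le_of_le ((hQ j ζ).symm ▸ hC j ζ (norm_coe_le_one ζ)) (g.norm_coe_le_norm ζ)
    · filter_upwards [hσ, hp_lim] with ζ hζ hpζ
      have hQζ := ((hpζ.const_mul (φ ζ)).sub (hφq ζ hζ)).mul_const (g ζ)
      simpa [hQ] using hQζ
  have hμ_lim := (tendsto_integral_norm_mul_sub_sq hμ hp hq hφq B).const_mul M
  simp_rw [mul_pow, integral_const_mul, ← mul_assoc] at hμ_lim
  refine le_of_tendsto_of_tendsto' (hσ_lim.norm.pow 2) hμ_lim fun j ↦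
    (h _ (aeval_coord_mem_ballAlgebra (q j))).trans (mul_le_mul_of_nonneg_left ?_ hM)
  have := continuous_polyFun (p j)
  have := continuous_polyFun (q j)
  refine integral_mono (integrable_of_compactSpace μ (by fun_prop))
    (integrable_of_compactSpace μ (by fun_prop)) fun ζ ↦ ?_
  have hsplit : Q j ζ = φ ζ * polyFun (p j) ζ - (φ ζ * polyFun (p j) ζ - polyFun (q j) ζ) := by
    rw [hQ, sub_sub_cancel]
  change ‖Q j ζ‖ ^ 2 ≤ _
  rw [hsplit]
  gcongr
  refine norm_sub_le_of_le ?_ le_rfl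
  rw [norm_mul, mul_comm]
  gcongr
  exact hB j ζ (norm_coe_le_one ζ)

theorem norm_integralCLM_mul_sq_le_of_forall_mem_adjoin
    (h : ∀ φ ∈ StarAlgebra.adjoin ℂ (range (coord (n := n))),
      ‖integralCLM σ (φ * g)‖ ^ 2 ≤ M * ∫ ζ, ‖φ ζ‖ ^ 2 ∂μ) (φ : C(K n, ℂ)) :
    ‖integralCLM σ (φ * g)‖ ^ 2 ≤ M * ∫ ζ, ‖φ ζ‖ ^ 2 ∂μ := by
  have hsq (φ : C(K n, ℂ)) : ∫ ζ, ‖φ ζ‖ ^ 2 ∂μ = (integralCLM μ (φ * star φ)).re := by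
    rw [integralCLM_mul_star_self, ofReal_re]
  have hφ : φ ∈ closure (StarAlgebra.adjoin ℂ (range (coord (n := n))) : Set C(K n, ℂ)) := by
    rw [← StarSubalgebra.topologicalClosure_coe, topologicalClosure_adjoin_coord]
    trivial
  simp only [hsq] at h ⊢
  exact closure_minimal (t := {φ | ‖integralCLM σ (φ * g)‖ ^ 2 ≤
    M * (integralCLM μ (φ * star φ)).re}) h (isClosed_le (by fun_prop) (by fun_prop)) hφ

theorem exists_norm_integralCLM_sq_le_of_isUnit (hg : IsUnit g) (hM : 0 ≤ M)
    (h : ∀ φ, ‖integralCLM σ (φ * g)‖ ^ 2 ≤ M * ∫ ζ, ‖φ ζ‖ ^ 2 ∂μ) :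
    ∃ C, 0 ≤ C ∧ ∀ φ, ‖integralCLM σ φ‖ ^ 2 ≤ C * ∫ ζ, ‖φ ζ‖ ^ 2 ∂μ := by
  obtain ⟨u, rfl⟩ := hg
  let v : C(K n, ℂ) := ↑u⁻¹
  refine ⟨M * ‖v‖ ^ 2, by positivity, fun φ ↦ ?_⟩
  calc ‖integralCLM σ φ‖ ^ 2 = ‖integralCLM σ (φ * v * u)‖ ^ 2 := by
        rw [Units.inv_mul_cancel_right]
    _ ≤ M * ∫ ζ, ‖(φ * v) ζ‖ ^ 2 ∂μ := h _
    _ ≤ M * ∫ ζ, ‖v‖ ^ 2 * ‖φ ζ‖ ^ 2 ∂μ := by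
        refine mul_le_mul_of_nonneg_left (integral_mono
          (integrable_of_compactSpace μ (by fun_prop))
          (integrable_of_compactSpace μ (by fun_prop)) fun ζ ↦ ?_) hM
        dsimp only
        rw [ContinuousMap.mul_apply, norm_mul, mul_pow, mul_comm]
        gcongr
        exact v.norm_coe_le_norm ζ
    _ = M * ‖v‖ ^ 2 * ∫ ζ, ‖φ ζ‖ ^ 2 ∂μ := by rw [integral_const_mul, mul_assoc]

variable {Λ : Measure (K n)} [IsProbabilityMeasure Λ] {I b : E n → ℂ} {α : ℂ}

theorem IsClarkMeasure.exists_norm_integralCLM_sq_le (hσ : IsClarkMeasure I α σ)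
    (hμ : IsClarkMeasure b α μ) (hΛ : IsSphereMeasure Λ) (hI : IsInner Λ I) {w : E n}
    (hw : w ∈ ball 0 1)
    (h : MemRKHSBall n (fun z w ↦ (1 - b z * conj (b w)) * (1 - inner ℂ w z)⁻¹ ^ n) fun z ↦
      (α - b z) / (α - I z) * ((1 - I z * conj (I w)) * (1 - inner ℂ w z)⁻¹ ^ n)) :
    ∃ C, 0 ≤ C ∧ ∀ φ : C(K n, ℂ), ‖integralCLM σ φ‖ ^ 2 ≤ C * ∫ ζ, ‖φ ζ‖ ^ 2 ∂μ := by
  obtain ⟨M, hM, hM_le⟩ := hσ.exists_norm_integralCLM_mul_cauchyKernel_sq_le hμ hΛ.pos hw h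
  obtain ⟨p, hp, hp_lim⟩ := hσ.exists_isBoundedNull_polyFun hΛ hI
  obtain ⟨B, hB⟩ := hp.exists_norm_le
  have hunit : IsUnit (cauchyKernel w) := (isUnit_one_sub_pairing hw).ringInverse.pow n
  exact exists_norm_integralCLM_sq_le_of_isUnit hunit (mul_nonneg hM (sq_nonneg B)) <|
    norm_integralCLM_mul_sq_le_of_forall_mem_adjoin fun φ hφ ↦
      norm_integralCLM_mul_sq_le_of_isTight hσ.ae_norm_eq_one hμ.ae_norm_eq_one hM hM_le hp hB
        hp_lim (isTight_of_mem_adjoin hφ)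

end Extension

section Restriction

theorem integral_subtype_comap_of_ae_mem {X F : Type*} [MeasurableSpace X] [NormedAddCommGroup F]
    [NormedSpace ℝ F] {ρ : Measure X} {s : Set X} (hs : MeasurableSet s) (hρ : ∀ᵐ x ∂ρ, x ∈ s)
    (f : X → F) : ∫ x : s, f x ∂(ρ.comap Subtype.val) = ∫ x, f x ∂ρ := by
  rw [integral_subtype_comap hs, Measure.restrict_eq_self_of_ae_mem hρ]

theorem ae_subtype_comap {X : Type*} [MeasurableSpace X] {ρ : Measure X} {s : Set X}
    (hs : MeasurableSet s) {P : X → Prop} (h : ∀ᵐ x ∂ρ, P x) :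
    ∀ᵐ x : s ∂(ρ.comap Subtype.val), P x :=
  (ae_restrict_iff_subtype hs).mp (ae_restrict_of_ae h)

variable {n : ℕ} [MeasurableSpace (E n)] {ρ : Measure (E n)}

/-- A measure on `ℂⁿ` as a measure on the closed unit ball. -/
noncomputable abbrev toBall (ρ : Measure (E n)) : Measure (K n) := ρ.comap Subtype.val

variable [BorelSpace (E n)]

theorem integral_toBall (hρ : ρ (sphere 0 1)ᶜ = 0) {F : Type*} [NormedAddCommGroup F]
    [NormedSpace ℝ F] (f : E n → F) : ∫ ζ : K n, f ζ ∂(toBall ρ) = ∫ ζ, f ζ ∂ρ :=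
  integral_subtype_comap_of_ae_mem measurableSet_closedBall
    (mem_of_superset (mem_ae_iff.mpr hρ) sphere_subset_closedBall) f

theorem ae_toBall_norm_eq_one (hρ : ρ (sphere 0 1)ᶜ = 0) :
    ∀ᵐ ζ : K n ∂(toBall ρ), ‖(ζ : E n)‖ = 1 :=
  (ae_subtype_comap measurableSet_closedBall (mem_ae_iff.mpr hρ)).mono fun _ ↦
    mem_sphere_zero_iff_norm.mp

theorem isProbabilityMeasure_toBall (hρ : ρ (sphere 0 1)ᶜ = 0) [IsProbabilityMeasure ρ] :
    IsProbabilityMeasure (toBall ρ) :=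
  (MeasurableEmbedding.subtype_coe measurableSet_closedBall).isProbabilityMeasure_comap <| by
    rw [Subtype.range_coe]
    exact mem_of_superset (mem_ae_iff.mpr hρ) sphere_subset_closedBall

theorem isSphereMeasure_toBall (hρ : ρ (sphere 0 1)ᶜ = 0)
    (hinv : ∀ U : E n ≃ₗᵢ[ℂ] E n, ρ.map U = ρ) : IsSphereMeasure (toBall ρ) where
  ae_norm_eq_one := ae_toBall_norm_eq_one hρ
  integral_comp_unitary U f := by
    rw [integral_toBall hρ, integral_toBall hρ fun ζ ↦ f (U ζ)]
    conv_rhs => rw [← hinv U]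
    exact (U.toHomeomorph.measurableEmbedding.integral_map f).symm

theorem isClarkMeasure_toBall (hρ : ρ (sphere 0 1)ᶜ = 0) {b : E n → ℂ} {α : ℂ} (hα : ‖α‖ = 1)
    (hb : DifferentiableOn ℂ b (ball 0 1)) (hmaps : ∀ z ∈ ball 0 1, b z ∈ ball 0 1)
    (h : ∀ z ∈ ball 0 1, ∫ ζ, (1 - ‖z‖ ^ 2) ^ n / ‖1 - ∑ i, z i * conj (ζ i)‖ ^ (2 * n) ∂ρ =
      (1 - ‖b z‖ ^ 2) / ‖α - b z‖ ^ 2) : IsClarkMeasure b α (toBall ρ) where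
  norm_eq_one := hα
  differentiableOn := hb
  mapsTo := hmaps
  ae_norm_eq_one := ae_toBall_norm_eq_one hρ
  integral_poissonKernel z hz := by
    rw [integral_toBall hρ, ← h z hz]
    simp only [poissonKernel, inner_eq_sum_mul_conj]

theorem isInner_toBall {b bStar : E n → ℂ} (h : ∀ᵐ ζ ∂ρ,
    Tendsto (fun r : ℝ ↦ b (r • ζ)) (𝓝[<] 1) (𝓝 (bStar ζ)) ∧ ‖bStar ζ‖ = 1) :
    IsInner (toBall ρ) b := by
  have hcoe : Tendsto ((↑) : unitInterval → ℝ) (𝓝[<] 1) (𝓝[<] 1) :=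
    tendsto_nhdsWithin_iff.mpr ⟨(continuous_subtype_val.tendsto 1).mono_left nhdsWithin_le_nhds,
      eventually_mem_nhdsWithin.mono fun _ ht ↦ ht⟩
  filter_upwards [ae_subtype_comap measurableSet_closedBall h] with ζ ⟨hζ, hnorm⟩
  exact hnorm ▸ (hζ.comp hcoe).norm

theorem integral_sq_le_of_integralCLM_toBall {σ μ : Measure (E n)} [IsFiniteMeasure σ]
    [IsFiniteMeasure μ] (hσ : σ (sphere 0 1)ᶜ = 0) (hμ : μ (sphere 0 1)ᶜ = 0) {C : ℝ}
    (h : ∀ φ : C(K n, ℂ), ‖integralCLM (toBall σ) φ‖ ^ 2 ≤ C * ∫ ζ, ‖φ ζ‖ ^ 2 ∂(toBall μ))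
    (g : E n →ᵇ ℝ) : (∫ ζ, g ζ ∂σ) ^ 2 ≤ C * ∫ ζ, g ζ ^ 2 ∂μ := by
  have hg := h ⟨fun ζ ↦ (g ζ : ℂ), by fun_prop⟩
  simpa [integral_complex_ofReal, integral_toBall hσ fun ζ ↦ g ζ,
    integral_toBall hμ fun ζ ↦ g ζ ^ 2] using hg

end Restriction

end Clark

open Clark in
theorem stmt10_general (n : ℕ) [MeasurableSpace (EuclideanSpace ℂ (Fin n))]
    [BorelSpace (EuclideanSpace ℂ (Fin n))]
    (Λ : Measure (EuclideanSpace ℂ (Fin n))) (hΛprob : IsProbabilityMeasure Λ)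
    (hΛsupp : Λ (sphere (0 : EuclideanSpace ℂ (Fin n)) 1)ᶜ = 0)
    (hΛinv : ∀ U : EuclideanSpace ℂ (Fin n) ≃ₗᵢ[ℂ] EuclideanSpace ℂ (Fin n),
      Measure.map (⇑U) Λ = Λ)
    (I : EuclideanSpace ℂ (Fin n) → ℂ)
    (hI : DifferentiableOn ℂ I (ball (0 : EuclideanSpace ℂ (Fin n)) 1))
    (hImap : ∀ z ∈ ball (0 : EuclideanSpace ℂ (Fin n)) 1, I z ∈ ball (0 : ℂ) 1)
    (Ib : EuclideanSpace ℂ (Fin n) → ℂ)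
    (hIinner : ∀ᵐ ζ ∂Λ,
      Tendsto (fun r : ℝ => I (r • ζ)) (nhdsWithin 1 (Iio 1)) (nhds (Ib ζ)) ∧ ‖Ib ζ‖ = 1)
    (b : EuclideanSpace ℂ (Fin n) → ℂ)
    (hb : DifferentiableOn ℂ b (ball (0 : EuclideanSpace ℂ (Fin n)) 1))
    (hbmap : ∀ z ∈ ball (0 : EuclideanSpace ℂ (Fin n)) 1, b z ∈ ball (0 : ℂ) 1)
    (α : ℂ) (hα : ‖α‖ = 1)
    (σ μ : Measure (EuclideanSpace ℂ (Fin n)))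
    (hσfin : IsFiniteMeasure σ) (hμfin : IsFiniteMeasure μ)
    (hσsupp : σ (sphere (0 : EuclideanSpace ℂ (Fin n)) 1)ᶜ = 0)
    (hμsupp : μ (sphere (0 : EuclideanSpace ℂ (Fin n)) 1)ᶜ = 0)
    (hσ : ∀ z ∈ ball (0 : EuclideanSpace ℂ (Fin n)) 1,
      ∫ ζ, (1 - ‖z‖ ^ 2) ^ n /
          ‖1 - ∑ i, z i * (starRingEnd ℂ) (ζ i)‖ ^ (2 * n) ∂σ =
        (1 - ‖I z‖ ^ 2) / ‖α - I z‖ ^ 2)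
    (hμ : ∀ z ∈ ball (0 : EuclideanSpace ℂ (Fin n)) 1,
      ∫ ζ, (1 - ‖z‖ ^ 2) ^ n /
          ‖1 - ∑ i, z i * (starRingEnd ℂ) (ζ i)‖ ^ (2 * n) ∂μ =
        (1 - ‖b z‖ ^ 2) / ‖α - b z‖ ^ 2)
    (hmem : ∃ w ∈ ball (0 : EuclideanSpace ℂ (Fin n)) 1,
      MemRKHSBall n
        (fun z w' => (1 - b z * (starRingEnd ℂ) (b w')) *
          ((1 - ∑ i, z i * (starRingEnd ℂ) (w' i))⁻¹) ^ n)
        (fun z => (α - b z) / (α - I z) *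
          ((1 - I z * (starRingEnd ℂ) (I w)) *
            ((1 - ∑ i, z i * (starRingEnd ℂ) (w i))⁻¹) ^ n))) :
    σ ≪ μ ∧ ∫⁻ ζ, (σ.rnDeriv μ ζ) ^ 2 ∂μ < ⊤ := by
  have := isProbabilityMeasure_toBall hΛsupp
  obtain ⟨w, hw, hmem⟩ := hmem
  simp only [← inner_eq_sum_mul_conj] at hmem
  obtain ⟨C, hC, hle⟩ := (isClarkMeasure_toBall hσsupp hα hI hImap hσ).exists_norm_integralCLM_sq_le
    (isClarkMeasure_toBall hμsupp hα hb hbmap hμ) (isSphereMeasure_toBall hΛsupp hΛinv)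
    (isInner_toBall hIinner) hw hmem
  exact absolutelyContinuous_and_lintegral_rnDeriv_sq_lt_top (C := ⟨C, hC⟩)
    (integral_sq_le_of_integralCLM_toBall hσsupp hμsupp hle)

/-- (iii) ⇒ (i) of the main theorem: in the same setting, if for some `w ∈ B_n` the function
`z ↦ ((α - b z)/(α - I z))·K(z,w)` lies in the de Branges–Rovnyak space `H(b)`, then
`σ ≪ μ` and `dσ/dμ ∈ L²(μ)`. -/
theorem stmt10 (n : ℕ) (hn : 2 ≤ n)
    [MeasurableSpace (EuclideanSpace ℂ (Fin n))]
    [BorelSpace (EuclideanSpace ℂ (Fin n))]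
    (Λ : Measure (EuclideanSpace ℂ (Fin n))) (hΛprob : IsProbabilityMeasure Λ)
    (hΛsupp : Λ (sphere (0 : EuclideanSpace ℂ (Fin n)) 1)ᶜ = 0)
    (hΛinv : ∀ U : EuclideanSpace ℂ (Fin n) ≃ₗᵢ[ℂ] EuclideanSpace ℂ (Fin n),
      Measure.map (⇑U) Λ = Λ)
    (I : EuclideanSpace ℂ (Fin n) → ℂ)
    (hI : DifferentiableOn ℂ I (ball (0 : EuclideanSpace ℂ (Fin n)) 1))
    (hImap : ∀ z ∈ ball (0 : EuclideanSpace ℂ (Fin n)) 1, I z ∈ ball (0 : ℂ) 1)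
    (Ib : EuclideanSpace ℂ (Fin n) → ℂ)
    (hIinner : ∀ᵐ ζ ∂Λ,
      Tendsto (fun r : ℝ => I (r • ζ)) (nhdsWithin 1 (Iio 1)) (nhds (Ib ζ)) ∧ ‖Ib ζ‖ = 1)
    (b : EuclideanSpace ℂ (Fin n) → ℂ)
    (hb : DifferentiableOn ℂ b (ball (0 : EuclideanSpace ℂ (Fin n)) 1))
    (hbmap : ∀ z ∈ ball (0 : EuclideanSpace ℂ (Fin n)) 1, b z ∈ ball (0 : ℂ) 1)
    (hbnc : ∃ z₁ ∈ ball (0 : EuclideanSpace ℂ (Fin n)) 1,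
      ∃ z₂ ∈ ball (0 : EuclideanSpace ℂ (Fin n)) 1, b z₁ ≠ b z₂)
    (α : ℂ) (hα : ‖α‖ = 1)
    (σ μ : Measure (EuclideanSpace ℂ (Fin n)))
    (hσfin : IsFiniteMeasure σ) (hμfin : IsFiniteMeasure μ)
    (hσsupp : σ (sphere (0 : EuclideanSpace ℂ (Fin n)) 1)ᶜ = 0)
    (hμsupp : μ (sphere (0 : EuclideanSpace ℂ (Fin n)) 1)ᶜ = 0)
    (hσ : ∀ z ∈ ball (0 : EuclideanSpace ℂ (Fin n)) 1,
      ∫ ζ, (1 - ‖z‖ ^ 2) ^ n /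
          ‖1 - ∑ i, z i * (starRingEnd ℂ) (ζ i)‖ ^ (2 * n) ∂σ =
        (1 - ‖I z‖ ^ 2) / ‖α - I z‖ ^ 2)
    (hμ : ∀ z ∈ ball (0 : EuclideanSpace ℂ (Fin n)) 1,
      ∫ ζ, (1 - ‖z‖ ^ 2) ^ n /
          ‖1 - ∑ i, z i * (starRingEnd ℂ) (ζ i)‖ ^ (2 * n) ∂μ =
        (1 - ‖b z‖ ^ 2) / ‖α - b z‖ ^ 2)
    (hmem : ∃ w ∈ ball (0 : EuclideanSpace ℂ (Fin n)) 1,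
      MemRKHSBall n
        (fun z w' => (1 - b z * (starRingEnd ℂ) (b w')) *
          ((1 - ∑ i, z i * (starRingEnd ℂ) (w' i))⁻¹) ^ n)
        (fun z => (α - b z) / (α - I z) *
          ((1 - I z * (starRingEnd ℂ) (I w)) *
            ((1 - ∑ i, z i * (starRingEnd ℂ) (w i))⁻¹) ^ n))) :
    σ ≪ μ ∧ ∫⁻ ζ, (σ.rnDeriv μ ζ) ^ 2 ∂μ < ⊤ :=
  stmt10_general n Λ hΛprob hΛsupp hΛinv I hI hImap Ib hIinner b hb hbmap α hα σ μ hσfin hμfin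
    hσsupp hμsupp hσ hμ hmem
end
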